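/- arXiv:2503.13201 — 2 statements merged into one kernel-verified Lean document; each statement's English description precedes it below -/
import Mathlib

section
/- Let p ≥ 1 be an integer, c > 0 and λ > 0. Then there exists a smooth, doubly 2π-periodic, symmetric function Ψ : ℝ² → ℂ with ∫|Ψ|^{p+2} dxdy = λ such that B_c(Ψ) ≤ B_c(u) for every smooth, doubly 2π-periodic, symmetric function u : ℝ² → ℂ with ∫|u|^{p+2} dxdy = λ; that is, the constrained minimization problem inf{B_c(u) : ∫|u|^{p+2} = λ} admits a ground state. -/
/-!
Write `q = p + 2`. After rescaling, minimising `B_c` at fixed `∫ |u|^q` amounts to maximising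
`F(φ) = ∫ |φ|^q` over the unit ball of the energy norm `Σ (c + |k|²) |φ̂(k)|²`, which is
`2 B_c / (2π)²` by Parseval (`bridge`). The maximisation is carried out among continuous functions on
the torus `(ℝ/ℤ)²` that are even in each variable and have absolutely convergent Fourier series; no
Sobolev space is needed.

* `F` and the other moments are bounded on this class by the two-dimensional Sobolev inequality
  `H¹ ⊂ L^{2m}` (`sobolev`), proved for trigonometric polynomials from `W^{1,1} ⊂ L²`.
* The improvement map `imp` sends `φ` to the multiple of `(c - Δ)⁻¹ |φ|^{p+1}` of energy one. With
  `D = ⟨|φ|^{p+1}, (c - Δ)⁻¹ |φ|^{p+1}⟩`, duality and the positivity of the resolvent (`res_re_nonneg`,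
  from the maximum principle) give `F(φ)² ≤ D` (`F_sq_le`), and the convexity of `x ↦ x^q` gives
  `F(imp φ) ≥ F(φ) + q (√D - F(φ)) ≥ F(φ)` (`F_imp`).
* Hence the improvements of a maximising sequence are again maximising. They are resolvents of
  functions bounded in `L²`, so a subsequence converges in the Wiener algebra (`tendsto_div_om`); the
  limit is a nonnegative maximiser `v` (`exists_max`).
* Maximality forces equality above, hence `imp v = v` (`fixed_point`), i.e. `(c - Δ) v = s v^{p+1}` for
  a constant `s`. Each use of this equation gains two powers of decay of the Fourier coefficients
  (`bootstrap`), so `v` is smooth (`smooth_lift`).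

The ground state is the multiple `τ v` with `∫ |τ v|^q = λ`.
-/

noncomputable section
open Real MeasureTheory Filter

/-- doubly 2π-periodic (complex-valued) -/
def DblPeriodicC (u : ℝ → ℝ → ℂ) : Prop :=
  ∀ x y : ℝ, u (x + 2*π) y = u x y ∧ u x (y + 2*π) = u x y

/-- symmetric: even in each variable separately (complex-valued) -/
def SymFunC (u : ℝ → ℝ → ℂ) : Prop :=
  ∀ x y : ℝ, u (-x) y = u x y ∧ u x (-y) = u x y

/-- smooth as a function on ℝ² (complex-valued) -/
def Smooth2C (u : ℝ → ℝ → ℂ) : Prop :=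
  ContDiff ℝ (⊤ : ℕ∞) fun p : ℝ × ℝ => u p.1 p.2

/-- integral over the fundamental square [0,2π] × [0,2π] -/
def integ2 (f : ℝ → ℝ → ℝ) : ℝ :=
  ∫ x in (0:ℝ)..(2*π), ∫ y in (0:ℝ)..(2*π), f x y

/-- the functional B_c(u) = (1/2)∫(|∇u|² + c|u|²) dxdy -/
def BcC (c : ℝ) (u : ℝ → ℝ → ℂ) : ℝ :=
  (1/2) * integ2 (fun x y =>
    ‖deriv (fun s => u s y) x‖^2 + ‖deriv (fun s => u x s) y‖^2 + c * ‖u x y‖^2)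

/-! ### Fourier series on the torus and the resolvent -/

namespace GroundState

open UnitAddTorus ComplexConjugate Topology

attribute [local instance] instMeasureSpaceUnitAddCircle

/-- The measure on the circle is normalised to total mass one throughout. -/
instance probUnit : IsProbabilityMeasure (volume : Measure UnitAddCircle) :=
  inferInstanceAs (IsProbabilityMeasure AddCircle.haarAddCircle)

/-- The two-dimensional torus `(ℝ/ℤ)²`. -/
abbrev T2 := UnitAddTorus (Fin 2)

/-- The lattice of frequencies. -/
abbrev Z2 := Fin 2 → ℤ

/-- The Fourier coefficients of a continuous function on the torus. -/
def cf (f : C(T2, ℂ)) (k : Z2) : ℂ := mFourierCoeff f k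

lemma cont_integrable {E : Type*} [NormedAddCommGroup E] {g : T2 → E}
    (hg : Continuous g) : Integrable g :=
  hg.integrable_of_hasCompactSupport (HasCompactSupport.of_compactSpace g)

lemma cf_def (f : C(T2, ℂ)) (k : Z2) : cf f k = ∫ t, mFourier (-k) t * f t := rfl

lemma cf_add (f g : C(T2, ℂ)) (k : Z2) : cf (f + g) k = cf f k + cf g k := by
  simp only [cf_def, ContinuousMap.add_apply, mul_add]
  exact integral_add (cont_integrable (by fun_prop)) (cont_integrable (by fun_prop))

lemma cf_smul (c : ℂ) (f : C(T2, ℂ)) (k : Z2) : cf (c • f) k = c * cf f k := by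
  simp only [cf_def, ContinuousMap.smul_apply, smul_eq_mul, ← integral_const_mul]
  congr 1; ext t; ring

lemma norm_mFourier_apply (k : Z2) (t : T2) : ‖mFourier k t‖ = 1 := by
  simp [mFourier, fourier_apply, Circle.norm_coe]

lemma norm_cf_le (f : C(T2, ℂ)) (k : Z2) : ‖cf f k‖ ≤ ‖f‖ := by
  rw [cf_def]
  refine (norm_integral_le_of_norm_le_const (C := ‖f‖) (ae_of_all _ fun t => ?_)).trans (by simp)
  rw [norm_mul, norm_mFourier_apply, one_mul]
  exact f.norm_coe_le_norm t

/-- The `k`-th Fourier coefficient as a continuous linear functional. -/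
def cfL (k : Z2) : C(T2, ℂ) →L[ℂ] ℂ :=
  LinearMap.mkContinuous
    { toFun := fun f => cf f k
      map_add' := fun f g => cf_add f g k
      map_smul' := fun c f => cf_smul c f k } 1
    (fun f => by simpa using norm_cf_le f k)

@[simp] lemma cfL_apply (k : Z2) (f : C(T2, ℂ)) : cfL k f = cf f k := rfl

lemma parseval (f g : C(T2, ℂ)) :
    HasSum (fun k => conj (cf f k) * cf g k) (∫ t, conj (f t) * g t) := by
  have h := hasSum_prod_mFourierCoeff (f.toLp 2 volume ℂ) (g.toLp 2 volume ℂ)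
  simp only [mFourierCoeff_toLp] at h
  convert h using 1
  · rfl
  apply integral_congr_ae
  filter_upwards [ContinuousMap.coeFn_toLp (p := 2) (𝕜 := ℂ) volume f,
    ContinuousMap.coeFn_toLp (p := 2) (𝕜 := ℂ) volume g] with t h1 h2
  rw [h1, h2]

lemma parseval_sq (f : C(T2, ℂ)) : HasSum (fun k => ‖cf f k‖ ^ 2) (∫ t, ‖f t‖ ^ 2) := by
  have h := hasSum_sq_mFourierCoeff (f.toLp 2 volume ℂ)
  simp only [mFourierCoeff_toLp] at h
  convert h using 1
  · rfl
  apply integral_congr_ae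
  filter_upwards [ContinuousMap.coeFn_toLp (p := 2) (𝕜 := ℂ) volume f] with t h1
  rw [h1]

lemma cf_mFourier (j k : Z2) : cf (mFourier j) k = if j = k then 1 else 0 := by
  have h := orthonormal_iff_ite.mp (orthonormal_mFourier (d := Fin 2)) k j
  rw [ContinuousMap.inner_toLp] at h
  rw [cf_def]
  simp only [mFourier_neg]
  simp only [mul_comm (conj _)]
  rw [h]
  simp [eq_comm]

/-- The sum of a trigonometric series with absolutely summable coefficients. -/
def ser (a : Z2 → ℂ) : C(T2, ℂ) := ∑' k, a k • mFourier k

lemma hasSum_ser {a : Z2 → ℂ} (ha : Summable fun k => ‖a k‖) :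
    HasSum (fun k => a k • (mFourier k : C(T2, ℂ))) (ser a) := by
  refine Summable.hasSum (Summable.of_norm ?_)
  simpa only [norm_smul, mFourier_norm, mul_one] using ha

lemma hasSum_ser_apply {a : Z2 → ℂ} (ha : Summable fun k => ‖a k‖) (t : T2) :
    HasSum (fun k => a k * mFourier k t) (ser a t) := by
  simpa using! (ContinuousMap.evalCLM ℂ t).hasSum (hasSum_ser ha)

lemma cf_ser {a : Z2 → ℂ} (ha : Summable fun k => ‖a k‖) (k : Z2) : cf (ser a) k = a k := by
  have h := (cfL k).hasSum (hasSum_ser ha)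
  simp only [map_smul, cfL_apply, cf_mFourier] at h
  refine h.unique ?_
  convert hasSum_ite_eq k (a k) using 2 with j
  by_cases hj : j = k <;> simp [hj]

lemma ser_cf {f : C(T2, ℂ)} (hf : Summable fun k => ‖cf f k‖) : ser (cf f) = f :=
  (hasSum_ser hf).unique (hasSum_mFourier_series_of_summable hf.of_norm)

lemma norm_ser_le {a : Z2 → ℂ} (ha : Summable fun k => ‖a k‖) : ‖ser a‖ ≤ ∑' k, ‖a k‖ := by
  have := norm_tsum_le_tsum_norm (f := fun k => a k • (mFourier k : C(T2, ℂ)))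
    (by simpa only [norm_smul, mFourier_norm, mul_one] using ha)
  simp only [norm_smul, mFourier_norm, mul_one] at this
  exact this

lemma ser_sub {a b : Z2 → ℂ} (ha : Summable fun k => ‖a k‖) (hb : Summable fun k => ‖b k‖) :
    ser (fun k => a k - b k) = ser a - ser b := by
  have h := (hasSum_ser ha).sub (hasSum_ser hb)
  refine Eq.trans (tsum_congr fun k => ?_) h.tsum_eq
  exact sub_smul (a k) (b k) (mFourier k : C(T2, ℂ))

lemma ser_smul (c : ℂ) {a : Z2 → ℂ} (ha : Summable fun k => ‖a k‖) :
    ser (fun k => c * a k) = c • ser a := by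
  have h := (hasSum_ser ha).const_smul c
  simp only [smul_smul] at h
  exact h.tsum_eq

/-- A continuous function with absolutely summable Fourier coefficients is determined by them. -/
lemma cf_injective {f g : C(T2, ℂ)} (hf : Summable fun k => ‖cf f k‖) (h : cf f = cf g) :
    f = g := by
  rw [← ser_cf hf, h, ser_cf (h ▸ hf)]

/-- The symbol `c + |k|²` of `c - Δ`. -/
def om (c : ℝ) (k : Z2) : ℝ := c + (k 0 : ℝ) ^ 2 + (k 1 : ℝ) ^ 2

lemma om_ge (c : ℝ) (k : Z2) : c ≤ om c k := by unfold om; nlinarith [sq_nonneg (k 0 : ℝ), sq_nonneg (k 1 : ℝ)]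

lemma om_pos {c : ℝ} (hc : 0 < c) (k : Z2) : 0 < om c k := hc.trans_le (om_ge c k)

lemma summable_int_inv : Summable fun n : ℤ => (1 + (n : ℝ) ^ 2)⁻¹ := by
  have h : Summable fun n : ℤ => (1 / (n : ℝ) ^ 2) := by
    simpa using (Real.summable_one_div_int_pow (p := 2)).mpr (by norm_num)
  refine Summable.of_norm_bounded_eventually h ?_
  have : ({0}ᶜ : Set ℤ) ∈ cofinite := (Set.finite_singleton 0).compl_mem_cofinite
  filter_upwards [this] with n hn
  have hn' : (0 : ℝ) < (n : ℝ) ^ 2 := by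
    have : (n : ℝ) ≠ 0 := by exact_mod_cast hn
    positivity
  rw [Real.norm_of_nonneg (by positivity), one_div]
  exact inv_anti₀ hn' (by linarith)

lemma summable_om {c : ℝ} (hc : 0 < c) : Summable fun k : Z2 => (om c k ^ 2)⁻¹ := by
  have h : Summable fun x : ℤ × ℤ => (1 + (x.1 : ℝ) ^ 2)⁻¹ * (1 + (x.2 : ℝ) ^ 2)⁻¹ :=
    summable_int_inv.mul_of_nonneg summable_int_inv (fun _ => by positivity)
      (fun _ => by positivity)
  have h2 := (finTwoArrowEquiv ℤ).summable_iff.mpr h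
  set m := min 1 c with hm
  have hm0 : 0 < m := lt_min one_pos hc
  refine Summable.of_nonneg_of_le (fun k => by positivity) (fun k => ?_) (h2.mul_left ((m ^ 2)⁻¹))
  simp only [Function.comp, finTwoArrowEquiv_apply]
  rw [← mul_inv, ← mul_inv]
  refine inv_anti₀ (by positivity) ?_
  have h1 : m * (1 + (k 0 : ℝ) ^ 2 + (k 1 : ℝ) ^ 2) ≤ om c k := by
    have := min_le_left 1 c
    have := min_le_right 1 c
    unfold om
    nlinarith [sq_nonneg (k 0 : ℝ), sq_nonneg (k 1 : ℝ)]
  calc m ^ 2 * ((1 + (k 0 : ℝ) ^ 2) * (1 + (k 1 : ℝ) ^ 2))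
      ≤ (m * (1 + (k 0 : ℝ) ^ 2 + (k 1 : ℝ) ^ 2)) ^ 2 := by
        rw [mul_pow]
        gcongr
        nlinarith [sq_nonneg (k 0 : ℝ), sq_nonneg (k 1 : ℝ), mul_nonneg (sq_nonneg (k 0 : ℝ)) (sq_nonneg (k 1 : ℝ)), sq_nonneg ((k 0 : ℝ)^2), sq_nonneg ((k 1 : ℝ)^2)]
    _ ≤ _ := by gcongr

/-- Division by `c + |k|²` sends `ℓ²` to `ℓ¹` (Cauchy–Schwarz in the form of Young's inequality). -/
lemma summable_div_om {c : ℝ} (hc : 0 < c) {g : Z2 → ℂ} (hg : Summable fun k => ‖g k‖ ^ 2) :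
    Summable fun k => ‖g k / om c k‖ := by
  refine Summable.of_nonneg_of_le (fun k => norm_nonneg _) (fun k => ?_) (hg.add (summable_om hc))
  have := om_pos hc k
  rw [norm_div, Complex.norm_real, Real.norm_of_nonneg this.le, div_eq_mul_inv]
  have h1 : 0 < (om c k)⁻¹ := by positivity
  rw [← inv_pow]
  nlinarith [sq_nonneg (‖g k‖ - (om c k)⁻¹), norm_nonneg (g k)]

/-- The resolvent `(c - Δ)⁻¹` on continuous functions, as a Fourier multiplier. The Laplacian is the
one of the `2π`-periodic coordinates, hence the symbol `c + |k|²` without factors of `2π`. -/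
def res (c : ℝ) (f : C(T2, ℂ)) : C(T2, ℂ) := ser fun k => cf f k / om c k

lemma summable_res {c : ℝ} (hc : 0 < c) (f : C(T2, ℂ)) : Summable fun k => ‖cf f k / om c k‖ :=
  summable_div_om hc (parseval_sq f).summable

lemma cf_res {c : ℝ} (hc : 0 < c) (f : C(T2, ℂ)) (k : Z2) : cf (res c f) k = cf f k / om c k :=
  cf_ser (summable_res hc f) k

lemma res_smul {c : ℝ} (hc : 0 < c) (z : ℂ) (f : C(T2, ℂ)) : res c (z • f) = z • res c f := by
  rw [res, res, ← ser_smul z (summable_res hc f)]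
  congr 1; ext k; rw [cf_smul]; ring

lemma res_sub {c : ℝ} (hc : 0 < c) (f g : C(T2, ℂ)) : res c (f - g) = res c f - res c g := by
  rw [res, res, res, ← ser_sub (summable_res hc f) (summable_res hc g)]
  congr 1; ext k; rw [← cfL_apply, map_sub]; simp [sub_div]

/-- The resolvent is bounded for the sup norm. -/
lemma norm_res_le {c : ℝ} (hc : 0 < c) : ∃ C : ℝ, ∀ f : C(T2, ℂ), ‖res c f‖ ≤ C * ‖f‖ := by
  refine ⟨1 + ∑' k, (om c k ^ 2)⁻¹, fun f => ?_⟩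
  rcases eq_or_ne f 0 with rfl | hf
  · have : res c (0 : C(T2, ℂ)) = 0 := by
      have h := res_smul hc 0 (0 : C(T2, ℂ))
      have e : ∀ g : C(T2, ℂ), (0 : ℂ) • g = 0 := fun g => by ext t; simp
      rwa [e, e] at h
    simp [this]
  have key : ∀ f : C(T2, ℂ), ‖f‖ ≤ 1 → ‖res c f‖ ≤ 1 + ∑' k, (om c k ^ 2)⁻¹ := by
    intro f hf
    have h1 : ∑' k, ‖cf f k‖ ^ 2 ≤ 1 := by
      rw [(parseval_sq f).tsum_eq]
      calc ∫ t, ‖f t‖ ^ 2 ≤ ∫ t : T2, (1 : ℝ) := by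
            refine integral_mono (cont_integrable (by fun_prop)) (integrable_const _) fun t => ?_
            have := (f.norm_coe_le_norm t).trans hf
            exact pow_le_one₀ (norm_nonneg _) this
        _ = 1 := by simp
    refine (norm_ser_le (summable_res hc f)).trans ?_
    calc ∑' k, ‖cf f k / om c k‖ ≤ ∑' k, (‖cf f k‖ ^ 2 + (om c k ^ 2)⁻¹) := by
          refine Summable.tsum_le_tsum (fun k => ?_) (summable_res hc f)
            ((parseval_sq f).summable.add (summable_om hc))
          have := om_pos hc k
          rw [norm_div, Complex.norm_real, Real.norm_of_nonneg this.le, div_eq_mul_inv]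
          have h1 : 0 < (om c k)⁻¹ := by positivity
          rw [← inv_pow]
          nlinarith [sq_nonneg (‖cf f k‖ - (om c k)⁻¹), norm_nonneg (cf f k)]
      _ = ∑' k, ‖cf f k‖ ^ 2 + ∑' k, (om c k ^ 2)⁻¹ :=
          Summable.tsum_add (parseval_sq f).summable (summable_om hc)
      _ ≤ _ := by linarith
  have hn : 0 < ‖f‖ := norm_pos_iff.mpr hf
  have h := key (((‖f‖⁻¹ : ℝ) : ℂ) • f) (by rw [norm_smul]; simp [hn.ne'])
  rw [res_smul hc, norm_smul] at h
  simp only [Complex.norm_real, norm_inv, norm_norm] at h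
  rwa [inv_mul_le_iff₀ hn, mul_comm] at h

/-! ### Maximum principle and positivity of the resolvent -/

lemma second_deriv_nonneg {f f' : ℝ → ℝ} {l : ℝ} (h1 : ∀ x, HasDerivAt f (f' x) x)
    (h2 : HasDerivAt f' l 0) (hmin : IsLocalMin f 0) : 0 ≤ l := by
  by_contra hl
  push Not at hl
  have hd : deriv f = f' := funext fun x => (h1 x).deriv
  have hmax : IsLocalMax f 0 := by
    refine isLocalMax_of_deriv_deriv_neg ?_ hmin.deriv_eq_zero (h1 0).continuousAt
    rwa [hd, h2.deriv]
  -- a point that is both a local minimum and a local maximum: `f` is locally constant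
  have hc : f =ᶠ[𝓝 0] fun _ => f 0 := by
    filter_upwards [hmin, hmax] with x a b using le_antisymm b a
  have h3 : f' =ᶠ[𝓝 0] fun _ => 0 := by
    have := hc.deriv
    rw [hd] at this
    simpa using this
  have := h2.unique ((hasDerivAt_const (0 : ℝ) (0 : ℝ)).congr_of_eventuallyEq h3)
  linarith

/-- The second-derivative test at a minimum of the real part of an exponential sum. -/
lemma exp_sum_min (s : Finset Z2) (z : Z2 → ℂ) (α : Z2 → ℝ)
    (hmin : IsLocalMin (fun τ : ℝ => (∑ k ∈ s, z k * Complex.exp (α k * τ * Complex.I)).re) 0) :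
    (∑ k ∈ s, z k * (α k : ℂ) ^ 2).re ≤ 0 := by
  have hexp : ∀ (k : Z2) (x : ℝ), HasDerivAt (fun τ : ℝ => Complex.exp (α k * τ * Complex.I))
      (Complex.exp (α k * x * Complex.I) * (α k * Complex.I)) x := by
    intro k x
    refine HasDerivAt.comp_ofReal (e := fun τ : ℂ => Complex.exp (α k * τ * Complex.I)) ?_
    refine HasDerivAt.cexp ?_
    simpa using ((hasDerivAt_id (x : ℂ)).const_mul (α k : ℂ)).mul_const Complex.I
  have hsum : ∀ (w : Z2 → ℂ) (x : ℝ),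
      HasDerivAt (fun τ : ℝ => (∑ k ∈ s, w k * Complex.exp (α k * τ * Complex.I)).re)
      (∑ k ∈ s, (w k * (α k * Complex.I)) * Complex.exp (α k * x * Complex.I)).re x := by
    intro w x
    have h : HasDerivAt (fun τ : ℝ => ∑ k ∈ s, w k * Complex.exp (α k * τ * Complex.I))
      (∑ k ∈ s, (w k * (α k * Complex.I)) * Complex.exp (α k * x * Complex.I)) x := by
      refine HasDerivAt.fun_sum fun k _ => ?_
      have := (hexp k x).const_mul (w k)
      rwa [show w k * (Complex.exp (α k * x * Complex.I) * (α k * Complex.I)) =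
        w k * (α k * Complex.I) * Complex.exp (α k * x * Complex.I) by ring] at this
    exact Complex.reCLM.hasFDerivAt.comp_hasDerivAt x h
  have h := second_deriv_nonneg (hsum z) (hsum _ 0) hmin
  have e : (∑ k ∈ s, z k * (α k * Complex.I) * (α k * Complex.I) *
      Complex.exp (α k * (0 : ℝ) * Complex.I)) = -∑ k ∈ s, z k * (α k : ℂ) ^ 2 := by
    rw [← Finset.sum_neg_distrib]
    refine Finset.sum_congr rfl fun k _ => ?_
    simp only [Complex.ofReal_zero, mul_zero, zero_mul, Complex.exp_zero, mul_one]
    linear_combination (z k * (α k : ℂ) ^ 2) * Complex.I_sq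
  rw [e, Complex.neg_re] at h
  linarith

lemma mFourier_shift (k : Z2) (t : T2) (i : Fin 2) (τ : ℝ) :
    mFourier k (t + Pi.single i (τ : UnitAddCircle)) =
      mFourier k t * Complex.exp (((2 * π * k i : ℝ) : ℂ) * τ * Complex.I) := by
  have h : ∀ (n : ℤ) (x : ℝ), (fourier n (x : UnitAddCircle) : ℂ) =
      Complex.exp (((2 * π * n : ℝ) : ℂ) * x * Complex.I) := by
    intro n x
    rw [fourier_coe_apply]
    congr 1; push_cast; ring
  have h2 : ∀ (n : ℤ) (x y : UnitAddCircle), (fourier n (x + y) : ℂ) =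
      fourier n x * fourier n y := by
    intro n x y
    simp [fourier_apply, smul_add, AddCircle.toCircle_add]
  rw [← h]
  fin_cases i
  · simp only [mFourier, Fin.prod_univ_two, ContinuousMap.coe_mk, Pi.add_apply, h2]
    simp; ring
  · simp only [mFourier, Fin.prod_univ_two, ContinuousMap.coe_mk, Pi.add_apply, h2]
    simp; ring

/-- Maximum principle for `c - Δ` on trigonometric polynomials: at a minimum `t0` of `Re v` one has
`Δ Re v ≥ 0`, so `c Re v(t0) ≥ Re ((c - Δ) v)(t0) ≥ -δ`. -/
lemma max_principle {c : ℝ} (hc : 0 < c) (s : Finset Z2) (a : Z2 → ℂ) {δ : ℝ}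
    (h : ∀ t : T2, -δ ≤ (∑ k ∈ s, a k * mFourier k t).re) (t : T2) :
    -δ / c ≤ (∑ k ∈ s, a k / om c k * mFourier k t).re := by
  set v : T2 → ℝ := fun t => (∑ k ∈ s, a k / om c k * mFourier k t).re with hv
  have hvc : Continuous v := by fun_prop
  obtain ⟨t0, -, ht0⟩ := isCompact_univ.exists_isMinOn ⟨t, Set.mem_univ t⟩ hvc.continuousOn
  have hmin : ∀ t, v t0 ≤ v t := fun t => ht0 (Set.mem_univ t)
  have key : ∀ i : Fin 2, (∑ k ∈ s, a k / om c k * mFourier k t0 * ((k i : ℂ)) ^ 2).re ≤ 0 := by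
    intro i
    have h1 := exp_sum_min s (fun k => a k / om c k * mFourier k t0) (fun k => 2 * π * k i) ?_
    · have e : (∑ k ∈ s, a k / om c k * mFourier k t0 * ((2 * π * k i : ℝ) : ℂ) ^ 2) =
          (((2 * π) ^ 2 : ℝ) : ℂ) * ∑ k ∈ s, a k / om c k * mFourier k t0 * ((k i : ℂ)) ^ 2 := by
        rw [Finset.mul_sum]
        refine Finset.sum_congr rfl fun k _ => ?_
        push_cast; ring
      rw [e, Complex.re_ofReal_mul] at h1
      exact nonpos_of_mul_nonpos_right h1 (by positivity)
    · refine Eventually.of_forall fun τ => ?_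
      have h2 := hmin (t0 + Pi.single i (τ : UnitAddCircle))
      simp only [hv, mFourier_shift] at h2
      simpa [mul_assoc] using h2
  have e : ∑ k ∈ s, a k * mFourier k t0 = (c : ℂ) * ∑ k ∈ s, a k / om c k * mFourier k t0 +
      ((∑ k ∈ s, a k / om c k * mFourier k t0 * ((k 0 : ℂ)) ^ 2) +
      ∑ k ∈ s, a k / om c k * mFourier k t0 * ((k 1 : ℂ)) ^ 2) := by
    rw [Finset.mul_sum, ← Finset.sum_add_distrib, ← Finset.sum_add_distrib]
    refine Finset.sum_congr rfl fun k _ => ?_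
    have h0 : (om c k : ℂ) ≠ 0 := by exact_mod_cast (om_pos hc k).ne'
    have h1 : (om c k : ℂ) = c + (k 0 : ℂ) ^ 2 + (k 1 : ℂ) ^ 2 := by simp [om]
    calc a k * mFourier k t0 = (a k / om c k * mFourier k t0) * om c k := by field_simp
      _ = _ := by rw [h1]; ring
  have h3 := h t0
  rw [e, Complex.add_re, Complex.add_re, Complex.re_ofReal_mul] at h3
  have h4 := key 0
  have h5 := key 1
  refine le_trans ?_ (hmin t)
  rw [div_le_iff₀ hc]
  simp only [hv]
  linarith

lemma exists_trig_approx (f : C(T2, ℂ)) {ε : ℝ} (hε : 0 < ε) :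
    ∃ (s : Finset Z2) (a : Z2 → ℂ), (∀ k ∉ s, a k = 0) ∧
      ‖f - ∑ k ∈ s, a k • (mFourier k : C(T2, ℂ))‖ < ε := by
  have h : f ∈ (Submodule.span ℂ (Set.range (mFourier (d := Fin 2)))).topologicalClosure := by
    rw [span_mFourier_closure_eq_top]; trivial
  rw [← SetLike.mem_coe, Submodule.topologicalClosure_coe, Metric.mem_closure_iff] at h
  obtain ⟨g, hg, hd⟩ := h ε hε
  rw [SetLike.mem_coe, Finsupp.mem_span_range_iff_exists_finsupp] at hg
  obtain ⟨a, rfl⟩ := hg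
  refine ⟨a.support, a, fun k hk => by simpa using hk, ?_⟩
  rwa [dist_eq_norm] at hd

lemma ser_finset (s : Finset Z2) (a : Z2 → ℂ) (ha : ∀ k ∉ s, a k = 0) :
    ser a = ∑ k ∈ s, a k • (mFourier k : C(T2, ℂ)) :=
  tsum_eq_sum fun k hk => by
    rw [ha k hk]; ext t; simp

lemma summable_finset (s : Finset Z2) (a : Z2 → ℂ) (ha : ∀ k ∉ s, a k = 0) :
    Summable fun k => ‖a k‖ :=
  summable_of_ne_finset_zero (s := s) fun k hk => by simp [ha k hk]

/-- Positivity of the resolvent, by approximating `f` uniformly by trigonometric polynomials, to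
which the maximum principle applies. -/
lemma res_re_nonneg {c : ℝ} (hc : 0 < c) {f : C(T2, ℂ)} (hf : ∀ t, 0 ≤ (f t).re) (t : T2) :
    0 ≤ (res c f t).re := by
  obtain ⟨C, hC⟩ := norm_res_le hc
  have key : ∀ ε : ℝ, 0 < ε → -((1 / c + |C|) * ε) ≤ (res c f t).re := by
    intro ε hε
    obtain ⟨s, a, ha, hfa⟩ := exists_trig_approx f hε
    rw [← ser_finset s a ha] at hfa
    have hsum := summable_finset s a ha
    have h1 : ∀ t, -ε ≤ (∑ k ∈ s, a k * mFourier k t).re := by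
      intro t
      have e : ser a t = ∑ k ∈ s, a k * mFourier k t := by
        rw [ser_finset s a ha]; simp
      rw [← e]
      have h2 := ((f - ser a).norm_coe_le_norm t).trans hfa.le
      have h3 := (Complex.abs_re_le_norm _).trans h2
      rw [abs_le] at h3
      simp only [ContinuousMap.sub_apply, Complex.sub_re] at h3
      linarith [hf t, h3.2]
    have h2 := max_principle hc s a h1 t
    have e : res c (ser a) t = ∑ k ∈ s, a k / om c k * mFourier k t := by
      rw [res]
      have : (fun k => cf (ser a) k / (om c k : ℂ)) = fun k => a k / om c k := by
        ext k; rw [cf_ser hsum]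
      rw [this, ser_finset s _ (fun k hk => by simp [ha k hk])]
      simp
    rw [← e] at h2
    have h3 := ((res c (f - ser a)).norm_coe_le_norm t).trans (hC _)
    have h4 := (Complex.abs_re_le_norm _).trans h3
    rw [res_sub hc, ContinuousMap.sub_apply, Complex.sub_re, abs_le] at h4
    have h5 : C * ‖f - ser a‖ ≤ |C| * ε := by
      gcongr
      exact le_abs_self C
    have h6 : -ε / c = -(1 / c * ε) := by ring
    nlinarith [h4.1]
  have hpos : 0 < 1 / c + |C| := by positivity
  by_contra hneg
  push Not at hneg
  have := key (-(res c f t).re / (2 * (1 / c + |C|))) (by apply div_pos <;> linarith)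
  have e : (1 / c + |C|) * (-(res c f t).re / (2 * (1 / c + |C|))) = -(res c f t).re / 2 := by
    field_simp
  rw [e] at this
  linarith

lemma res_im_zero {c : ℝ} (hc : 0 < c) {f : C(T2, ℂ)} (hf : ∀ t, (f t).im = 0) (t : T2) :
    (res c f t).im = 0 := by
  have h1 := res_re_nonneg hc (f := Complex.I • f) (fun t => by simp [hf t]) t
  have h2 := res_re_nonneg hc (f := (-Complex.I) • f) (fun t => by simp [hf t]) t
  rw [res_smul hc] at h1 h2
  simp at h1 h2
  linarith

/-- `|(c - Δ)⁻¹ h| ≤ (c - Δ)⁻¹ f` pointwise when `|h| ≤ f`. -/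
lemma norm_res_le_res {c : ℝ} (hc : 0 < c) {f h : C(T2, ℂ)} (hf : ∀ t, ‖h t‖ ≤ (f t).re) (t : T2) :
    ‖res c h t‖ ≤ (res c f t).re := by
  -- rotate the value `res c h t` onto the positive real axis
  obtain ⟨θ, hθ, hθ2⟩ : ∃ θ : ℂ, ‖θ‖ = 1 ∧ θ * res c h t = ‖res c h t‖ := by
    rcases eq_or_ne (res c h t) 0 with h0 | h0
    · exact ⟨1, by simp, by simp [h0]⟩
    · have hn : ‖res c h t‖ ≠ 0 := norm_ne_zero_iff.mpr h0
      refine ⟨conj (res c h t) / ‖res c h t‖, by simp [hn], ?_⟩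
      rw [div_mul_eq_mul_div, mul_comm, Complex.mul_conj, Complex.normSq_eq_norm_sq]
      push_cast
      have : (‖res c h t‖ : ℂ) ≠ 0 := by exact_mod_cast hn
      field_simp
  have h1 := res_re_nonneg hc (f := f - θ • h) (fun t => by
    simp only [ContinuousMap.sub_apply, ContinuousMap.smul_apply, Complex.sub_re, smul_eq_mul]
    have h2 := Complex.re_le_norm (θ * h t)
    rw [norm_mul, hθ, one_mul] at h2
    linarith [hf t]) t
  rw [res_sub hc, res_smul hc] at h1
  simp only [ContinuousMap.sub_apply, ContinuousMap.smul_apply, Complex.sub_re, smul_eq_mul, hθ2,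
    Complex.ofReal_re] at h1
  linarith

/-! ### Periodic coordinates, integrals over the square and reflections -/

/-- The point of the unit torus with `2π`-periodic coordinates `x` and `y`. -/
def pt (x y : ℝ) : T2 := ![((x / (2 * π) : ℝ) : UnitAddCircle), ((y / (2 * π) : ℝ) : UnitAddCircle)]

lemma continuous_pt : Continuous fun z : ℝ × ℝ => pt z.1 z.2 := by
  refine continuous_pi fun i => ?_
  fin_cases i
  · exact (AddCircle.continuous_mk' 1).comp (continuous_fst.div_const _)
  · exact (AddCircle.continuous_mk' 1).comp (continuous_snd.div_const _)

lemma integral_circle {E : Type*} [NormedAddCommGroup E] [NormedSpace ℝ E] (f : UnitAddCircle → E) :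
    ∫ b, f b = (2 * π)⁻¹ • ∫ x in (0 : ℝ)..(2 * π), f ((x / (2 * π) : ℝ) : UnitAddCircle) := by
  have h1 := AddCircle.intervalIntegral_preimage 1 0 f
  rw [AddCircle.volume_eq_smul_haarAddCircle] at h1
  simp only [ENNReal.ofReal_one, one_smul, zero_add] at h1
  have h2 := intervalIntegral.integral_comp_div (a := 0) (b := 2 * π)
    (fun x : ℝ => f (x : UnitAddCircle)) (c := 2 * π) (by positivity)
  rw [h2, zero_div, div_self (by positivity), h1, smul_smul, inv_mul_cancel₀ (by positivity),
    one_smul]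
  rfl

lemma integral_torus {E : Type*} [NormedAddCommGroup E] [NormedSpace ℝ E] [CompleteSpace E]
    {g : T2 → E} (hg : Continuous g) :
    ∫ t, g t = ((2 * π) ^ 2)⁻¹ • ∫ x in (0 : ℝ)..(2 * π), ∫ y in (0 : ℝ)..(2 * π), g (pt x y) := by
  have h1 := (volume_preserving_finTwoArrow UnitAddCircle).symm.integral_comp' g
  rw [← h1]
  have hc : Continuous fun z : UnitAddCircle × UnitAddCircle => g (![z.1, z.2]) :=
    hg.comp (by fun_prop)
  have h2 : ∫ z : UnitAddCircle × UnitAddCircle, g (MeasurableEquiv.finTwoArrow.symm z) =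
      ∫ x : UnitAddCircle, ∫ y : UnitAddCircle, g ![x, y] :=
    integral_prod (μ := volume) (ν := volume) (fun z : UnitAddCircle × UnitAddCircle => g (![z.1, z.2]))
      (hc.integrable_of_hasCompactSupport (HasCompactSupport.of_compactSpace _))
  rw [h2, integral_circle]
  simp only [integral_circle]
  rw [intervalIntegral.integral_smul, smul_smul, ← mul_inv, ← sq]
  rfl

/-- Lebesgue measure on the square `(0, 2π]²`. -/
def sq2 : Measure (ℝ × ℝ) :=
  (volume.restrict (Set.Ioc 0 (2 * π))).prod (volume.restrict (Set.Ioc 0 (2 * π)))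

lemma sq2_integrable {E : Type*} [NormedAddCommGroup E] {g : ℝ × ℝ → E} (hg : Continuous g) :
    Integrable g sq2 := by
  rw [sq2, Measure.prod_restrict]
  exact (hg.continuousOn.integrableOn_compact
    (isCompact_Icc.prod isCompact_Icc : IsCompact (Set.Icc 0 (2*π) ×ˢ Set.Icc 0 (2*π)))).mono_set
    (Set.prod_mono Set.Ioc_subset_Icc_self Set.Ioc_subset_Icc_self)

lemma integral_sq2 {E : Type*} [NormedAddCommGroup E] [NormedSpace ℝ E]
    {g : ℝ × ℝ → E} (hg : Continuous g) :
    ∫ z, g z ∂sq2 = ∫ x in (0 : ℝ)..(2 * π), ∫ y in (0 : ℝ)..(2 * π), g (x, y) := by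
  have hp : (0 : ℝ) ≤ 2 * π := by positivity
  simp only [intervalIntegral.integral_of_le hp]
  exact integral_prod g (sq2_integrable hg)

lemma integral_sq2_swap {E : Type*} [NormedAddCommGroup E] [NormedSpace ℝ E]
    {g : ℝ × ℝ → E} (hg : Continuous g) :
    ∫ z, g z ∂sq2 = ∫ y in (0 : ℝ)..(2 * π), ∫ x in (0 : ℝ)..(2 * π), g (x, y) := by
  have hp : (0 : ℝ) ≤ 2 * π := by positivity
  simp only [intervalIntegral.integral_of_le hp]
  exact integral_prod_symm g (sq2_integrable hg)

lemma integral_torus_sq2 {E : Type*} [NormedAddCommGroup E] [NormedSpace ℝ E] [CompleteSpace E]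
    {g : T2 → E} (hg : Continuous g) :
    ∫ t, g t = ((2 * π) ^ 2)⁻¹ • ∫ z, g (pt z.1 z.2) ∂sq2 := by
  rw [integral_torus hg, integral_sq2 (g := fun z => g (pt z.1 z.2)) (hg.comp continuous_pt)]

lemma integ2_eq {f : ℝ → ℝ → ℝ} (hf : Continuous fun z : ℝ × ℝ => f z.1 z.2) :
    integ2 f = ∫ z, f z.1 z.2 ∂sq2 := (integral_sq2 hf).symm

lemma mFourier_pt (k : Z2) (x y : ℝ) :
    mFourier k (pt x y) = Complex.exp ((k 0 * x + k 1 * y : ℝ) * Complex.I) := by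
  simp only [mFourier, Fin.prod_univ_two, ContinuousMap.coe_mk, pt, Matrix.cons_val_zero,
    Matrix.cons_val_one, fourier_coe_apply]
  rw [← Complex.exp_add]
  congr 1
  have : (π : ℂ) ≠ 0 := by exact_mod_cast pi_ne_zero
  push_cast
  field_simp

/-- Every point of the torus has `2π`-periodic coordinates. -/
lemma pt_surjective (t : T2) : ∃ x y : ℝ, pt x y = t := by
  obtain ⟨x, hx⟩ := QuotientAddGroup.mk_surjective (t 0)
  obtain ⟨y, hy⟩ := QuotientAddGroup.mk_surjective (t 1)
  refine ⟨2 * π * x, 2 * π * y, ?_⟩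
  have h : ∀ x : ℝ, 2 * π * x / (2 * π) = x := fun x => by field_simp
  ext i
  fin_cases i
  · simpa [pt, h] using hx
  · simpa [pt, h] using hy

/-- Doubly periodic continuous functions descend to the torus. -/
lemma exists_descent {u : ℝ → ℝ → ℂ} (hu : Continuous fun z : ℝ × ℝ => u z.1 z.2)
    (hper : DblPeriodicC u) : ∃ φ : C(T2, ℂ), ∀ x y, φ (pt x y) = u x y := by
  have hx : ∀ y, Function.Periodic (fun x => u (2 * π * x) y) 1 := fun y x => by
    have := (hper (2 * π * x) y).1
    simpa [mul_add] using this
  have hy : ∀ x, Function.Periodic (fun y => u x (2 * π * y)) 1 := fun x y => by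
    have := (hper x (2 * π * y)).2
    simpa [mul_add] using this
  let F : T2 → ℂ := fun t => u (2 * π * (AddCircle.equivIco 1 0 (t 0) : ℝ))
    (2 * π * (AddCircle.equivIco 1 0 (t 1) : ℝ))
  have key : ∀ x y : ℝ, F ![(x : UnitAddCircle), (y : UnitAddCircle)] = u (2 * π * x) (2 * π * y) := by
    intro x y
    simp only [F, Matrix.cons_val_zero, Matrix.cons_val_one, AddCircle.coe_equivIco_mk_apply]
    have h : ∀ z : ℝ, ∃ n : ℤ, Int.fract (z / 1) * 1 = z - n * 1 := fun z =>
      ⟨⌊z⌋, by rw [div_one, mul_one, mul_one]; exact (Int.self_sub_floor z).symm⟩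
    obtain ⟨m, hm⟩ := h x
    obtain ⟨n, hn⟩ := h y
    rw [hm, hn]
    rw [(hx (2 * π * (y - n * 1))).sub_int_mul_eq m, (hy (2 * π * x)).sub_int_mul_eq n]
  have hq : IsOpenQuotientMap (Pi.map (fun _ : Fin 2 => ((↑) : ℝ → UnitAddCircle))) :=
    IsOpenQuotientMap.piMap fun _ => QuotientAddGroup.isOpenQuotientMap_mk
  have hF : Continuous F := by
    rw [← hq.continuous_comp_iff]
    have e : F ∘ (Pi.map (fun _ : Fin 2 => ((↑) : ℝ → UnitAddCircle))) =
        fun w => u (2 * π * w 0) (2 * π * w 1) := by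
      ext w
      rw [← key]
      simp only [Function.comp]
      congr 1
      ext i
      fin_cases i <;> rfl
    rw [e]
    exact hu.comp (f := fun w : Fin 2 → ℝ => (2 * π * w 0, 2 * π * w 1)) (by fun_prop)
  refine ⟨⟨F, hF⟩, fun x y => ?_⟩
  have h : ∀ x : ℝ, 2 * π * (x / (2 * π)) = x := fun x => by field_simp
  simp only [ContinuousMap.coe_mk, pt]
  rw [key, h, h]

lemma continuous_integral_pow (n : ℕ) : Continuous fun φ : C(T2, ℂ) => ∫ t, ‖φ t‖ ^ n := by
  have h1 : Continuous fun φ : C(T2, ℂ) => (⟨fun z : ℂ => ‖z‖ ^ n, by fun_prop⟩ : C(ℂ, ℝ)).comp φ :=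
    ContinuousMap.continuous_postcomp _
  have h2 : Continuous fun g : C(T2, ℝ) => ∫ t, g t := by
    refine LipschitzWith.continuous (K := 1) (LipschitzWith.of_dist_le_mul fun f g => ?_)
    rw [dist_eq_norm, dist_eq_norm, ← integral_sub (cont_integrable f.continuous)
      (cont_integrable g.continuous), NNReal.coe_one, one_mul]
    refine (norm_integral_le_of_norm_le_const (C := ‖f - g‖) (ae_of_all _ fun t => ?_)).trans
      (by simp)
    exact (f - g).norm_coe_le_norm t
  exact h2.comp h1

/-- Reflection of the `i`-th coordinate of the torus. -/
def refl (i : Fin 2) (t : T2) : T2 := fun j => (if j = i then Neg.neg else id) (t j)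

/-- Reflection of the `i`-th frequency. -/
def reflZ (i : Fin 2) (k : Z2) : Z2 := fun j => (if j = i then Neg.neg else id) (k j)

/-- Functions on the torus that are even in each variable. -/
def IsSym (φ : C(T2, ℂ)) : Prop := ∀ i t, φ (refl i t) = φ t

lemma reflZ_reflZ (i : Fin 2) (k : Z2) : reflZ i (reflZ i k) = k := by
  ext j; by_cases h : j = i <;> simp [reflZ, h]

lemma om_reflZ (c : ℝ) (i : Fin 2) (k : Z2) : om c (reflZ i k) = om c k := by
  fin_cases i <;> simp [om, reflZ]

lemma mFourier_refl (i : Fin 2) (k : Z2) (t : T2) :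
    mFourier k (refl i t) = mFourier (reflZ i k) t := by
  fin_cases i <;> simp [mFourier, refl, reflZ, Fin.prod_univ_two, fourier_apply]

lemma measurePreserving_refl (i : Fin 2) : MeasurePreserving (refl i) volume volume := by
  have : Measure.IsAddHaarMeasure (volume : Measure UnitAddCircle) :=
    inferInstanceAs (Measure.IsAddHaarMeasure AddCircle.haarAddCircle)
  refine volume_preserving_pi (f := fun j : Fin 2 => (if j = i then Neg.neg else id :
    UnitAddCircle → UnitAddCircle)) fun j => ?_
  split_ifs
  · exact Measure.measurePreserving_neg volume
  · exact MeasurePreserving.id _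

lemma refl_refl (i : Fin 2) (t : T2) : refl i (refl i t) = t := by
  ext j; by_cases h : j = i <;> simp [refl, h]

lemma continuous_refl (i : Fin 2) : Continuous (refl i) := by
  refine continuous_pi fun j => ?_
  unfold refl
  split_ifs
  · exact (continuous_apply j).neg
  · exact continuous_apply j

lemma cf_reflZ {φ : C(T2, ℂ)} (h : IsSym φ) (i : Fin 2) (k : Z2) : cf φ (reflZ i k) = cf φ k := by
  rw [cf_def, cf_def]
  have he : MeasurableEmbedding (refl i) :=
    (Homeomorph.mk ⟨refl i, refl i, refl_refl i, refl_refl i⟩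
      (continuous_refl i) (continuous_refl i)).measurableEmbedding
  rw [← (measurePreserving_refl i).integral_comp he]
  congr 1; ext t
  rw [h i t, mFourier_refl]
  congr 3
  ext j; by_cases h : j = i <;> simp [reflZ, h]

lemma ser_sym {a : Z2 → ℂ} (ha : Summable fun k => ‖a k‖) (hs : ∀ i k, a (reflZ i k) = a k) :
    IsSym (ser a) := by
  intro i t
  have h1 := hasSum_ser_apply ha (refl i t)
  refine h1.unique ?_
  have h2 := (hasSum_ser_apply ha t)
  rw [← Equiv.hasSum_iff (Equiv.mk (reflZ i) (reflZ i) (reflZ_reflZ i) (reflZ_reflZ i))] at h2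
  convert h2 using 2 with k
  simp [hs, mFourier_refl]

/-! ### The Sobolev inequality -/

/-- The one-dimensional embedding `W^{1,1} ⊂ L^∞`: average `|h x| ≤ |h s| + ∫ |h'|` over `s`, the
interval having length `2π ≥ 1`. -/
lemma sup_bound {h h' : ℝ → ℂ} (hd : ∀ x, HasDerivAt h (h' x) x) (hc' : Continuous h')
    {x : ℝ} (hx : x ∈ Set.Ioc 0 (2 * π)) :
    ‖h x‖ ≤ ∫ s in (0 : ℝ)..(2 * π), (‖h s‖ + ‖h' s‖) := by
  have hc : Continuous h := continuous_iff_continuousAt.mpr fun x => (hd x).continuousAt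
  have hp : (0 : ℝ) ≤ 2 * π := by positivity
  set J := ∫ s in (0 : ℝ)..(2 * π), ‖h' s‖ with hJ
  have hJ0 : 0 ≤ J := intervalIntegral.integral_nonneg hp fun _ _ => norm_nonneg _
  have hA0 : 0 ≤ ∫ s in (0 : ℝ)..(2 * π), ‖h s‖ :=
    intervalIntegral.integral_nonneg hp fun _ _ => norm_nonneg _
  have h1 : ∀ s ∈ Set.Icc 0 (2 * π), ‖h x‖ ≤ ‖h s‖ + J := by
    intro s hs
    have e : h x - h s = ∫ r in s..x, h' r :=
      (intervalIntegral.integral_eq_sub_of_hasDerivAt (fun r _ => hd r)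
        (hc'.intervalIntegrable _ _)).symm
    have h2 : ‖∫ r in s..x, h' r‖ ≤ J := by
      refine intervalIntegral.norm_integral_le_integral_norm_uIoc.trans ?_
      rw [hJ, intervalIntegral.integral_of_le hp]
      refine setIntegral_mono_set ?_ (ae_of_all _ fun _ => norm_nonneg _) ?_
      · exact (hc'.norm.intervalIntegrable 0 (2 * π)).1
      · refine Eventually.of_forall ?_
        intro r hr
        rcases Set.mem_uIoc.mp hr with h | h
        · exact ⟨hs.1.trans_lt h.1, h.2.trans hx.2⟩
        · exact ⟨hx.1.trans h.1, h.2.trans hs.2⟩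
    calc ‖h x‖ = ‖h s + (h x - h s)‖ := by congr 1; ring
      _ ≤ ‖h s‖ + ‖h x - h s‖ := norm_add_le _ _
      _ ≤ _ := by rw [e]; gcongr
  have h3 : ∫ _s in (0 : ℝ)..(2 * π), ‖h x‖ ≤ ∫ s in (0 : ℝ)..(2 * π), (‖h s‖ + J) :=
    intervalIntegral.integral_mono_on hp (by simp)
      ((hc.norm.add continuous_const).intervalIntegrable _ _) h1
  rw [intervalIntegral.integral_add (hc.norm.intervalIntegrable _ _) (by simp),
    intervalIntegral.integral_const, intervalIntegral.integral_const] at h3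
  rw [intervalIntegral.integral_add (hc.norm.intervalIntegrable _ _)
    (hc'.norm.intervalIntegrable _ _)]
  simp only [sub_zero, smul_eq_mul] at h3
  have h4 : 1 ≤ 2 * π := by linarith [pi_gt_three]
  by_contra hlt
  push Not at hlt
  nlinarith

/-- The Gagliardo–Nirenberg embedding `W^{1,1} ⊂ L²` on the square: `|v(x, y)|²` is bounded by a
function of `x` times a function of `y`. -/
lemma w11 {v vx vy : ℝ × ℝ → ℂ} (hv : Continuous v) (hvx : Continuous vx) (hvy : Continuous vy)
    (hdx : ∀ x y, HasDerivAt (fun s => v (s, y)) (vx (x, y)) x)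
    (hdy : ∀ x y, HasDerivAt (fun s => v (x, s)) (vy (x, y)) y) :
    ∫ z, ‖v z‖ ^ 2 ∂sq2 ≤ (∫ z, (‖v z‖ + ‖vx z‖) ∂sq2) * ∫ z, (‖v z‖ + ‖vy z‖) ∂sq2 := by
  set G : ℝ → ℝ := fun y => ∫ x in (0 : ℝ)..(2 * π), (‖v (x, y)‖ + ‖vx (x, y)‖) with hG
  set H : ℝ → ℝ := fun x => ∫ y in (0 : ℝ)..(2 * π), (‖v (x, y)‖ + ‖vy (x, y)‖) with hH
  have hGc : Continuous G :=
    intervalIntegral.continuous_parametric_intervalIntegral_of_continuous'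
      (f := fun y x => ‖v (x, y)‖ + ‖vx (x, y)‖) (by unfold Function.uncurry; fun_prop) _ _
  have hHc : Continuous H :=
    intervalIntegral.continuous_parametric_intervalIntegral_of_continuous'
      (f := fun x y => ‖v (x, y)‖ + ‖vy (x, y)‖) (by unfold Function.uncurry; fun_prop) _ _
  have hp : (0 : ℝ) ≤ 2 * π := by positivity
  have hbound : ∀ᵐ z ∂sq2, ‖v z‖ ^ 2 ≤ H z.1 * G z.2 := by
    rw [sq2, Measure.prod_restrict]
    refine (ae_restrict_mem (measurableSet_Ioc.prod measurableSet_Ioc)).mono ?_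
    rintro ⟨x, y⟩ ⟨hx, hy⟩
    have h1 := sup_bound (h := fun s => v (s, y)) (h' := fun s => vx (s, y)) (fun s => hdx s y)
      (by fun_prop) hx
    have h2 := sup_bound (h := fun s => v (x, s)) (h' := fun s => vy (x, s)) (fun s => hdy x s)
      (by fun_prop) hy
    rw [sq]
    exact mul_le_mul h2 h1 (norm_nonneg _) ((norm_nonneg _).trans h2)
  have hHG : Continuous fun z : ℝ × ℝ => H z.1 * G z.2 := by fun_prop
  refine (integral_mono_ae (sq2_integrable (by fun_prop)) (sq2_integrable hHG) hbound).trans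
    (le_of_eq ?_)
  rw [integral_sq2_swap (g := fun z => ‖v z‖ + ‖vx z‖) (by fun_prop),
    integral_sq2 (g := fun z => ‖v z‖ + ‖vy z‖) (by fun_prop), integral_sq2 hHG]
  simp only [intervalIntegral.integral_const_mul, intervalIntegral.integral_mul_const]
  rw [mul_comm]

lemma cauchy_schwarz {f g : ℝ × ℝ → ℝ} (hf : Continuous f) (hg : Continuous g) :
    (∫ z, f z * g z ∂sq2) ^ 2 ≤ (∫ z, f z ^ 2 ∂sq2) * ∫ z, g z ^ 2 ∂sq2 := by
  have h : ∀ t : ℝ, 0 ≤ (∫ z, g z ^ 2 ∂sq2) * (t * t) + (2 * ∫ z, f z * g z ∂sq2) * t +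
      ∫ z, f z ^ 2 ∂sq2 := by
    intro t
    have h0 : 0 ≤ ∫ z, (t * g z + f z) ^ 2 ∂sq2 := integral_nonneg fun z => sq_nonneg _
    have e : ∀ z, (t * g z + f z) ^ 2 = (g z ^ 2 * (t * t) + f z * g z * (2 * t)) + f z ^ 2 :=
      fun z => by ring
    simp only [e] at h0
    rw [integral_add (sq2_integrable (by fun_prop)) (sq2_integrable (by fun_prop)),
      integral_add (sq2_integrable (by fun_prop)) (sq2_integrable (by fun_prop)),
      integral_mul_const, integral_mul_const] at h0
    linarith
  have := discrim_le_zero h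
  unfold discrim at this
  linarith

/-- The inductive step `L^{2m} → L^{2m+2}` of the Sobolev inequality: the `W^{1,1} ⊂ L²` inequality
for `u^{m+1}`, combined with Cauchy–Schwarz. -/
lemma sobolev_step {u ux uy : ℝ × ℝ → ℂ} (hu : Continuous u) (hux : Continuous ux)
    (huy : Continuous uy)
    (hdx : ∀ x y, HasDerivAt (fun s => u (s, y)) (ux (x, y)) x)
    (hdy : ∀ x y, HasDerivAt (fun s => u (x, s)) (uy (x, y)) y) (m : ℕ) :
    ∫ z, ‖u z‖ ^ (2 * (m + 1)) ∂sq2 ≤ (2 + 2 * (m + 1 : ℝ) ^ 2) *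
      (∫ z, ‖u z‖ ^ (2 * m) ∂sq2) * ∫ z, (‖u z‖ ^ 2 + ‖ux z‖ ^ 2 + ‖uy z‖ ^ 2) ∂sq2 := by
  have h := w11 (v := fun z => u z ^ (m + 1)) (vx := fun z => (m + 1 : ℝ) * u z ^ m * ux z)
    (vy := fun z => (m + 1 : ℝ) * u z ^ m * uy z) (by fun_prop) (by fun_prop) (by fun_prop)
    (fun x y => by
      simpa using (hdx x y).fun_pow (m + 1)) (fun x y => by
      simpa using (hdy x y).fun_pow (m + 1))
  have hm : (0 : ℝ) ≤ m + 1 := by positivity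
  have e : ∀ w : ℝ × ℝ → ℂ, ∀ z, ‖u z ^ (m + 1)‖ + ‖((m + 1 : ℝ) : ℂ) * u z ^ m * w z‖ =
      ‖u z‖ ^ m * (‖u z‖ + (m + 1) * ‖w z‖) := by
    intro w z
    rw [norm_mul, norm_mul, norm_pow, norm_pow, Complex.norm_real, Real.norm_of_nonneg hm]
    ring
  simp only [e ux, e uy] at h
  have e2 : ∀ z, ‖u z ^ (m + 1)‖ ^ 2 = ‖u z‖ ^ (2 * (m + 1)) := fun z => by
    rw [norm_pow, ← pow_mul, mul_comm]
  simp only [e2] at h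
  have key : ∀ w : ℝ × ℝ → ℂ, Continuous w → (∀ z, ‖w z‖ ^ 2 ≤ ‖ux z‖ ^ 2 + ‖uy z‖ ^ 2) →
      (∫ z, ‖u z‖ ^ m * (‖u z‖ + (m + 1) * ‖w z‖) ∂sq2) ^ 2 ≤ (2 + 2 * (m + 1 : ℝ) ^ 2) *
      (∫ z, ‖u z‖ ^ (2 * m) ∂sq2) * ∫ z, (‖u z‖ ^ 2 + ‖ux z‖ ^ 2 + ‖uy z‖ ^ 2) ∂sq2 := by
    intro w hw hwb
    have h1 := cauchy_schwarz (f := fun z => ‖u z‖ ^ m) (g := fun z => ‖u z‖ + (m + 1) * ‖w z‖)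
      (by fun_prop) (by fun_prop)
    refine h1.trans ?_
    have h2 : ∫ z, (‖u z‖ + (m + 1) * ‖w z‖) ^ 2 ∂sq2 ≤ (2 + 2 * (m + 1 : ℝ) ^ 2) *
        ∫ z, (‖u z‖ ^ 2 + ‖ux z‖ ^ 2 + ‖uy z‖ ^ 2) ∂sq2 := by
      rw [← integral_const_mul]
      refine integral_mono (sq2_integrable (by fun_prop)) (sq2_integrable (by fun_prop)) fun z => ?_
      have h3 : (‖u z‖ + (m + 1) * ‖w z‖) ^ 2 ≤ 2 * ‖u z‖ ^ 2 + 2 * (m + 1 : ℝ) ^ 2 * ‖w z‖ ^ 2 := by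
        nlinarith [sq_nonneg (‖u z‖ - (m + 1) * ‖w z‖)]
      have h4 := mul_le_mul_of_nonneg_left (hwb z) (by positivity : 0 ≤ 2 * (m + 1 : ℝ) ^ 2)
      have h5 : 0 ≤ 2 * (m + 1 : ℝ) ^ 2 * ‖u z‖ ^ 2 := by positivity
      have h6 : 0 ≤ ‖ux z‖ ^ 2 + ‖uy z‖ ^ 2 := by positivity
      simp only
      nlinarith
    have h3 : (∫ z, (‖u z‖ ^ m) ^ 2 ∂sq2) = ∫ z, ‖u z‖ ^ (2 * m) ∂sq2 := by
      congr 1; ext z; rw [← pow_mul, mul_comm]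
    rw [h3, mul_comm (2 + 2 * (m + 1 : ℝ) ^ 2), mul_assoc]
    exact mul_le_mul_of_nonneg_left h2 (integral_nonneg fun z => by positivity)
  have hX := key ux hux fun z => by nlinarith [sq_nonneg ‖uy z‖]
  have hY := key uy huy fun z => by nlinarith [sq_nonneg ‖ux z‖]
  refine h.trans ?_
  set X := ∫ z, ‖u z‖ ^ m * (‖u z‖ + (m + 1) * ‖ux z‖) ∂sq2
  set Y := ∫ z, ‖u z‖ ^ m * (‖u z‖ + (m + 1) * ‖uy z‖) ∂sq2
  nlinarith [sq_nonneg (X - Y)]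

/-- A constant for the Sobolev inequality `H¹ ⊂ L^{2m}` on the square. -/
def sobC : ℕ → ℝ
  | 0 => (2 * π) ^ 2
  | m + 1 => (2 + 2 * (m + 1 : ℝ) ^ 2) * sobC m

lemma sobC_nonneg (m : ℕ) : 0 ≤ sobC m := by
  induction m with
  | zero => unfold sobC; positivity
  | succ m ih => unfold sobC; positivity

lemma sobolev_sq {u ux uy : ℝ × ℝ → ℂ} (hu : Continuous u) (hux : Continuous ux)
    (huy : Continuous uy)
    (hdx : ∀ x y, HasDerivAt (fun s => u (s, y)) (ux (x, y)) x)
    (hdy : ∀ x y, HasDerivAt (fun s => u (x, s)) (uy (x, y)) y) (m : ℕ) :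
    ∫ z, ‖u z‖ ^ (2 * m) ∂sq2 ≤
      sobC m * (∫ z, (‖u z‖ ^ 2 + ‖ux z‖ ^ 2 + ‖uy z‖ ^ 2) ∂sq2) ^ m := by
  induction m with
  | zero =>
    have h := integral_sq2 (g := fun _ => (1 : ℝ)) continuous_const
    simp at h
    simp only [mul_zero, pow_zero, mul_one, sobC]
    simp [h]
    exact le_of_eq (by ring)
  | succ m ih =>
    refine (sobolev_step hu hux huy hdx hdy m).trans ?_
    have hD : 0 ≤ ∫ z, (‖u z‖ ^ 2 + ‖ux z‖ ^ 2 + ‖uy z‖ ^ 2) ∂sq2 :=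
      integral_nonneg fun z => by positivity
    have e : sobC (m + 1) = (2 + 2 * (m + 1 : ℝ) ^ 2) * sobC m := rfl
    rw [e]
    calc _ ≤ (2 + 2 * (m + 1 : ℝ) ^ 2) * (sobC m *
          (∫ z, (‖u z‖ ^ 2 + ‖ux z‖ ^ 2 + ‖uy z‖ ^ 2) ∂sq2) ^ m) *
          ∫ z, (‖u z‖ ^ 2 + ‖ux z‖ ^ 2 + ‖uy z‖ ^ 2) ∂sq2 := by gcongr
      _ = _ := by ring

/-- The quadratic form `Σ (c + |k|²) |φ̂(k)|²`, which is `2 B_c / (2π)²`. -/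
def en (c : ℝ) (a : Z2 → ℂ) : ℝ := ∑' k, om c k * ‖a k‖ ^ 2

lemma en_finset {c : ℝ} (s : Finset Z2) (a : Z2 → ℂ) (ha : ∀ k ∉ s, a k = 0) :
    en c a = ∑ k ∈ s, om c k * ‖a k‖ ^ 2 :=
  tsum_eq_sum fun k hk => by simp [ha k hk]

lemma hasDerivAt_mFourier_x (k : Z2) (x y : ℝ) :
    HasDerivAt (fun s => mFourier k (pt s y)) (k 0 * Complex.I * mFourier k (pt x y)) x := by
  simp only [mFourier_pt]
  have h : HasDerivAt (fun s : ℝ => ((k 0 * s + k 1 * y : ℝ) : ℂ) * Complex.I) (k 0 * Complex.I) x := by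
    have h1 : HasDerivAt (fun s : ℝ => (k 0 * s + k 1 * y : ℝ)) (k 0) x := by
      simpa using ((hasDerivAt_id x).const_mul (k 0 : ℝ)).add_const (k 1 * y)
    simpa using h1.ofReal_comp.mul_const Complex.I
  exact h.cexp.congr_deriv (mul_comm _ _)

lemma hasDerivAt_mFourier_y (k : Z2) (x y : ℝ) :
    HasDerivAt (fun s => mFourier k (pt x s)) (k 1 * Complex.I * mFourier k (pt x y)) y := by
  simp only [mFourier_pt]
  have h : HasDerivAt (fun s : ℝ => ((k 0 * x + k 1 * s : ℝ) : ℂ) * Complex.I) (k 1 * Complex.I) y := by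
    have h1 : HasDerivAt (fun s : ℝ => (k 0 * x + k 1 * s : ℝ)) (k 1) y := by
      simpa using ((hasDerivAt_id y).const_mul (k 1 : ℝ)).const_add (k 0 * x)
    simpa using h1.ofReal_comp.mul_const Complex.I
  exact h.cexp.congr_deriv (mul_comm _ _)

lemma integral_sq2_norm_sq (φ : C(T2, ℂ)) :
    ∫ z, ‖φ (pt z.1 z.2)‖ ^ 2 ∂sq2 = (2 * π) ^ 2 * ∑' k, ‖cf φ k‖ ^ 2 := by
  have h := integral_torus_sq2 (g := fun t => ‖φ t‖ ^ 2) (by fun_prop)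
  rw [(parseval_sq φ).tsum_eq, h, smul_eq_mul, mul_inv_cancel_left₀ (by positivity)]

lemma ser_finset_apply (s : Finset Z2) (a : Z2 → ℂ) (ha : ∀ k ∉ s, a k = 0) (t : T2) :
    ser a t = ∑ k ∈ s, a k * mFourier k t := by
  rw [ser_finset s a ha]
  simp [ContinuousMap.sum_apply]

/-- The Sobolev inequality for trigonometric polynomials. -/
lemma sobolev_finset {c : ℝ} (hc : 0 < c) (m : ℕ) (s : Finset Z2) (a : Z2 → ℂ)
    (ha : ∀ k ∉ s, a k = 0) :
    ∫ t, ‖ser a t‖ ^ (2 * m) ≤ ((2 * π) ^ 2)⁻¹ * (sobC m * ((2 * π) ^ 2 * (max 1 c⁻¹ * en c a)) ^ m) := by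
  set ax : Z2 → ℂ := fun k => a k * (k 0 * Complex.I) with hax
  set ay : Z2 → ℂ := fun k => a k * (k 1 * Complex.I) with hay
  have hax0 : ∀ k ∉ s, ax k = 0 := fun k hk => by simp [hax, ha k hk]
  have hay0 : ∀ k ∉ s, ay k = 0 := fun k hk => by simp [hay, ha k hk]
  have hcont : ∀ b : Z2 → ℂ, Continuous fun z : ℝ × ℝ => ser b (pt z.1 z.2) :=
    fun b => (ser b).continuous.comp continuous_pt
  have h := sobolev_sq (u := fun z => ser a (pt z.1 z.2)) (ux := fun z => ser ax (pt z.1 z.2))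
    (uy := fun z => ser ay (pt z.1 z.2)) (hcont _) (hcont _) (hcont _)
    (fun x y => by
      simp only [ser_finset_apply s a ha, ser_finset_apply s ax hax0]
      refine HasDerivAt.fun_sum fun k _ => ?_
      exact ((hasDerivAt_mFourier_x k x y).const_mul (a k)).congr_deriv (by simp only [hax]; ring))
    (fun x y => by
      simp only [ser_finset_apply s a ha, ser_finset_apply s ay hay0]
      refine HasDerivAt.fun_sum fun k _ => ?_
      exact ((hasDerivAt_mFourier_y k x y).const_mul (a k)).congr_deriv (by simp only [hay]; ring)) m
  rw [integral_torus_sq2 (g := fun t => ‖ser a t‖ ^ (2 * m)) (by fun_prop), smul_eq_mul]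
  refine mul_le_mul_of_nonneg_left (h.trans ?_) (by positivity)
  refine mul_le_mul_of_nonneg_left ?_ (sobC_nonneg m)
  refine pow_le_pow_left₀ (integral_nonneg fun z => by positivity) ?_ m
  have i0 : ∀ b : Z2 → ℂ, Integrable (fun z : ℝ × ℝ => ‖ser b (pt z.1 z.2)‖ ^ 2) sq2 :=
    fun b => sq2_integrable ((hcont b).norm.pow 2)
  have hs := fun (b : Z2 → ℂ) (hb : ∀ k ∉ s, b k = 0) => summable_finset s b hb
  have ht : ∀ b : Z2 → ℂ, (∀ k ∉ s, b k = 0) → ∑' k, ‖b k‖ ^ 2 = ∑ k ∈ s, ‖b k‖ ^ 2 :=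
    fun b hb => tsum_eq_sum fun k hk => by simp [hb k hk]
  rw [integral_add (by exact (i0 a).add (i0 ax)) (i0 ay), integral_add (i0 a) (i0 ax)]
  simp only [integral_sq2_norm_sq, cf_ser (hs a ha), cf_ser (hs ax hax0), cf_ser (hs ay hay0)]
  rw [ht a ha, ht ax hax0, ht ay hay0, ← mul_add, ← mul_add, ← Finset.sum_add_distrib,
    ← Finset.sum_add_distrib, en_finset s a ha,
    Finset.mul_sum _ _ (max 1 c⁻¹)]
  refine mul_le_mul_of_nonneg_left (Finset.sum_le_sum fun k _ => ?_) (by positivity)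
  have e1 : ‖ax k‖ ^ 2 = (k 0 : ℝ) ^ 2 * ‖a k‖ ^ 2 := by
    simp [hax, mul_pow, mul_comm]
  have e2 : ‖ay k‖ ^ 2 = (k 1 : ℝ) ^ 2 * ‖a k‖ ^ 2 := by
    simp [hay, mul_pow, mul_comm]
  rw [e1, e2]
  have h1 : (1 : ℝ) ≤ max 1 c⁻¹ := le_max_left _ _
  have h2 : c⁻¹ ≤ max 1 c⁻¹ := le_max_right _ _
  have h3 : 1 ≤ max 1 c⁻¹ * c := by
    calc (1 : ℝ) = c⁻¹ * c := by field_simp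
      _ ≤ _ := by gcongr
  have h4 : 1 + (k 0 : ℝ) ^ 2 + (k 1 : ℝ) ^ 2 ≤ max 1 c⁻¹ * om c k := by
    unfold om
    nlinarith [sq_nonneg (k 0 : ℝ), sq_nonneg (k 1 : ℝ)]
  nlinarith [mul_le_mul_of_nonneg_right h4 (sq_nonneg ‖a k‖)]

/-- The Sobolev inequality `H¹ ⊂ L^{2m}` on the torus, in terms of Fourier coefficients. It follows
from the case of trigonometric polynomials by passing to the limit in the partial sums. -/
lemma sobolev {c : ℝ} (hc : 0 < c) (m : ℕ) : ∃ C : ℝ, 0 ≤ C ∧ ∀ a : Z2 → ℂ,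
    (Summable fun k => ‖a k‖) → (Summable fun k => om c k * ‖a k‖ ^ 2) →
    ∫ t, ‖ser a t‖ ^ (2 * m) ≤ C * en c a ^ m := by
  refine ⟨((2 * π) ^ 2)⁻¹ * (sobC m * ((2 * π) ^ 2 * max 1 c⁻¹) ^ m), ?_, fun a ha hE => ?_⟩
  · have := sobC_nonneg m
    have : 0 ≤ max 1 c⁻¹ := le_max_of_le_left zero_le_one
    positivity
  have hlim := ((continuous_integral_pow (2 * m)).tendsto _).comp (hasSum_ser ha)
  refine le_of_tendsto hlim (Eventually.of_forall fun s => ?_)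
  set b : Z2 → ℂ := fun k => if k ∈ s then a k else 0 with hb
  have hb0 : ∀ k ∉ s, b k = 0 := fun k hk => by simp [hb, hk]
  have e : ser b = ∑ k ∈ s, a k • (mFourier k : C(T2, ℂ)) := by
    rw [ser_finset s b hb0]
    exact Finset.sum_congr rfl fun k hk => by simp [hb, hk]
  simp only [Function.comp_apply]
  rw [← e]
  refine (sobolev_finset hc m s b hb0).trans ?_
  have h1 : en c b ≤ en c a := by
    rw [en_finset s b hb0, en]
    refine le_trans (le_of_eq (Finset.sum_congr rfl fun k hk => by simp [hb, hk]))
      (hE.sum_le_tsum s fun k _ => mul_nonneg (om_pos hc k).le (sq_nonneg _))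
  have h2 : 0 ≤ en c b := tsum_nonneg fun k => mul_nonneg (om_pos hc k).le (sq_nonneg _)
  have h3 : 0 ≤ max 1 c⁻¹ := le_max_of_le_left zero_le_one
  have h4 := sobC_nonneg m
  rw [mul_assoc, mul_assoc, ← mul_pow, mul_assoc ((2 * π) ^ 2)]
  gcongr

/-! ### The admissible class and the improvement map -/

/-- The admissible class: symmetric functions with absolutely convergent Fourier series in the
unit ball of the energy norm. -/
structure Adm (c : ℝ) (φ : C(T2, ℂ)) : Prop where
  summ : Summable fun k => ‖cf φ k‖
  summE : Summable fun k => om c k * ‖cf φ k‖ ^ 2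
  le_one : en c (cf φ) ≤ 1
  sym : IsSym φ

/-- The functional `∫ |φ|^{p+2}` over the torus of volume one. -/
def F (p : ℕ) (φ : C(T2, ℂ)) : ℝ := ∫ t, ‖φ t‖ ^ (p + 2)

/-- The function `|φ|^{p+1}`. -/
def fp (p : ℕ) (φ : C(T2, ℂ)) : C(T2, ℂ) := ⟨fun t => ((‖φ t‖ ^ (p + 1) : ℝ) : ℂ), by fun_prop⟩

/-- The function `|φ|^p φ`. -/
def hp (p : ℕ) (φ : C(T2, ℂ)) : C(T2, ℂ) := ⟨fun t => ((‖φ t‖ ^ p : ℝ) : ℂ) * φ t, by fun_prop⟩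

/-- The dual energy `Σ |f̂(k)|² / (c + |k|²)`. -/
def dual (c : ℝ) (f : C(T2, ℂ)) : ℝ := ∑' k, ‖cf f k‖ ^ 2 / om c k

lemma hasSum_dual {c : ℝ} (hc : 0 < c) (f : C(T2, ℂ)) :
    HasSum (fun k => ‖cf f k‖ ^ 2 / om c k) (∫ t, conj (f t) * res c f t).re := by
  have h := Complex.hasSum_re (parseval f (res c f))
  convert h using 1
  ext k
  rw [cf_res hc, mul_div_assoc', Complex.conj_mul', ← Complex.ofReal_pow, ← Complex.ofReal_div,
    Complex.ofReal_re]

lemma dual_eq {c : ℝ} (hc : 0 < c) (f : C(T2, ℂ)) :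
    dual c f = ∫ t, (conj (f t) * res c f t).re := by
  rw [dual, (hasSum_dual hc f).tsum_eq]
  exact (integral_re (f := fun t => conj (f t) * res c f t) (cont_integrable (by fun_prop))).symm

/-- Monotonicity of the dual energy under domination `|h| ≤ f`, a consequence of the positivity of the
resolvent. -/
lemma dual_mono {c : ℝ} (hc : 0 < c) {f h : C(T2, ℂ)} (hf : ∀ t, ‖h t‖ ≤ (f t).re)
    (hf0 : ∀ t, (f t).im = 0) : dual c h ≤ dual c f := by
  rw [dual_eq hc, dual_eq hc]
  refine integral_mono (cont_integrable (by fun_prop)) (cont_integrable (by fun_prop)) fun t => ?_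
  calc (conj (h t) * res c h t).re ≤ ‖conj (h t) * res c h t‖ := Complex.re_le_norm _
    _ = ‖h t‖ * ‖res c h t‖ := by rw [norm_mul, Complex.norm_conj]
    _ ≤ (f t).re * (res c f t).re :=
      mul_le_mul (hf t) (norm_res_le_res hc hf t) (norm_nonneg _) ((norm_nonneg _).trans (hf t))
    _ = _ := by simp [hf0 t]

lemma F_nonneg (p : ℕ) (φ : C(T2, ℂ)) : 0 ≤ F p φ := integral_nonneg fun t => by positivity

/-- Duality: `F(φ) = ⟨φ, |φ|^p φ⟩` is at most the energy norm of `φ` times the dual norm of `|φ|^p φ`,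
and the latter is at most the dual norm of `|φ|^{p+1}`. -/
lemma F_sq_le {c : ℝ} (hc : 0 < c) {p : ℕ} {φ : C(T2, ℂ)} (hφ : Adm c φ) (hF : 0 < F p φ) :
    F p φ ^ 2 ≤ dual c (fp p φ) := by
  have h1 : HasSum (fun k => (conj (cf φ k) * cf (hp p φ) k).re) (F p φ) := by
    have h := Complex.hasSum_re (parseval φ (hp p φ))
    convert h using 1
    have e : ∀ t, conj (φ t) * hp p φ t = ((‖φ t‖ ^ (p + 2) : ℝ) : ℂ) := by
      intro t
      simp only [hp, ContinuousMap.coe_mk]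
      rw [mul_left_comm, Complex.conj_mul']
      push_cast; ring
    simp only [e]
    rw [integral_complex_ofReal, Complex.ofReal_re, F]
  have hsd := (hasSum_dual hc (hp p φ)).summable
  have h2 : F p φ ≤ (F p φ * en c (cf φ) + dual c (hp p φ) / F p φ) / 2 := by
    have hR := ((hφ.summE.hasSum.mul_left (F p φ)).add (hsd.hasSum.div_const (F p φ))).div_const 2
    refine hasSum_le (fun k => ?_) h1 hR
    have ho := om_pos hc k
    refine (Complex.re_le_norm _).trans ?_
    rw [norm_mul, Complex.norm_conj]
    set a := ‖cf φ k‖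
    set b := ‖cf (hp p φ) k‖
    have e : F p φ * (om c k * a ^ 2) + b ^ 2 / om c k / F p φ - 2 * (a * b) =
        (F p φ * om c k * a - b) ^ 2 / (om c k * F p φ) := by
      field_simp; ring
    have : 0 ≤ (F p φ * om c k * a - b) ^ 2 / (om c k * F p φ) := by positivity
    linarith
  have h3 : dual c (hp p φ) ≤ dual c (fp p φ) := by
    refine dual_mono hc (fun t => ?_) (fun t => ?_)
    · simp only [hp, fp, ContinuousMap.coe_mk, Complex.ofReal_re, norm_mul, Complex.norm_real,
        norm_pow, norm_norm]
      exact (pow_succ _ _).ge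
    · simp [fp, -Complex.ofReal_pow]
  have h4 := mul_le_mul_of_nonneg_left hφ.le_one hF.le
  have h5 : F p φ ≤ dual c (hp p φ) / F p φ := by linarith
  rw [le_div_iff₀ hF] at h5
  nlinarith

/-- The improvement map: the multiple of `(c - Δ)⁻¹ |φ|^{p+1}` that has energy one. -/
def imp (c : ℝ) (p : ℕ) (φ : C(T2, ℂ)) : C(T2, ℂ) :=
  (((√(dual c (fp p φ)))⁻¹ : ℝ) : ℂ) • res c (fp p φ)

lemma cf_imp {c : ℝ} (hc : 0 < c) (p : ℕ) (φ : C(T2, ℂ)) (k : Z2) :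
    cf (imp c p φ) k = (((√(dual c (fp p φ)))⁻¹ : ℝ) : ℂ) * cf (fp p φ) k / om c k := by
  rw [imp, cf_smul, cf_res hc, mul_div_assoc]

lemma imp_nonneg {c : ℝ} (hc : 0 < c) (p : ℕ) (φ : C(T2, ℂ)) (t : T2) :
    imp c p φ t = (‖imp c p φ t‖ : ℝ) := by
  have h1 := res_re_nonneg hc (f := fp p φ) (fun t => by
    simp only [fp, ContinuousMap.coe_mk, Complex.ofReal_re]; positivity) t
  have h2 := res_im_zero hc (f := fp p φ) (fun t => by
    simp [fp, -Complex.ofReal_pow]) t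
  have h3 : res c (fp p φ) t = ((res c (fp p φ) t).re : ℂ) := Complex.ext (by simp) (by simp [h2])
  simp only [imp, ContinuousMap.smul_apply, smul_eq_mul]
  rw [h3, ← Complex.ofReal_mul, Complex.norm_real, Real.norm_of_nonneg (by positivity)]

lemma hasSum_en_imp {c : ℝ} (hc : 0 < c) {p : ℕ} {φ : C(T2, ℂ)} (hD : 0 < dual c (fp p φ)) :
    HasSum (fun k => om c k * ‖cf (imp c p φ) k‖ ^ 2) 1 := by
  have h := (hasSum_dual hc (fp p φ)).summable.hasSum.mul_left (dual c (fp p φ))⁻¹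
  have e : (dual c (fp p φ))⁻¹ * dual c (fp p φ) = 1 := inv_mul_cancel₀ hD.ne'
  rw [show ∑' k, ‖cf (fp p φ) k‖ ^ 2 / om c k = dual c (fp p φ) from rfl, e] at h
  refine h.congr_fun fun k => ?_
  have ho := om_pos hc k
  rw [cf_imp hc, norm_div, norm_mul, Complex.norm_real, Complex.norm_real,
    Real.norm_of_nonneg (by positivity), Real.norm_of_nonneg ho.le, div_pow, mul_pow, inv_pow,
    Real.sq_sqrt hD.le]
  field_simp

lemma adm_imp {c : ℝ} (hc : 0 < c) {p : ℕ} {φ : C(T2, ℂ)} (hs : IsSym φ)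
    (hD : 0 < dual c (fp p φ)) : Adm c (imp c p φ) where
  summ := by
    simp only [cf_imp hc, mul_div_assoc, norm_mul]
    exact (summable_res hc (fp p φ)).mul_left _
  summE := (hasSum_en_imp hc hD).summable
  le_one := (hasSum_en_imp hc hD).tsum_eq.le
  sym := by
    have h1 : IsSym (fp p φ) := fun i t => by simp [fp, hs i t]
    have h2 : IsSym (res c (fp p φ)) := ser_sym (summable_res hc _) fun i k => by
      rw [cf_reflZ h1, om_reflZ]
    intro i t
    simp [imp, h2 i t]

/-- The tangent-line inequality for the convex function `x ↦ x^{n+1}` on `[0, ∞)`. -/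
lemma bernoulli {a b : ℝ} (ha : 0 ≤ a) (hb : 0 ≤ b) (n : ℕ) :
    a ^ (n + 1) + (n + 1) * a ^ n * (b - a) ≤ b ^ (n + 1) := by
  induction n with
  | zero => simp
  | succ n ih =>
    have h := mul_le_mul_of_nonneg_right ih hb
    rw [pow_succ b]
    refine le_trans ?_ h
    have : 0 ≤ (n + 1) * a ^ n * (b - a) ^ 2 := by positivity
    push_cast
    rw [pow_succ a (n + 1), pow_succ a n]
    nlinarith

/-- The improvement map increases `F`, quantitatively: `F` is convex, `∫ |φ|^{p+1} imp φ` is the dual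
norm `√D` of `|φ|^{p+1}`, and `F φ ≤ √D` for admissible `φ` by `F_sq_le`. -/
lemma F_imp {c : ℝ} (hc : 0 < c) (p : ℕ) (φ : C(T2, ℂ)) :
    F p φ + (p + 2) * (√(dual c (fp p φ)) - F p φ) ≤ F p (imp c p φ) := by
  set D := dual c (fp p φ) with hDdef
  have h1 : ∫ t, ‖φ t‖ ^ (p + 1) * ‖imp c p φ t‖ = √D := by
    have e : ∀ t, ‖φ t‖ ^ (p + 1) * ‖imp c p φ t‖ =
        (√D)⁻¹ * (conj (fp p φ t) * res c (fp p φ) t).re := by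
      intro t
      have h2 : ‖imp c p φ t‖ = (imp c p φ t).re := by
        conv_rhs => rw [imp_nonneg hc, Complex.ofReal_re]
      rw [h2]
      have h3 : conj (fp p φ t) = ((‖φ t‖ ^ (p + 1) : ℝ) : ℂ) := Complex.conj_ofReal _
      rw [h3, imp, ← hDdef, ContinuousMap.smul_apply, smul_eq_mul, Complex.re_ofReal_mul,
        Complex.re_ofReal_mul]
      ring
    simp only [e]
    rw [integral_const_mul, ← dual_eq hc, ← hDdef]
    rw [inv_mul_eq_div, Real.div_sqrt]
  have h2 : ∫ t, (‖φ t‖ ^ (p + 2) + (p + 2) * (‖φ t‖ ^ (p + 1) * ‖imp c p φ t‖ - ‖φ t‖ ^ (p + 2))) =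
      F p φ + (p + 2) * (√D - F p φ) := by
    rw [integral_add (cont_integrable (by fun_prop)) (cont_integrable (by fun_prop)),
      integral_const_mul, integral_sub (cont_integrable (by fun_prop)) (cont_integrable (by fun_prop)),
      h1, F]
  rw [← h2, F]
  refine integral_mono (cont_integrable (by fun_prop)) (cont_integrable (by fun_prop)) fun t => ?_
  have := bernoulli (norm_nonneg (φ t)) (norm_nonneg (imp c p φ t)) (p + 1)
  refine le_trans (le_of_eq ?_) this
  simp only
  push_cast
  ring

/-- The even moments are bounded on the admissible class. -/
lemma moment_bound {c : ℝ} (hc : 0 < c) (m : ℕ) : ∃ C : ℝ, 0 ≤ C ∧ ∀ φ : C(T2, ℂ), Adm c φ →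
    ∫ t, ‖φ t‖ ^ (2 * m) ≤ C := by
  obtain ⟨C, hC, h⟩ := sobolev hc m
  refine ⟨C, hC, fun φ hφ => ?_⟩
  have h1 := h (cf φ) hφ.summ hφ.summE
  rw [ser_cf hφ.summ] at h1
  have h2 : 0 ≤ en c (cf φ) := tsum_nonneg fun k => mul_nonneg (om_pos hc k).le (sq_nonneg _)
  have h3 : en c (cf φ) ^ m ≤ 1 := pow_le_one₀ h2 hφ.le_one
  nlinarith

lemma F_bound {c : ℝ} (hc : 0 < c) (p : ℕ) : ∃ C : ℝ, ∀ φ : C(T2, ℂ), Adm c φ → F p φ ≤ C := by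
  obtain ⟨C, hC, h⟩ := moment_bound hc (p + 2)
  refine ⟨1 + C, fun φ hφ => ?_⟩
  have h1 : F p φ ≤ ∫ t, (1 + ‖φ t‖ ^ (2 * (p + 2))) := by
    refine integral_mono (cont_integrable (by fun_prop)) (cont_integrable (by fun_prop)) fun t => ?_
    have : ‖φ t‖ ^ (2 * (p + 2)) = (‖φ t‖ ^ (p + 2)) ^ 2 := by rw [← pow_mul, mul_comm]
    simp only [this]
    nlinarith [sq_nonneg (‖φ t‖ ^ (p + 2) - 1), sq_nonneg (‖φ t‖ ^ (p + 2))]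
  rw [integral_add (cont_integrable (by fun_prop)) (cont_integrable (by fun_prop))] at h1
  simp only [integral_const, probReal_univ, smul_eq_mul, mul_one] at h1
  linarith [h φ hφ]

/-! ### Existence of a maximiser and the Euler–Lagrange equation -/

lemma summable_of_bdd {ι : Type*} {f : ι → ℝ} {K : ℝ} (hf : ∀ i, 0 ≤ f i)
    (h : ∀ s : Finset ι, ∑ i ∈ s, f i ≤ K) : Summable f ∧ ∑' i, f i ≤ K :=
  ⟨summable_of_sum_le hf h, (summable_of_sum_le hf h).tsum_le_of_sum_le h⟩

/-- The resolvent turns bounded, coefficientwise convergent sequences of `ℓ²` into convergent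
sequences of the Wiener algebra. -/
lemma tendsto_div_om {c K : ℝ} (hc : 0 < c) {g : ℕ → Z2 → ℂ} {g₀ : Z2 → ℂ}
    (hg : ∀ n, Summable fun k => ‖g n k‖ ^ 2) (hK : ∀ n, ∑' k, ‖g n k‖ ^ 2 ≤ K)
    (hlim : ∀ k, Tendsto (fun n => g n k) atTop (𝓝 (g₀ k))) :
    (Summable fun k => ‖g₀ k‖ ^ 2) ∧
      Tendsto (fun n => ∑' k, ‖g n k / om c k - g₀ k / om c k‖) atTop (𝓝 0) := by
  obtain ⟨hg0, hK0⟩ : (Summable fun k => ‖g₀ k‖ ^ 2) ∧ ∑' k, ‖g₀ k‖ ^ 2 ≤ K := by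
    refine summable_of_bdd (fun k => sq_nonneg _) fun s => ?_
    have h1 : Tendsto (fun n => ∑ k ∈ s, ‖g n k‖ ^ 2) atTop (𝓝 (∑ k ∈ s, ‖g₀ k‖ ^ 2)) :=
      tendsto_finsetSum s fun k _ => ((hlim k).norm.pow 2)
    exact le_of_tendsto h1 (Eventually.of_forall fun n =>
      ((hg n).sum_le_tsum s fun k _ => sq_nonneg _).trans (hK n))
  refine ⟨hg0, ?_⟩
  have hK' : 0 ≤ K := (tsum_nonneg fun k => sq_nonneg _).trans (hK 0)
  set x : ℕ → Z2 → ℝ := fun n k => ‖g n k - g₀ k‖ with hx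
  have hxb : ∀ n k, x n k ^ 2 ≤ 2 * ‖g n k‖ ^ 2 + 2 * ‖g₀ k‖ ^ 2 := by
    intro n k
    have h1 : x n k ≤ ‖g n k‖ + ‖g₀ k‖ := norm_sub_le _ _
    have h2 : 0 ≤ x n k := norm_nonneg _
    nlinarith [sq_nonneg (‖g n k‖ - ‖g₀ k‖)]
  have hxs : ∀ n, Summable fun k => x n k ^ 2 := fun n =>
    Summable.of_nonneg_of_le (fun k => sq_nonneg _) (hxb n) (((hg n).mul_left 2).add (hg0.mul_left 2))
  have hxK : ∀ n, ∑' k, x n k ^ 2 ≤ 4 * K := by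
    intro n
    have h1 := (hxs n).tsum_le_tsum (hxb n) (((hg n).mul_left 2).add (hg0.mul_left 2))
    rw [((hg n).mul_left 2).tsum_add (hg0.mul_left 2), tsum_mul_left, tsum_mul_left] at h1
    linarith [hK n]
  have e : ∀ n k, ‖g n k / om c k - g₀ k / om c k‖ = (om c k)⁻¹ * x n k := by
    intro n k
    rw [← sub_div, norm_div, Complex.norm_real, Real.norm_of_nonneg (om_pos hc k).le,
      div_eq_inv_mul]
  simp only [e]
  have hnn : ∀ n k, 0 ≤ (om c k)⁻¹ * x n k := fun n k =>
    mul_nonneg (inv_nonneg.mpr (om_pos hc k).le) (norm_nonneg _)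
  rw [Metric.tendsto_nhds]
  intro δ hδ
  set ε := δ / (2 * (4 * K + 1)) with hε
  have hε0 : 0 < ε := by positivity
  -- the part of `x / om` not absorbed by `ε x²` is dominated by `om⁻² / (4 ε)`
  set r : ℕ → Z2 → ℝ := fun n k => max ((om c k)⁻¹ * x n k - ε * x n k ^ 2) 0 with hr
  have hr0 : ∀ n k, 0 ≤ r n k := fun n k => le_max_right _ _
  have hrb : ∀ n k, r n k ≤ (om c k ^ 2)⁻¹ * (4 * ε)⁻¹ := by
    intro n k
    have ho := om_pos hc k
    refine max_le ?_ (by positivity)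
    have : (om c k ^ 2)⁻¹ * (4 * ε)⁻¹ - ((om c k)⁻¹ * x n k - ε * x n k ^ 2) =
        ((om c k)⁻¹ - 2 * ε * x n k) ^ 2 * (4 * ε)⁻¹ := by field_simp; ring
    have h2 : 0 ≤ ((om c k)⁻¹ - 2 * ε * x n k) ^ 2 * (4 * ε)⁻¹ := by positivity
    linarith
  have hbs : Summable fun k => (om c k ^ 2)⁻¹ * (4 * ε)⁻¹ := (summable_om hc).mul_right _
  have hrs : ∀ n, Summable (r n) := fun n => Summable.of_nonneg_of_le (hr0 n) (hrb n) hbs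
  have hxl : ∀ k, Tendsto (fun n => x n k) atTop (𝓝 0) := fun k => by
    have := ((hlim k).sub_const (g₀ k)).norm
    simpa using this
  have hrl : Tendsto (fun n => ∑' k, r n k) atTop (𝓝 0) := by
    have := tendsto_tsum_of_dominated_convergence (f := r) (g := fun _ => (0 : ℝ)) hbs
      (fun k => by
        have h1 := (((hxl k).const_mul (om c k)⁻¹).sub (((hxl k).pow 2).const_mul ε)).max
          (tendsto_const_nhds (x := (0 : ℝ)))
        simpa using h1)
      (Eventually.of_forall fun n k => by
        rw [Real.norm_of_nonneg (hr0 n k)]; exact hrb n k)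
    simpa using this
  filter_upwards [hrl.eventually (gt_mem_nhds (half_pos hδ))] with n hn
  have hle : ∀ k, (om c k)⁻¹ * x n k ≤ ε * x n k ^ 2 + r n k := fun k => by
    have := le_max_left ((om c k)⁻¹ * x n k - ε * x n k ^ 2) 0
    simp only [hr]
    linarith
  have hs1 := ((hxs n).mul_left ε).add (hrs n)
  have hs2 : Summable fun k => (om c k)⁻¹ * x n k := Summable.of_nonneg_of_le (hnn n) hle hs1
  rw [dist_zero_right, Real.norm_of_nonneg (tsum_nonneg (hnn n))]
  refine (hs2.tsum_le_tsum hle hs1).trans_lt ?_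
  rw [((hxs n).mul_left ε).tsum_add (hrs n), tsum_mul_left]
  have h1 : ε * ∑' k, x n k ^ 2 ≤ δ / 2 := by
    have h2 : ε * ∑' k, x n k ^ 2 ≤ ε * (4 * K + 1) := by
      gcongr
      linarith [hxK n]
    refine h2.trans (le_of_eq ?_)
    rw [hε]; field_simp
  linarith

/-- The constant function `1 / √c` is admissible. -/
lemma exists_adm_pos {c : ℝ} (hc : 0 < c) (p : ℕ) : ∃ φ, Adm c φ ∧ 0 < F p φ := by
  set s : ℂ := (((√c)⁻¹ : ℝ) : ℂ) with hs
  set a : Z2 → ℂ := fun k => if k = 0 then s else 0 with ha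
  have ha0 : ∀ k ∉ ({0} : Finset Z2), a k = 0 := fun k hk => by
    simp only [Finset.mem_singleton] at hk
    simp [ha, hk]
  have hsum := summable_finset {0} a ha0
  have hcf : cf (ser a) = a := funext (cf_ser hsum)
  have hv : ∀ t, ser a t = s := fun t => by
    rw [ser_finset_apply {0} a ha0]
    simp [ha, mFourier_zero]
  have hn : ‖s‖ = (√c)⁻¹ := by
    rw [hs, Complex.norm_real, Real.norm_of_nonneg (by positivity)]
  refine ⟨ser a, ⟨by rwa [hcf], ?_, ?_, fun i t => by rw [hv, hv]⟩, ?_⟩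
  · rw [hcf]
    exact summable_of_ne_finset_zero (s := {0}) fun k hk => by simp [ha0 k hk]
  · rw [hcf, en_finset {0} a ha0]
    simp only [Finset.sum_singleton, ha, if_true, hn, inv_pow, Real.sq_sqrt hc.le]
    simp [om, hc.ne']
  · simp only [F, hv, hn, integral_const, probReal_univ, one_smul]
    positivity

/-- There is a nonnegative maximiser of `F` in the admissible class. It is the limit of a subsequence
of the improvements of a maximising sequence. -/
lemma exists_max {c : ℝ} (hc : 0 < c) (p : ℕ) : ∃ v : C(T2, ℂ), Adm c v ∧ 0 < F p v ∧
    (∀ φ, Adm c φ → F p φ ≤ F p v) ∧ ∀ t, v t = (‖v t‖ : ℝ) := by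
  obtain ⟨φ₀, hφ₀, hF₀⟩ := exists_adm_pos hc p
  obtain ⟨B, hB⟩ := F_bound hc p
  set S : Set ℝ := {x | ∃ φ, Adm c φ ∧ F p φ = x} with hS
  have hbdd : BddAbove S := ⟨B, by rintro _ ⟨φ, h, rfl⟩; exact hB φ h⟩
  have hne : S.Nonempty := ⟨_, φ₀, hφ₀, rfl⟩
  set M := sSup S with hM
  have hle : ∀ φ, Adm c φ → F p φ ≤ M := fun φ h => le_csSup hbdd ⟨φ, h, rfl⟩
  have hM0 : 0 < M := hF₀.trans_le (hle _ hφ₀)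
  obtain ⟨u, hmono, hu, huS⟩ := exists_seq_tendsto_sSup hne hbdd
  obtain ⟨N, hN⟩ := (hu.eventually (lt_mem_nhds (half_lt_self hM0))).exists
  choose ψ hψ hFψ using huS
  -- a maximising sequence with `F > M / 2` throughout
  set φ : ℕ → C(T2, ℂ) := fun n => ψ (n + N) with hφdef
  have hφ : ∀ n, Adm c (φ n) := fun n => hψ _
  have hFl : Tendsto (fun n => F p (φ n)) atTop (𝓝 M) := by
    simp only [hφdef, hFψ]
    exact hu.comp (tendsto_add_atTop_nat N)
  have hFM : ∀ n, M / 2 < F p (φ n) := fun n => by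
    simp only [hφdef, hFψ]
    exact hN.trans_le (hmono (Nat.le_add_left N n))
  have hFpos : ∀ n, 0 < F p (φ n) := fun n => (half_pos hM0).trans (hFM n)
  set D : ℕ → ℝ := fun n => dual c (fp p (φ n)) with hD
  have hFD : ∀ n, F p (φ n) ^ 2 ≤ D n := fun n => F_sq_le hc (hφ n) (hFpos n)
  have hDpos : ∀ n, 0 < D n := fun n => (pow_pos (hFpos n) 2).trans_le (hFD n)
  have hDM : ∀ n, (M / 2) ^ 2 ≤ D n := fun n =>
    (pow_le_pow_left₀ (half_pos hM0).le (hFM n).le 2).trans (hFD n)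
  -- the improved sequence `w` is still maximising
  set w : ℕ → C(T2, ℂ) := fun n => imp c p (φ n) with hw
  have hwA : ∀ n, Adm c (w n) := fun n => adm_imp hc (hφ n).sym (hDpos n)
  have hFw : Tendsto (fun n => F p (w n)) atTop (𝓝 M) := by
    refine tendsto_of_tendsto_of_tendsto_of_le_of_le hFl tendsto_const_nhds (fun n => ?_)
      (fun n => hle _ (hwA n))
    have h1 := F_imp hc p (φ n)
    have h2 : F p (φ n) ≤ √(D n) := Real.le_sqrt_of_sq_le (hFD n)
    have h3 : 0 ≤ (p + 2 : ℝ) * (√(D n) - F p (φ n)) :=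
      mul_nonneg (by positivity) (sub_nonneg.mpr h2)
    simp only [hw]
    linarith
  -- `w n` is the resolvent of a sequence bounded in `ℓ²`, so a subsequence converges in the Wiener
  -- algebra
  obtain ⟨C, hC0, hC⟩ := moment_bound hc (p + 1)
  set g : ℕ → Z2 → ℂ := fun n k => (((√(D n))⁻¹ : ℝ) : ℂ) * cf (fp p (φ n)) k with hg
  have hcfw : ∀ n k, cf (w n) k = g n k / om c k := fun n k => cf_imp hc p (φ n) k
  set K := ((M / 2) ^ 2)⁻¹ * C with hKdef
  have hgs : ∀ n, HasSum (fun k => ‖g n k‖ ^ 2) ((D n)⁻¹ * ∫ t, ‖φ n t‖ ^ (2 * (p + 1))) := by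
    intro n
    have h1 := (parseval_sq (fp p (φ n))).mul_left (D n)⁻¹
    have e1 : ∀ t, ‖fp p (φ n) t‖ ^ 2 = ‖φ n t‖ ^ (2 * (p + 1)) := fun t => by
      simp only [fp, ContinuousMap.coe_mk, Complex.norm_real, norm_pow, norm_norm]
      rw [← pow_mul, mul_comm]
    simp only [e1] at h1
    refine h1.congr_fun fun k => ?_
    simp only [hg]
    rw [norm_mul, mul_pow, Complex.norm_real, Real.norm_of_nonneg (by positivity), inv_pow,
      Real.sq_sqrt (hDpos n).le]
  have hgK : ∀ n, ∑' k, ‖g n k‖ ^ 2 ≤ K := fun n => by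
    rw [(hgs n).tsum_eq, hKdef]
    have := hDM n
    have := hC _ (hφ n)
    have : 0 ≤ ∫ t, ‖φ n t‖ ^ (2 * (p + 1)) := integral_nonneg fun t => by positivity
    gcongr
  have hK0 : 0 ≤ K := by positivity
  obtain ⟨g₀, -, σ, hσ, hlim⟩ := (isCompact_univ_pi fun _ : Z2 =>
    isCompact_closedBall (0 : ℂ) (√K)).tendsto_subseq (x := g) (fun n k _ => by
      rw [mem_closedBall_zero_iff]
      exact Real.le_sqrt_of_sq_le
        (((hgs n).summable.le_tsum k fun j _ => sq_nonneg _).trans (hgK n)))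
  rw [tendsto_pi_nhds] at hlim
  obtain ⟨hg0, hconv⟩ := tendsto_div_om hc (g := fun n => g (σ n)) (fun n => (hgs _).summable)
    (fun n => hgK _) hlim
  have hs0 := summable_div_om hc hg0
  set v := ser fun k => g₀ k / om c k with hv
  have hcfv : ∀ k, cf v k = g₀ k / om c k := cf_ser hs0
  have hwv : Tendsto (fun n => w (σ n)) atTop (𝓝 v) := by
    rw [tendsto_iff_norm_sub_tendsto_zero]
    refine squeeze_zero (fun n => norm_nonneg _) (fun n => ?_) hconv
    have hs1 : Summable fun k => ‖g (σ n) k / om c k‖ := summable_div_om hc (hgs _).summable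
    have e1 : w (σ n) = ser fun k => g (σ n) k / om c k := by
      rw [← ser_cf (hwA (σ n)).summ]
      congr 1
      exact funext (hcfw _)
    rw [e1, hv, ← ser_sub hs1 hs0]
    refine norm_ser_le (Summable.of_nonneg_of_le (fun _ => norm_nonneg _)
      (fun k => norm_sub_le _ _) (hs1.add hs0))
  have hpt : ∀ t, Tendsto (fun n => w (σ n) t) atTop (𝓝 (v t)) := fun t =>
    ((continuous_eval_const t).tendsto v).comp hwv
  have hFv : F p v = M := by
    have h1 := ((continuous_integral_pow (p + 2)).tendsto v).comp hwv
    exact tendsto_nhds_unique h1 (hFw.comp hσ.tendsto_atTop)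
  obtain ⟨hE1, hE2⟩ : (Summable fun k => om c k * ‖cf v k‖ ^ 2) ∧
      ∑' k, om c k * ‖cf v k‖ ^ 2 ≤ 1 := by
    refine summable_of_bdd (fun k => mul_nonneg (om_pos hc k).le (sq_nonneg _)) fun s => ?_
    have h1 : Tendsto (fun n => ∑ k ∈ s, om c k * ‖cf (w (σ n)) k‖ ^ 2) atTop
        (𝓝 (∑ k ∈ s, om c k * ‖cf v k‖ ^ 2)) := by
      refine tendsto_finsetSum s fun k _ => (Tendsto.pow (Tendsto.norm ?_) 2).const_mul _
      exact ((cfL k).continuous.tendsto v).comp hwv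
    exact le_of_tendsto h1 (Eventually.of_forall fun n =>
      ((hwA (σ n)).summE.sum_le_tsum s fun k _ =>
        mul_nonneg (om_pos hc k).le (sq_nonneg _)).trans (hwA (σ n)).le_one)
  refine ⟨v, ⟨?_, hE1, hE2, fun i t => ?_⟩, by rwa [hFv], by rwa [hFv], fun t => ?_⟩
  · simpa only [hcfv] using hs0
  · refine tendsto_nhds_unique (hpt _) ((hpt t).congr fun n => ?_)
    exact ((hwA (σ n)).sym i t).symm
  · refine tendsto_nhds_unique (hpt t) ?_
    have h1 := (Complex.continuous_ofReal.tendsto _).comp (hpt t).norm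
    exact h1.congr fun n => (imp_nonneg hc p (φ (σ n)) t).symm

/-- A nonnegative maximiser is a fixed point of the improvement map, which is the Euler–Lagrange
equation `(c - Δ) v = s v^{p+1}`, and it has energy one: equality in `F_imp` forces
`√D = F v`, whence the energy norm of `imp v - v` vanishes. -/
lemma fixed_point {c : ℝ} (hc : 0 < c) {p : ℕ} {v : C(T2, ℂ)} (hv : Adm c v) (hF : 0 < F p v)
    (hpos : ∀ t, v t = (‖v t‖ : ℝ)) (hmax : ∀ φ, Adm c φ → F p φ ≤ F p v) : imp c p v = v ∧ en c (cf v) = 1 := by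
  have hFD := F_sq_le hc hv hF
  have hD : 0 < dual c (fp p v) := (pow_pos hF 2).trans_le hFD
  have h1 := F_imp hc p v
  have h2 := hmax _ (adm_imp hc hv.sym hD)
  have h3 : F p v ≤ √(dual c (fp p v)) := Real.le_sqrt_of_sq_le hFD
  have h4 : √(dual c (fp p v)) = F p v := by
    have : (0 : ℝ) < p + 2 := by positivity
    nlinarith
  -- the energy inner product of `imp c p v` and `v` equals `F(v)⁻¹ ∫ |v|^{p+1} v`, that is, one
  have h5 : HasSum (fun k => om c k * (conj (cf (imp c p v) k) * cf v k).re) 1 := by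
    have h := (Complex.hasSum_re (parseval (fp p v) v)).mul_left (F p v)⁻¹
    have e1 : ∀ t, conj (fp p v t) * v t = ((‖v t‖ ^ (p + 2) : ℝ) : ℂ) := fun t => by
      have h3 : conj (fp p v t) = ((‖v t‖ ^ (p + 1) : ℝ) : ℂ) := Complex.conj_ofReal _
      rw [h3]
      conv_lhs => rw [hpos t]
      rw [← Complex.ofReal_mul, Complex.norm_real, norm_norm, ← pow_succ]
    simp only [e1] at h
    rw [integral_complex_ofReal, Complex.ofReal_re, ← F, inv_mul_cancel₀ hF.ne'] at h
    refine h.congr_fun fun k => ?_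
    have ho := om_pos hc k
    have ho' : (om c k : ℂ) ≠ 0 := by exact_mod_cast ho.ne'
    rw [cf_imp hc, h4, ← Complex.re_ofReal_mul, ← Complex.re_ofReal_mul]
    congr 1
    rw [map_div₀, map_mul, Complex.conj_ofReal, Complex.conj_ofReal]
    field_simp
  have h6 := ((hasSum_en_imp hc hD).sub (h5.mul_left 2)).add hv.summE.hasSum
  have e2 : ∀ k, om c k * ‖cf (imp c p v) k - cf v k‖ ^ 2 =
      om c k * ‖cf (imp c p v) k‖ ^ 2 - 2 * (om c k * (conj (cf (imp c p v) k) * cf v k).re) +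
        om c k * ‖cf v k‖ ^ 2 := by
    intro k
    rw [Complex.sq_norm, Complex.sq_norm, Complex.sq_norm, Complex.normSq_apply,
      Complex.normSq_apply, Complex.normSq_apply]
    simp only [Complex.sub_re, Complex.sub_im, Complex.mul_re, Complex.conj_re, Complex.conj_im]
    ring
  simp only [← e2] at h6
  have hnn : ∀ k, 0 ≤ om c k * ‖cf (imp c p v) k - cf v k‖ ^ 2 := fun k =>
    mul_nonneg (om_pos hc k).le (sq_nonneg _)
  have h7 : 1 - 2 * 1 + ∑' k, om c k * ‖cf v k‖ ^ 2 = 0 :=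
    le_antisymm (by linarith [hv.le_one, show en c (cf v) = ∑' k, om c k * ‖cf v k‖ ^ 2 from rfl])
      (h6.nonneg hnn)
  rw [h7, hasSum_zero_iff_of_nonneg hnn] at h6
  have h8 : cf (imp c p v) = cf v := by
    funext k
    have := congrFun h6 k
    simp only [Pi.zero_apply, mul_eq_zero, (om_pos hc k).ne', false_or] at this
    exact sub_eq_zero.mp (norm_eq_zero.mp (pow_eq_zero_iff two_ne_zero |>.mp this))
  exact ⟨cf_injective (adm_imp hc hv.sym hD).summ h8, by rw [en]; linarith⟩

/-! ### Regularity -/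

/-- A submultiplicative weight on frequencies. -/
def wt (k : Z2) : ℝ := 1 + |(k 0 : ℝ)| + |(k 1 : ℝ)|

lemma one_le_wt (k : Z2) : 1 ≤ wt k := by
  unfold wt; linarith [abs_nonneg (k 0 : ℝ), abs_nonneg (k 1 : ℝ)]

lemma wt_add_le (j k : Z2) : wt (j + k) ≤ wt j * wt k := by
  unfold wt
  simp only [Pi.add_apply, Int.cast_add]
  have h0 := abs_add_le (j 0 : ℝ) (k 0)
  have h1 := abs_add_le (j 1 : ℝ) (k 1)
  have a := abs_nonneg (j 0 : ℝ)
  have b := abs_nonneg (j 1 : ℝ)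
  have c := abs_nonneg (k 0 : ℝ)
  have d := abs_nonneg (k 1 : ℝ)
  nlinarith [mul_nonneg a c, mul_nonneg a d, mul_nonneg b c, mul_nonneg b d]

/-- Summability of the Fourier coefficients against the `n`-th power of the weight. -/
def Wn (n : ℕ) (φ : C(T2, ℂ)) : Prop := Summable fun k => wt k ^ n * ‖cf φ k‖

lemma Wn.zero {n : ℕ} {φ : C(T2, ℂ)} (h : Wn n φ) : Summable fun k => ‖cf φ k‖ :=
  Summable.of_nonneg_of_le (fun _ => norm_nonneg _) (fun k =>
    le_mul_of_one_le_left (norm_nonneg _) (one_le_pow₀ (one_le_wt k))) h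

/-- The weighted Wiener classes are algebras. -/
lemma Wn.mul {n : ℕ} {φ ψ : C(T2, ℂ)} (hφ : Wn n φ) (hψ : Wn n ψ) : Wn n (φ * ψ) := by
  obtain ⟨a, ha⟩ : ∃ a, a = cf φ := ⟨_, rfl⟩
  obtain ⟨b, hb⟩ : ∃ b, b = cf ψ := ⟨_, rfl⟩
  have hφ0 : Summable fun k => ‖a k‖ := ha ▸ hφ.zero
  have hψ0 : Summable fun k => ‖b k‖ := hb ▸ hψ.zero
  have hφn : Summable fun k => wt k ^ n * ‖a k‖ := ha ▸ hφ
  have hψn : Summable fun k => wt k ^ n * ‖b k‖ := hb ▸ hψ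
  -- `φ ψ` is the absolutely convergent double series of products of exponentials
  have hprod : HasSum (fun x : Z2 × Z2 => (a x.1 * b x.2) • (mFourier (x.1 + x.2) : C(T2, ℂ)))
      (φ * ψ) := by
    have hab : Summable fun x : Z2 × Z2 => ‖a x.1‖ * ‖b x.2‖ :=
      Summable.mul_of_nonneg (f := fun k => ‖a k‖) (g := fun k => ‖b k‖) hφ0 hψ0 (fun _ => norm_nonneg _) (fun _ => norm_nonneg _)
    have hsum : Summable fun x : Z2 × Z2 =>
        (a x.1 * b x.2) • (mFourier (x.1 + x.2) : C(T2, ℂ)) := by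
      refine Summable.of_norm ?_
      simpa only [norm_smul, mFourier_norm, mul_one, norm_mul] using hab
    have hχ : ∑' x : Z2 × Z2, (a x.1 * b x.2) • (mFourier (x.1 + x.2) : C(T2, ℂ)) = φ * ψ := by
      ext t
      have h0 : HasSum (fun x : Z2 × Z2 => (a x.1 * b x.2) * mFourier (x.1 + x.2) t) _ :=
        (ContinuousMap.evalCLM ℂ t).hasSum hsum.hasSum
      have h1 := hasSum_ser_apply hφ0 t
      have h2 := hasSum_ser_apply hψ0 t
      rw [ha, ser_cf hφ.zero, ← ha] at h1
      rw [hb, ser_cf hψ.zero, ← hb] at h2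
      refine h0.unique ((h1.mul h2 (Summable.of_norm ?_)).congr_fun fun x => ?_)
      · simpa only [norm_mul, norm_mFourier_apply, mul_one] using hab
      · rw [mFourier_add]; ring
    exact hχ ▸ hsum.hasSum
  have hcf : ∀ k, HasSum (fun x : Z2 × Z2 => if x.1 + x.2 = k then a x.1 * b x.2 else 0)
      (cf (φ * ψ) k) := by
    intro k
    have h := (cfL k).hasSum hprod
    simp only [map_smul, cfL_apply, cf_mFourier] at h
    refine h.congr_fun fun x => ?_
    simp
  have hdom : Summable fun x : Z2 × Z2 => (wt x.1 ^ n * ‖a x.1‖) * (wt x.2 ^ n * ‖b x.2‖) :=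
    Summable.mul_of_nonneg (f := fun k => wt k ^ n * ‖a k‖) (g := fun k => wt k ^ n * ‖b k‖)
      hφn hψn (fun k => by have := one_le_wt k; positivity)
      (fun k => by have := one_le_wt k; positivity)
  have hpt : ∀ x : Z2 × Z2, wt (x.1 + x.2) ^ n * ‖a x.1 * b x.2‖ ≤
      (wt x.1 ^ n * ‖a x.1‖) * (wt x.2 ^ n * ‖b x.2‖) := by
    intro x
    have h0 : 0 ≤ wt (x.1 + x.2) := zero_le_one.trans (one_le_wt _)
    have h1 := pow_le_pow_left₀ h0 (wt_add_le x.1 x.2) n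
    rw [mul_pow] at h1
    rw [norm_mul]
    calc _ ≤ (wt x.1 ^ n * wt x.2 ^ n) * (‖a x.1‖ * ‖b x.2‖) := by gcongr
      _ = _ := by ring
  refine (summable_of_bdd (fun k => by have := one_le_wt k; positivity)
    (K := ∑' x : Z2 × Z2, (wt x.1 ^ n * ‖a x.1‖) * (wt x.2 ^ n * ‖b x.2‖)) fun s => ?_).1
  set G : Z2 → Z2 × Z2 → ℝ := fun k x =>
    if x.1 + x.2 = k then wt k ^ n * ‖a x.1 * b x.2‖ else 0 with hG
  have hG0 : ∀ k x, 0 ≤ G k x := fun k x => by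
    have := one_le_wt k
    simp only [hG]; split_ifs <;> positivity
  have hGle : ∀ k x, G k x ≤ (wt x.1 ^ n * ‖a x.1‖) * (wt x.2 ^ n * ‖b x.2‖) := fun k x => by
    have h1 := one_le_wt x.1
    have h2 := one_le_wt x.2
    simp only [hG]; split_ifs with h
    · rw [← h]; exact hpt x
    · positivity
  have hGs : ∀ k, Summable (G k) := fun k => Summable.of_nonneg_of_le (hG0 k) (hGle k) hdom
  have h1 : ∀ k, wt k ^ n * ‖cf (φ * ψ) k‖ ≤ ∑' x, G k x := by
    intro k
    have hw : 0 ≤ wt k ^ n := by have := one_le_wt k; positivity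
    have h2 := (hcf k).mul_left ((wt k ^ n : ℝ) : ℂ)
    have h3 : ‖((wt k ^ n : ℝ) : ℂ) * cf (φ * ψ) k‖ = wt k ^ n * ‖cf (φ * ψ) k‖ := by
      rw [norm_mul, Complex.norm_real, Real.norm_of_nonneg hw]
    rw [← h3, ← h2.tsum_eq]
    refine tsum_of_norm_bounded (hGs k).hasSum fun x => ?_
    simp only [hG]
    rw [norm_mul, Complex.norm_real, Real.norm_of_nonneg hw]
    split_ifs <;> simp
  calc ∑ k ∈ s, wt k ^ n * ‖cf (φ * ψ) k‖ ≤ ∑ k ∈ s, ∑' x, G k x :=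
        Finset.sum_le_sum fun k _ => h1 k
    _ = ∑' x, ∑ k ∈ s, G k x := (Summable.tsum_finsetSum fun k _ => hGs k).symm
    _ ≤ _ := by
      refine Summable.tsum_le_tsum (fun x => ?_) (summable_sum fun k _ => hGs k) hdom
      have e : ∑ k ∈ s, G k x ≤ G (x.1 + x.2) x := by
        by_cases hx : x.1 + x.2 ∈ s
        · rw [Finset.sum_eq_single_of_mem _ hx fun k _ hk => by simp [hG, Ne.symm hk]]
        · rw [Finset.sum_eq_zero fun k hk => ?_]
          · exact hG0 _ _
          · have : x.1 + x.2 ≠ k := fun h => hx (h ▸ hk)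
            simp [hG, this]
      exact e.trans (hGle _ _)

lemma Wn.pow {n : ℕ} {φ : C(T2, ℂ)} (hφ : Wn n φ) (m : ℕ) : Wn n (φ ^ (m + 1)) := by
  induction m with
  | zero => simpa using hφ
  | succ m ih => rw [pow_succ]; exact ih.mul hφ

lemma wt_sq_le {c : ℝ} (hc : 0 < c) (k : Z2) : wt k ^ 2 ≤ 3 * max 1 c⁻¹ * om c k := by
  have h1 : (1 : ℝ) ≤ max 1 c⁻¹ := le_max_left _ _
  have h2 : c⁻¹ ≤ max 1 c⁻¹ := le_max_right _ _
  have h3 : 1 ≤ max 1 c⁻¹ * c := by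
    calc (1 : ℝ) = c⁻¹ * c := by field_simp
      _ ≤ _ := by gcongr
  have h4 : wt k ^ 2 ≤ 3 * (1 + (k 0 : ℝ) ^ 2 + (k 1 : ℝ) ^ 2) := by
    unfold wt
    nlinarith [sq_nonneg (1 - |(k 0 : ℝ)|), sq_nonneg (1 - |(k 1 : ℝ)|),
      sq_nonneg (|(k 0 : ℝ)| - |(k 1 : ℝ)|), sq_abs (k 0 : ℝ), sq_abs (k 1 : ℝ)]
  unfold om
  nlinarith [sq_nonneg (k 0 : ℝ), sq_nonneg (k 1 : ℝ)]

/-- Bootstrapping the Euler–Lagrange equation: each pass through the resolvent gains two orders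
of decay. -/
lemma bootstrap {c : ℝ} (hc : 0 < c) {p : ℕ} {v : C(T2, ℂ)} (hv : Adm c v)
    (hpos : ∀ t, v t = (‖v t‖ : ℝ)) (hfix : imp c p v = v) (n : ℕ) : Wn (2 * n) v := by
  have hfp : fp p v = v ^ (p + 1) := by
    ext t
    rw [ContinuousMap.pow_apply]
    conv_rhs => rw [hpos t]
    simp [fp]
  induction n with
  | zero => simpa [Wn] using hv.summ
  | succ n ih =>
    have h1 := ih.pow p
    rw [← hfp] at h1
    set s : ℝ := (√(dual c (fp p v)))⁻¹ with hs
    refine Summable.of_nonneg_of_le (fun k => by have := one_le_wt k; positivity) (fun k => ?_)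
      (h1.mul_left (s * (3 * max 1 c⁻¹)))
    have ho := om_pos hc k
    have hs0 : 0 ≤ s := by positivity
    have hw : 0 ≤ wt k ^ (2 * n) := by have := one_le_wt k; positivity
    have e : ‖cf v k‖ = s * ‖cf (fp p v) k‖ / om c k := by
      conv_lhs => rw [← hfix, cf_imp hc, norm_div, norm_mul, Complex.norm_real, Complex.norm_real,
        ← hs, Real.norm_of_nonneg hs0, Real.norm_of_nonneg ho.le]
    rw [e, ← mul_div_assoc, div_le_iff₀ ho, show 2 * (n + 1) = 2 * n + 2 by ring, pow_add]
    have h2 := wt_sq_le hc k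
    calc wt k ^ (2 * n) * wt k ^ 2 * (s * ‖cf (fp p v) k‖)
        ≤ wt k ^ (2 * n) * (3 * max 1 c⁻¹ * om c k) * (s * ‖cf (fp p v) k‖) := by gcongr
      _ = _ := by ring

lemma iteratedDeriv_exp (a : ℂ) (n : ℕ) :
    iteratedDeriv n (fun s : ℝ => a * Complex.exp (s * Complex.I)) =
      fun s : ℝ => a * Complex.I ^ n * Complex.exp (s * Complex.I) := by
  induction n with
  | zero => simp
  | succ n ih =>
    rw [iteratedDeriv_succ, ih]
    funext s
    have h : HasDerivAt (fun s : ℝ => (s : ℂ) * Complex.I) Complex.I s := by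
      simpa using (hasDerivAt_id s).ofReal_comp.mul_const Complex.I
    rw [(h.cexp.const_mul (a * Complex.I ^ n)).deriv]
    ring

/-- Functions with rapidly decreasing Fourier coefficients are smooth. -/
lemma smooth_lift {v : C(T2, ℂ)} (h : ∀ n, Wn (2 * n) v) : Smooth2C fun x y => v (pt x y) := by
  have hs : Summable fun k => ‖cf v k‖ := (h 0).zero
  set L : Z2 → (ℝ × ℝ →L[ℝ] ℝ) := fun k =>
    (k 0 : ℝ) • ContinuousLinearMap.fst ℝ ℝ ℝ + (k 1 : ℝ) • ContinuousLinearMap.snd ℝ ℝ ℝ with hL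
  have hLn : ∀ k, ‖L k‖ ≤ wt k := by
    intro k
    refine ContinuousLinearMap.opNorm_le_bound _ (zero_le_one.trans (one_le_wt k)) fun z => ?_
    have e : L k z = k 0 * z.1 + k 1 * z.2 := by simp [hL]
    rw [e]
    refine (norm_add_le _ _).trans ?_
    rw [norm_mul, norm_mul, Real.norm_eq_abs, Real.norm_eq_abs (k 1 : ℝ)]
    have h1 := norm_fst_le z
    have h2 := norm_snd_le z
    have h3 := mul_le_mul_of_nonneg_left h1 (abs_nonneg (k 0 : ℝ))
    have h4 := mul_le_mul_of_nonneg_left h2 (abs_nonneg (k 1 : ℝ))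
    unfold wt
    nlinarith [norm_nonneg z]
  have e : (fun z : ℝ × ℝ => v (pt z.1 z.2)) = fun z => ∑' k,
      ((fun s : ℝ => cf v k * Complex.exp (s * Complex.I)) ∘ L k) z := by
    funext z
    have h1 := hasSum_ser_apply hs (pt z.1 z.2)
    rw [ser_cf hs] at h1
    rw [← h1.tsum_eq]
    refine tsum_congr fun k => ?_
    rw [mFourier_pt]
    simp [hL]
  have hcd : ∀ k, ContDiff ℝ (⊤ : ℕ∞) fun s : ℝ => cf v k * Complex.exp (s * Complex.I) := by
    intro k
    exact contDiff_const.mul ((Complex.ofRealCLM.contDiff.mul contDiff_const).cexp)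
  unfold Smooth2C
  rw [e]
  refine contDiff_tsum (v := fun n k => wt k ^ (2 * n) * ‖cf v k‖)
    (fun k => (hcd k).comp (L k).contDiff) (fun n _ => h n) fun n k z _ => ?_
  rw [(L k).iteratedFDeriv_comp_right (hcd k) z (by exact_mod_cast le_top)]
  refine (ContinuousMultilinearMap.norm_compContinuousLinearMap_le _ _).trans ?_
  rw [norm_iteratedFDeriv_eq_norm_iteratedDeriv, iteratedDeriv_exp]
  simp only [norm_mul, norm_pow, Complex.norm_I, one_pow, mul_one,
    Complex.norm_exp_ofReal_mul_I, Finset.prod_const, Finset.card_univ, Fintype.card_fin]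
  rw [mul_comm]
  refine mul_le_mul_of_nonneg_right ?_ (norm_nonneg _)
  calc ‖L k‖ ^ n ≤ wt k ^ n := pow_le_pow_left₀ (norm_nonneg _) (hLn k) n
    _ ≤ wt k ^ (2 * n) := pow_le_pow_right₀ (one_le_wt k) (by omega)

/-! ### Periodic functions on the plane and their Fourier coefficients -/

lemma coe_div_add (x : ℝ) : (((x + 2 * π) / (2 * π) : ℝ) : UnitAddCircle) =
    ((x / (2 * π) : ℝ) : UnitAddCircle) := by
  have h : (x + 2 * π) / (2 * π) = x / (2 * π) + 1 := by field_simp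
  rw [h]
  exact AddCircle.coe_add_period 1 _

lemma pt_add_left (x y : ℝ) : pt (x + 2 * π) y = pt x y := by
  unfold pt; rw [coe_div_add]

lemma pt_add_right (x y : ℝ) : pt x (y + 2 * π) = pt x y := by
  unfold pt; rw [coe_div_add]

lemma pt_neg_left (x y : ℝ) : pt (-x) y = refl 0 (pt x y) := by
  ext j; fin_cases j <;> simp [pt, refl, neg_div]

lemma pt_neg_right (x y : ℝ) : pt x (-y) = refl 1 (pt x y) := by
  ext j; fin_cases j <;> simp [pt, refl, neg_div]

/-- The integral of a derivative of a periodic function vanishes. -/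
lemma integral_deriv_x {f g : C(T2, ℂ)}
    (h : ∀ x y, HasDerivAt (fun s => f (pt s y)) (g (pt x y)) x) : ∫ t, g t = 0 := by
  have hc : Continuous fun z : ℝ × ℝ => g (pt z.1 z.2) := g.continuous.comp continuous_pt
  rw [integral_torus_sq2 g.continuous, integral_sq2_swap hc]
  have : ∀ y, ∫ x in (0 : ℝ)..(2 * π), g (pt x y) = 0 := by
    intro y
    have hc' : Continuous fun x : ℝ => g (pt x y) := hc.comp (by fun_prop : Continuous fun x : ℝ => (x, y))
    rw [intervalIntegral.integral_eq_sub_of_hasDerivAt (fun x _ => h x y)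
      (hc'.intervalIntegrable _ _), ← zero_add (2 * π), pt_add_left, sub_self]
  simp [this]

lemma integral_deriv_y {f g : C(T2, ℂ)}
    (h : ∀ x y, HasDerivAt (fun s => f (pt x s)) (g (pt x y)) y) : ∫ t, g t = 0 := by
  have hc : Continuous fun z : ℝ × ℝ => g (pt z.1 z.2) := g.continuous.comp continuous_pt
  rw [integral_torus_sq2 g.continuous, integral_sq2 hc]
  have : ∀ x, ∫ y in (0 : ℝ)..(2 * π), g (pt x y) = 0 := by
    intro x
    have hc' : Continuous fun y : ℝ => g (pt x y) := hc.comp (by fun_prop : Continuous fun y : ℝ => (x, y))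
    rw [intervalIntegral.integral_eq_sub_of_hasDerivAt (fun y _ => h x y)
      (hc'.intervalIntegrable _ _), ← zero_add (2 * π), pt_add_right, sub_self]
  simp [this]

lemma cf_deriv_x {f g : C(T2, ℂ)} (h : ∀ x y, HasDerivAt (fun s => f (pt s y)) (g (pt x y)) x)
    (k : Z2) : cf g k = k 0 * Complex.I * cf f k := by
  have h1 := integral_deriv_x (f := mFourier (-k) * f)
    (g := mFourier (-k) * g - (k 0 * Complex.I : ℂ) • (mFourier (-k) * f)) (fun x y => by
      refine ((hasDerivAt_mFourier_x (-k) x y).mul (h x y)).congr_deriv ?_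
      simp
      ring)
  have e : ∀ t, (mFourier (-k) * g - (k 0 * Complex.I : ℂ) • (mFourier (-k) * f)) t =
      mFourier (-k) t * g t - k 0 * Complex.I * (mFourier (-k) t * f t) := fun t => by simp
  simp only [e] at h1
  rw [integral_sub (cont_integrable (by fun_prop)) (cont_integrable (by fun_prop)),
    integral_const_mul] at h1
  exact sub_eq_zero.mp h1

lemma cf_deriv_y {f g : C(T2, ℂ)} (h : ∀ x y, HasDerivAt (fun s => f (pt x s)) (g (pt x y)) y)
    (k : Z2) : cf g k = k 1 * Complex.I * cf f k := by
  have h1 := integral_deriv_y (f := mFourier (-k) * f)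
    (g := mFourier (-k) * g - (k 1 * Complex.I : ℂ) • (mFourier (-k) * f)) (fun x y => by
      refine ((hasDerivAt_mFourier_y (-k) x y).mul (h x y)).congr_deriv ?_
      simp
      ring)
  have e : ∀ t, (mFourier (-k) * g - (k 1 * Complex.I : ℂ) • (mFourier (-k) * f)) t =
      mFourier (-k) t * g t - k 1 * Complex.I * (mFourier (-k) t * f t) := fun t => by simp
  simp only [e] at h1
  rw [integral_sub (cont_integrable (by fun_prop)) (cont_integrable (by fun_prop)),
    integral_const_mul] at h1
  exact sub_eq_zero.mp h1

lemma smooth_dx {u : ℝ → ℝ → ℂ} (hu : Smooth2C u) (hp : DblPeriodicC u) :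
    ∃ ux : ℝ → ℝ → ℂ, Smooth2C ux ∧ DblPeriodicC ux ∧
      ∀ x y, HasDerivAt (fun s => u s y) (ux x y) x := by
  set U : ℝ × ℝ → ℂ := fun z => u z.1 z.2 with hU
  have hd : ∀ x y, HasDerivAt (fun s => u s y) (fderiv ℝ U (x, y) (1, 0)) x := by
    intro x y
    have h1 : HasFDerivAt U (fderiv ℝ U (x, y)) (x, y) :=
      ((hu.differentiable (by simp)) (x, y)).hasFDerivAt
    exact h1.comp_hasDerivAt x ((hasDerivAt_id x).prodMk (hasDerivAt_const x y))
  refine ⟨fun x y => fderiv ℝ U (x, y) (1, 0), ?_, fun x y => ⟨?_, ?_⟩, hd⟩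
  · exact (hu.fderiv_right (m := (⊤ : ℕ∞)) (by simp)).clm_apply contDiff_const
  · have h1 := (hd (x + 2 * π) y).comp_add_const x (2 * π)
    simp only [(hp _ _).1] at h1
    exact h1.unique (hd x y)
  · have h1 := hd x (y + 2 * π)
    simp only [(hp _ _).2] at h1
    exact h1.unique (hd x y)

lemma smooth_dy {u : ℝ → ℝ → ℂ} (hu : Smooth2C u) (hp : DblPeriodicC u) :
    ∃ uy : ℝ → ℝ → ℂ, Smooth2C uy ∧ DblPeriodicC uy ∧
      ∀ x y, HasDerivAt (fun s => u x s) (uy x y) y := by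
  set U : ℝ × ℝ → ℂ := fun z => u z.1 z.2 with hU
  have hd : ∀ x y, HasDerivAt (fun s => u x s) (fderiv ℝ U (x, y) (0, 1)) y := by
    intro x y
    have h1 : HasFDerivAt U (fderiv ℝ U (x, y)) (x, y) :=
      ((hu.differentiable (by simp)) (x, y)).hasFDerivAt
    exact h1.comp_hasDerivAt y ((hasDerivAt_const y x).prodMk (hasDerivAt_id y))
  refine ⟨fun x y => fderiv ℝ U (x, y) (0, 1), ?_, fun x y => ⟨?_, ?_⟩, hd⟩
  · exact (hu.fderiv_right (m := (⊤ : ℕ∞)) (by simp)).clm_apply contDiff_const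
  · have h1 := hd (x + 2 * π) y
    simp only [(hp _ _).1] at h1
    exact h1.unique (hd x y)
  · have h1 := (hd x (y + 2 * π)).comp_add_const y (2 * π)
    simp only [(hp _ _).2] at h1
    exact h1.unique (hd x y)

/-- A smooth doubly periodic function descends to the torus with absolutely summable Fourier
coefficients, and `B_c` is a multiple of the energy of the latter. -/
lemma bridge {c : ℝ} (hc : 0 < c) {u : ℝ → ℝ → ℂ} (hu : Smooth2C u) (hp : DblPeriodicC u) :
    ∃ φ : C(T2, ℂ), (∀ x y, φ (pt x y) = u x y) ∧ (Summable fun k => ‖cf φ k‖) ∧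
      (Summable fun k => om c k * ‖cf φ k‖ ^ 2) ∧
      BcC c u = (2 * π) ^ 2 / 2 * en c (cf φ) := by
  obtain ⟨ux, hux, hpx, hdx⟩ := smooth_dx hu hp
  obtain ⟨uy, huy, hpy, hdy⟩ := smooth_dy hu hp
  obtain ⟨uxx, huxx, hpxx, hdxx⟩ := smooth_dx hux hpx
  obtain ⟨uyy, huyy, hpyy, hdyy⟩ := smooth_dy huy hpy
  obtain ⟨φ, hφ⟩ := exists_descent hu.continuous hp
  obtain ⟨φx, hφx⟩ := exists_descent hux.continuous hpx
  obtain ⟨φy, hφy⟩ := exists_descent huy.continuous hpy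
  obtain ⟨φxx, hφxx⟩ := exists_descent huxx.continuous hpxx
  obtain ⟨φyy, hφyy⟩ := exists_descent huyy.continuous hpyy
  have cx := cf_deriv_x (f := φ) (g := φx) (by simpa only [hφ, hφx] using hdx)
  have cy := cf_deriv_y (f := φ) (g := φy) (by simpa only [hφ, hφy] using hdy)
  have cxx := cf_deriv_x (f := φx) (g := φxx) (by simpa only [hφx, hφxx] using hdxx)
  have cyy := cf_deriv_y (f := φy) (g := φyy) (by simpa only [hφy, hφyy] using hdyy)
  have hsum : HasSum (fun k => om c k * ‖cf φ k‖ ^ 2)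
      ((∑' k, ‖cf φx k‖ ^ 2) + (∑' k, ‖cf φy k‖ ^ 2) + c * ∑' k, ‖cf φ k‖ ^ 2) := by
    refine (((parseval_sq φx).summable.hasSum.add (parseval_sq φy).summable.hasSum).add
      ((parseval_sq φ).summable.hasSum.mul_left c)).congr_fun fun k => ?_
    rw [cx, cy]
    simp only [norm_mul, Complex.norm_intCast, Complex.norm_I, mul_one, mul_pow, sq_abs, om]
    ring
  refine ⟨φ, hφ, ?_, hsum.summable, ?_⟩
  · -- `(c - Δ) u` is continuous with coefficients `(c + |k|²) û(k)`
    set ψ : C(T2, ℂ) := (c : ℂ) • φ + ((-1 : ℂ) • φxx + (-1 : ℂ) • φyy) with hψ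
    have e : ∀ k, cf φ k = cf ψ k / om c k := by
      intro k
      have ho : (om c k : ℂ) ≠ 0 := by exact_mod_cast (om_pos hc k).ne'
      rw [hψ, cf_add, cf_add, cf_smul, cf_smul, cf_smul, cxx, cyy, cx, cy, eq_div_iff ho]
      simp only [om]
      push_cast
      linear_combination ((k 0 : ℂ) ^ 2 + (k 1 : ℂ) ^ 2) * cf φ k * Complex.I_sq
    simpa only [← e] using summable_res hc ψ
  · have hcont : ∀ f : C(T2, ℂ), Continuous fun z : ℝ × ℝ => ‖f (pt z.1 z.2)‖ ^ 2 :=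
      fun f => (f.continuous.comp continuous_pt).norm.pow 2
    have e : ∀ x y, ‖deriv (fun s => u s y) x‖ ^ 2 + ‖deriv (fun s => u x s) y‖ ^ 2 +
        c * ‖u x y‖ ^ 2 = ‖φx (pt x y)‖ ^ 2 + ‖φy (pt x y)‖ ^ 2 + c * ‖φ (pt x y)‖ ^ 2 := by
      intro x y
      rw [(hdx x y).deriv, (hdy x y).deriv, hφ, hφx, hφy]
    rw [BcC, en, hsum.tsum_eq]
    simp only [e]
    have hx := hcont φx
    have hy := hcont φy
    have h0 := hcont φ
    rw [integ2_eq (f := fun x y => ‖φx (pt x y)‖ ^ 2 + ‖φy (pt x y)‖ ^ 2 + c * ‖φ (pt x y)‖ ^ 2)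
        ((hx.add hy).add (h0.const_mul c)),
      integral_add (by exact sq2_integrable (hx.add hy)) (by exact sq2_integrable (h0.const_mul c)),
      integral_add (by exact sq2_integrable hx) (by exact sq2_integrable hy), integral_const_mul,
      integral_sq2_norm_sq, integral_sq2_norm_sq, integral_sq2_norm_sq]
    ring

lemma integ2_F {p : ℕ} {u : ℝ → ℝ → ℂ} {φ : C(T2, ℂ)} (h : ∀ x y, φ (pt x y) = u x y) :
    integ2 (fun x y => ‖u x y‖ ^ (p + 2)) = (2 * π) ^ 2 * F p φ := by
  simp only [← h]
  rw [integ2_eq (f := fun x y => ‖φ (pt x y)‖ ^ (p + 2))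
    ((φ.continuous.comp continuous_pt).norm.pow _), F,
    integral_torus_sq2 (g := fun t => ‖φ t‖ ^ (p + 2)) (by fun_prop), smul_eq_mul,
    mul_inv_cancel_left₀ (by positivity)]

lemma sym_descent {u : ℝ → ℝ → ℂ} {φ : C(T2, ℂ)} (h : ∀ x y, φ (pt x y) = u x y)
    (hs : SymFunC u) : IsSym φ := by
  intro i t
  obtain ⟨x, y, rfl⟩ := pt_surjective t
  fin_cases i
  · exact (congrArg φ (pt_neg_left x y)).symm.trans (by rw [h, h, (hs x y).1])
  · exact (congrArg φ (pt_neg_right x y)).symm.trans (by rw [h, h, (hs x y).2])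

lemma F_smul (p : ℕ) {r : ℝ} (hr : 0 ≤ r) (φ : C(T2, ℂ)) :
    F p ((r : ℂ) • φ) = r ^ (p + 2) * F p φ := by
  simp only [F, ContinuousMap.smul_apply, norm_smul, Complex.norm_real, Real.norm_of_nonneg hr,
    mul_pow, integral_const_mul]

lemma en_smul (c : ℝ) (r : ℝ) (φ : C(T2, ℂ)) :
    en c (cf ((r : ℂ) • φ)) = r ^ 2 * en c (cf φ) := by
  rw [en, en, ← tsum_mul_left]
  refine tsum_congr fun k => ?_
  rw [cf_smul, norm_mul, Complex.norm_real, mul_pow, Real.norm_eq_abs, sq_abs]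
  ring

end GroundState

open GroundState

/-- Existence of a ground state for the constrained minimization problem
inf{ B_c(u) : ∫|u|^{p+2} = λ } in the class of smooth doubly 2π-periodic symmetric functions. -/
theorem exists_ground_state (p : ℕ) (hp : 1 ≤ p) (c : ℝ) (hc : 0 < c)
    (lam : ℝ) (hlam : 0 < lam) :
    ∃ Ψ : ℝ → ℝ → ℂ,
      Smooth2C Ψ ∧ DblPeriodicC Ψ ∧ SymFunC Ψ ∧
      integ2 (fun x y => ‖Ψ x y‖^(p+2)) = lam ∧
      ∀ u : ℝ → ℝ → ℂ,
        Smooth2C u → DblPeriodicC u → SymFunC u →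
        integ2 (fun x y => ‖u x y‖^(p+2)) = lam →
        BcC c Ψ ≤ BcC c u := by
  obtain ⟨v, hv, hF, hmax, hpos⟩ := exists_max hc p
  obtain ⟨hfix, hen⟩ := fixed_point hc hv hF hpos hmax
  have hsm := smooth_lift (bootstrap hc hv hpos hfix)
  -- the scaling factor with `(2π)² F(τ v) = λ`
  obtain ⟨τ, hτ0, hτ⟩ : ∃ τ : ℝ, 0 ≤ τ ∧ (2 * π) ^ 2 * (τ ^ (p + 2) * F p v) = lam := by
    refine ⟨(lam / ((2 * π) ^ 2 * F p v)) ^ (((p + 2 : ℕ) : ℝ)⁻¹), by positivity, ?_⟩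
    rw [Real.rpow_inv_natCast_pow (by positivity) (by omega)]
    field_simp
  have hval : ∀ x y, ((τ : ℂ) • v) (pt x y) = τ * v (pt x y) := fun x y => by simp
  have hΨs : Smooth2C fun x y => (τ : ℂ) * v (pt x y) :=
    ContDiff.mul contDiff_const hsm
  have hΨp : DblPeriodicC fun x y => (τ : ℂ) * v (pt x y) := fun x y => by
    simp only [pt_add_left, pt_add_right, and_self]
  refine ⟨fun x y => τ * v (pt x y), hΨs, hΨp, fun x y => ?_, ?_, fun u hu hup hus hul => ?_⟩
  · have h0 := hv.sym 0 (pt x y)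
    have h1 := hv.sym 1 (pt x y)
    simp only [pt_neg_left, pt_neg_right]
    exact ⟨by rw [h0], by rw [h1]⟩
  · rw [integ2_F hval, F_smul p hτ0, hτ]
  obtain ⟨φΨ, hφΨ, -, -, hBΨ⟩ := bridge hc hΨs hΨp
  obtain ⟨φ, hφ, hφ1, hφ2, hB⟩ := bridge hc hu hup
  have e : φΨ = (τ : ℂ) • v := by
    ext t
    obtain ⟨x, y, rfl⟩ := pt_surjective t
    rw [hφΨ, hval]
  rw [hBΨ, hB, e, en_smul, hen, mul_one]
  refine mul_le_mul_of_nonneg_left ?_ (by positivity)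
  by_contra hlt
  push Not at hlt
  have hE0 : 0 ≤ en c (cf φ) := tsum_nonneg fun k => mul_nonneg (om_pos hc k).le (sq_nonneg _)
  -- an intermediate scale `s` with `en φ ≤ s² < τ²`
  set s := √((en c (cf φ) + τ ^ 2) / 2) with hs
  have hs2 : s ^ 2 = (en c (cf φ) + τ ^ 2) / 2 := Real.sq_sqrt (by positivity)
  have hs0 : 0 < s := Real.sqrt_pos.mpr (by linarith [hE0.trans_lt hlt])
  have hsτ : s < τ := lt_of_pow_lt_pow_left₀ 2 hτ0 (by linarith)
  have hadm : Adm c (((s⁻¹ : ℝ) : ℂ) • φ) := by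
    refine ⟨?_, ?_, ?_, ?_⟩
    · simp only [cf_smul, norm_mul]
      exact hφ1.mul_left _
    · simp only [cf_smul, norm_mul, mul_pow, mul_left_comm (om c _)]
      exact hφ2.mul_left _
    · rw [en_smul, inv_pow, inv_mul_le_iff₀ (by positivity)]
      linarith
    · intro i t
      simp [sym_descent hφ hus i t]
  have h1 := hmax _ hadm
  rw [F_smul p (by positivity), inv_pow, inv_mul_le_iff₀ (by positivity)] at h1
  have h2 : F p φ = τ ^ (p + 2) * F p v := by
    rw [integ2_F hφ, ← hτ] at hul
    exact mul_left_cancel₀ (by positivity) hul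
  rw [h2] at h1
  have h3 := le_of_mul_le_mul_right h1 hF
  exact absurd (pow_lt_pow_left₀ hsτ hs0.le (by omega : p + 2 ≠ 0)) (not_lt.mpr h3)
end
end

section
/- Let c > 0 and λ > 0, and let Ψ : ℝ² → ℂ be a smooth, doubly 2π-periodic, symmetric function with ∫|Ψ|³ dxdy = λ such that B_c(Ψ) ≤ B_c(u) for every smooth, doubly 2π-periodic, symmetric u : ℝ² → ℂ with ∫|u|³ dxdy = λ. Then there exist a constant C₁ > 0, a real number θ, and a smooth, doubly 2π-periodic, symmetric function φ : ℝ² → ℝ with φ(x,y) > 0 for all (x,y), such that Ψ = e^{iθ}φ and −Δφ + cφ = C₁ φ² on ℝ². -/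
/-!
Why the theorem holds. Put `C₁ = 2 B_c(Ψ) / λ` and `W = c - C₁ |Ψ|`. Rescaling a real admissible
`u` to the constraint and using the pointwise Young inequality for `|Ψ| u²`, minimality of `Ψ`
becomes `Q(u) = ∫ |∇u|² + W u² ≥ 0` for every admissible real `u` (`Qf_nonneg_of_minimizer`).
For any phase `θ`, the real and imaginary parts `a`, `b` of `e^{-iθ} Ψ` satisfy
`Q(a) + Q(b) = Q(Ψ) = 0`, so each of them is a zero of `Q`, hence solves `Δa = W a` classically
(`euler_lagrange`).

A smooth zero `a` of `Q` either vanishes identically or has no zeros. Comparing `a` with the smooth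
competitor `√(a² + ε²)` bounds `∫ |∇a|² / (a² + ε²)` by `∫ W`, uniformly in `ε`
(`log_gradient_bound`). Near a zero with nonzero gradient this integral would be of order at least
`1/ε`, so `∇a = 0` wherever `a = 0` (`gradient_eq_zero`). Hopf's boundary point lemma
(`hopf`), applied on a disc free of zeros that touches the zero set, excludes this unless `a ≡ 0`
(`eq_zero_of_exists_zero`). This replaces the usual argument through `|a|`, which is not smooth and
so is not an admissible competitor.

With `θ = arg Ψ(0,0)` the imaginary part vanishes at the origin, hence everywhere; the real part is
then nowhere zero and nonnegative at the origin, so it is the positive function `φ`.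
-/

noncomputable section
open Real MeasureTheory Filter Complex

/-- doubly 2π-periodic (real-valued) -/
def DblPeriodic (u : ℝ → ℝ → ℝ) : Prop :=
  ∀ x y : ℝ, u (x + 2*π) y = u x y ∧ u x (y + 2*π) = u x y

/-- symmetric (real-valued) -/
def SymFun (u : ℝ → ℝ → ℝ) : Prop :=
  ∀ x y : ℝ, u (-x) y = u x y ∧ u x (-y) = u x y

/-- smooth (real-valued) -/
def Smooth2 (u : ℝ → ℝ → ℝ) : Prop :=
  ContDiff ℝ (⊤ : ℕ∞) fun p : ℝ × ℝ => u p.1 p.2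

/-- the Laplacian (real-valued) -/
def lap (u : ℝ → ℝ → ℝ) (x y : ℝ) : ℝ :=
  deriv (fun t => deriv (fun s => u s y) t) x + deriv (fun t => deriv (fun s => u x s) t) y

/-! ### Partial derivatives -/

/-- The partial derivative `∂u/∂x`. -/
def dx (u : ℝ → ℝ → ℝ) (x y : ℝ) : ℝ := deriv (fun s => u s y) x

/-- The partial derivative `∂u/∂y`. -/
def dy (u : ℝ → ℝ → ℝ) (x y : ℝ) : ℝ := deriv (fun s => u x s) y

/-- Joint continuity of a function of two real variables. -/
def Cont2 (u : ℝ → ℝ → ℝ) : Prop := Continuous fun p : ℝ × ℝ => u p.1 p.2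

lemma Smooth2.cont {u : ℝ → ℝ → ℝ} (h : Smooth2 u) : Cont2 u := ContDiff.continuous h

lemma Smooth2.hasFDerivAt {u : ℝ → ℝ → ℝ} (h : Smooth2 u) (p : ℝ × ℝ) :
    HasFDerivAt (fun p : ℝ × ℝ => u p.1 p.2)
      (fderiv ℝ (fun p : ℝ × ℝ => u p.1 p.2) p) p :=
  ((ContDiff.differentiable h (by simp)) p).hasFDerivAt

lemma Smooth2.dx_eq {u : ℝ → ℝ → ℝ} (h : Smooth2 u) (x y : ℝ) :
    dx u x y = fderiv ℝ (fun p : ℝ × ℝ => u p.1 p.2) (x, y) (1, 0) := by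
  have h1 : HasDerivAt (fun s : ℝ => (s, y)) ((1 : ℝ), (0 : ℝ)) x :=
    (hasDerivAt_id x).prodMk (hasDerivAt_const x y)
  exact ((h.hasFDerivAt (x, y)).comp_hasDerivAt x h1).deriv

lemma Smooth2.dy_eq {u : ℝ → ℝ → ℝ} (h : Smooth2 u) (x y : ℝ) :
    dy u x y = fderiv ℝ (fun p : ℝ × ℝ => u p.1 p.2) (x, y) (0, 1) := by
  have h1 : HasDerivAt (fun s : ℝ => (x, s)) ((0 : ℝ), (1 : ℝ)) y :=
    (hasDerivAt_const y x).prodMk (hasDerivAt_id y)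
  exact ((h.hasFDerivAt (x, y)).comp_hasDerivAt y h1).deriv

lemma Smooth2.hasDerivAt_dx {u : ℝ → ℝ → ℝ} (h : Smooth2 u) (x y : ℝ) :
    HasDerivAt (fun s => u s y) (dx u x y) x := by
  have h1 : HasDerivAt (fun s : ℝ => (s, y)) ((1 : ℝ), (0 : ℝ)) x :=
    (hasDerivAt_id x).prodMk (hasDerivAt_const x y)
  rw [h.dx_eq]
  exact (h.hasFDerivAt (x, y)).comp_hasDerivAt x h1

lemma Smooth2.hasDerivAt_dy {u : ℝ → ℝ → ℝ} (h : Smooth2 u) (x y : ℝ) :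
    HasDerivAt (fun s => u x s) (dy u x y) y := by
  have h1 : HasDerivAt (fun s : ℝ => (x, s)) ((0 : ℝ), (1 : ℝ)) y :=
    (hasDerivAt_const y x).prodMk (hasDerivAt_id y)
  rw [h.dy_eq]
  exact (h.hasFDerivAt (x, y)).comp_hasDerivAt y h1

lemma Smooth2.smooth_dx {u : ℝ → ℝ → ℝ} (h : Smooth2 u) : Smooth2 (dx u) := by
  have h1 : ContDiff ℝ (⊤ : ℕ∞) fun p : ℝ × ℝ =>
      fderiv ℝ (fun p : ℝ × ℝ => u p.1 p.2) p (1, 0) :=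
    (ContDiff.fderiv_right (m := (⊤ : ℕ∞)) h (by simp)).clm_apply contDiff_const
  have h2 : (fun p : ℝ × ℝ => dx u p.1 p.2) = _ := funext fun p => h.dx_eq p.1 p.2
  rw [Smooth2, h2]
  exact h1

lemma Smooth2.smooth_dy {u : ℝ → ℝ → ℝ} (h : Smooth2 u) : Smooth2 (dy u) := by
  have h1 : ContDiff ℝ (⊤ : ℕ∞) fun p : ℝ × ℝ =>
      fderiv ℝ (fun p : ℝ × ℝ => u p.1 p.2) p (0, 1) :=
    (ContDiff.fderiv_right (m := (⊤ : ℕ∞)) h (by simp)).clm_apply contDiff_const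
  have h2 : (fun p : ℝ × ℝ => dy u p.1 p.2) = _ := funext fun p => h.dy_eq p.1 p.2
  rw [Smooth2, h2]
  exact h1

/-- The chain rule along a straight line. -/
lemma Smooth2.hasDerivAt_line {u : ℝ → ℝ → ℝ} (h : Smooth2 u) (x y v w t : ℝ) :
    HasDerivAt (fun t => u (x + t * v) (y + t * w))
      (v * dx u (x + t * v) (y + t * w) + w * dy u (x + t * v) (y + t * w)) t := by
  have h1 : HasDerivAt (fun s : ℝ => (x + s * v, y + s * w)) (v, w) t := by
    have e1 : HasDerivAt (fun s : ℝ => x + s * v) v t := by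
      simpa using ((hasDerivAt_id t).mul_const v).const_add x
    have e2 : HasDerivAt (fun s : ℝ => y + s * w) w t := by
      simpa using ((hasDerivAt_id t).mul_const w).const_add y
    exact e1.prodMk e2
  have h2 := (h.hasFDerivAt (x + t * v, y + t * w)).comp_hasDerivAt t h1
  have h3 : ((v, w) : ℝ × ℝ) = v • ((1 : ℝ), (0 : ℝ)) + w • ((0 : ℝ), (1 : ℝ)) := by simp
  rw [h3, map_add, map_smul, map_smul, ← h.dx_eq, ← h.dy_eq] at h2
  exact h2

/-! ### Integration over the period square -/

/-- The closed period square. -/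
def sq2 : Set (ℝ × ℝ) := Set.Icc (0 : ℝ) (2 * π) ×ˢ Set.Icc (0 : ℝ) (2 * π)

lemma Cont2.integrableOn {f : ℝ → ℝ → ℝ} (hf : Cont2 f) :
    IntegrableOn (fun p : ℝ × ℝ => f p.1 p.2) sq2 :=
  Continuous.continuousOn hf |>.integrableOn_compact (isCompact_Icc.prod isCompact_Icc)

lemma integ2_eq {f : ℝ → ℝ → ℝ} (hf : Cont2 f) :
    integ2 f = ∫ p in sq2, f p.1 p.2 := by
  have h := hf.integrableOn
  unfold sq2 at h ⊢
  rw [Measure.volume_eq_prod] at h ⊢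
  rw [setIntegral_prod _ h]
  have hp : (0 : ℝ) ≤ 2 * π := by positivity
  unfold integ2
  rw [intervalIntegral.integral_of_le hp, ← integral_Icc_eq_integral_Ioc]
  congr 1
  ext x
  rw [intervalIntegral.integral_of_le hp, ← integral_Icc_eq_integral_Ioc]

lemma integ2_swap {f : ℝ → ℝ → ℝ} (hf : Cont2 f) :
    integ2 f = integ2 fun x y => f y x := by
  have hp : (0 : ℝ) ≤ 2 * π := by positivity
  unfold integ2
  simp_rw [intervalIntegral.integral_of_le hp, ← integral_Icc_eq_integral_Ioc]
  have h := hf.integrableOn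
  unfold sq2 at h
  rw [Measure.volume_eq_prod] at h
  refine integral_integral_swap ?_
  rw [IntegrableOn, ← Measure.prod_restrict] at h
  exact h

lemma integ2_add {f g : ℝ → ℝ → ℝ} (hf : Cont2 f) (hg : Cont2 g) :
    integ2 (fun x y => f x y + g x y) = integ2 f + integ2 g := by
  have hfg : Cont2 fun x y => f x y + g x y := Continuous.add hf hg
  rw [integ2_eq hf, integ2_eq hg, integ2_eq hfg]
  exact integral_add hf.integrableOn hg.integrableOn

lemma integ2_const_mul (k : ℝ) (f : ℝ → ℝ → ℝ) :
    integ2 (fun x y => k * f x y) = k * integ2 f := by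
  simp [integ2]

lemma integ2_mono {f g : ℝ → ℝ → ℝ} (hf : Cont2 f) (hg : Cont2 g)
    (h : ∀ x y, f x y ≤ g x y) : integ2 f ≤ integ2 g := by
  rw [integ2_eq hf, integ2_eq hg]
  exact integral_mono hf.integrableOn hg.integrableOn fun p => h p.1 p.2

lemma integ2_nonneg {f : ℝ → ℝ → ℝ} (h : ∀ x y, 0 ≤ f x y) : 0 ≤ integ2 f := by
  have hp : (0 : ℝ) ≤ 2 * π := by positivity
  exact intervalIntegral.integral_nonneg hp fun x _ =>
    intervalIntegral.integral_nonneg hp fun y _ => h x y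

/-- Integrals of periodic functions over translates of the period square agree. -/
lemma integ2_shift {f : ℝ → ℝ → ℝ} (hp : DblPeriodic f) (s t : ℝ) :
    integ2 f = ∫ x in s..(s + 2 * π), ∫ y in t..(t + 2 * π), f x y := by
  have h1 : ∀ x, ∫ y in t..(t + 2 * π), f x y = ∫ y in (0 : ℝ)..(2 * π), f x y := by
    intro x
    have hx : Function.Periodic (f x) (2 * π) := fun y => (hp x y).2
    simpa using hx.intervalIntegral_add_eq t 0
  simp_rw [h1]
  have hx : Function.Periodic (fun x => ∫ y in (0 : ℝ)..(2 * π), f x y) (2 * π) := by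
    intro x
    simp_rw [(hp x _).1]
  simpa [integ2] using hx.intervalIntegral_add_eq 0 s

lemma DblPeriodic.exists_rep {f : ℝ → ℝ → ℝ} (hp : DblPeriodic f) (x y : ℝ) :
    ∃ x' ∈ Set.Ioc 0 (2 * π), ∃ y' ∈ Set.Ioc 0 (2 * π), f x y = f x' y' := by
  have hpi : (0 : ℝ) < 2 * π := by positivity
  have h1 : Function.Periodic (fun s => f s y) (2 * π) := fun s => (hp s y).1
  obtain ⟨x', hx', e1⟩ := h1.exists_mem_Ioc hpi x 0
  have h2 : Function.Periodic (fun s => f x' s) (2 * π) := fun s => (hp x' s).2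
  obtain ⟨y', hy', e2⟩ := h2.exists_mem_Ioc hpi y 0
  exact ⟨x', by simpa using hx', y', by simpa using hy', e1.trans e2⟩

/-- A nonnegative continuous periodic function with vanishing integral vanishes. -/
lemma eq_zero_of_integ2_eq_zero {f : ℝ → ℝ → ℝ} (hf : Cont2 f) (hp : DblPeriodic f)
    (h0 : ∀ x y, 0 ≤ f x y) (hi : integ2 f = 0) (x y : ℝ) : f x y = 0 := by
  have hpi : (0 : ℝ) < 2 * π := by positivity
  have hfc : Continuous fun p : ℝ × ℝ => f p.1 p.2 := hf
  rw [integ2_eq hf] at hi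
  have hae := (setIntegral_eq_zero_iff_of_nonneg_ae
    (Eventually.of_forall fun p : ℝ × ℝ => h0 p.1 p.2) hf.integrableOn).1 hi
  have hint : ∀ p ∈ Set.Ioo (0 : ℝ) (2 * π) ×ˢ Set.Ioo (0 : ℝ) (2 * π), f p.1 p.2 = 0 := by
    have hsub : Set.Ioo (0 : ℝ) (2 * π) ×ˢ Set.Ioo (0 : ℝ) (2 * π) ⊆ sq2 :=
      Set.prod_mono Set.Ioo_subset_Icc_self Set.Ioo_subset_Icc_self
    have hae' := ae_restrict_of_ae_restrict_of_subset hsub hae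
    exact Measure.eqOn_open_of_ae_eq hae' (isOpen_Ioo.prod isOpen_Ioo)
      hfc.continuousOn continuousOn_const
  have hcl : ∀ p ∈ sq2, f p.1 p.2 = 0 := by
    have hc : IsClosed {p : ℝ × ℝ | f p.1 p.2 = 0} := isClosed_eq hfc continuous_const
    have hs := hc.closure_subset_iff.2 hint
    rw [closure_prod_eq, closure_Ioo hpi.ne] at hs
    exact hs
  obtain ⟨x', hx', y', hy', e⟩ := hp.exists_rep x y
  rw [e]
  exact hcl (x', y') ⟨Set.Ioc_subset_Icc_self hx', Set.Ioc_subset_Icc_self hy'⟩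

lemma DblPeriodic.periodic_dx {u : ℝ → ℝ → ℝ} (h : DblPeriodic u) : DblPeriodic (dx u) := by
  intro x y
  constructor
  · have : (fun s => u s y) = fun s => u (s + 2 * π) y := funext fun s => (h s y).1.symm
    simp only [dx]
    conv_rhs => rw [this, deriv_comp_add_const (fun s => u s y)]
  · simp only [dx, (h _ _).2]

lemma DblPeriodic.periodic_dy {u : ℝ → ℝ → ℝ} (h : DblPeriodic u) : DblPeriodic (dy u) := by
  intro x y
  constructor
  · simp only [dy, (h _ _).1]
  · have : (fun s => u x s) = fun s => u x (s + 2 * π) := funext fun s => (h x s).2.symm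
    simp only [dy]
    conv_rhs => rw [this, deriv_comp_add_const (fun s => u x s)]

lemma SymFun.dxdx {u : ℝ → ℝ → ℝ} (h : SymFun u) : SymFun (dx (dx u)) := by
  have hodd : ∀ x y, dx u (-x) y = - dx u x y := by
    intro x y
    have : (fun s => u s y) = fun s => u (-s) y := funext fun s => (h s y).1.symm
    simp only [dx]
    conv_rhs => rw [this, deriv_comp_neg (fun s => u s y), neg_neg]
  intro x y
  constructor
  · have e : (fun s => dx u s y) = fun s => - dx u (-s) y := by
      funext s
      rw [hodd, neg_neg]
    show deriv (fun s => dx u s y) (-x) = deriv (fun s => dx u s y) x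
    conv_rhs => rw [e, deriv.fun_neg, deriv_comp_neg (fun s => dx u s y), neg_neg]
  · simp only [dx, (h _ _).2]

lemma SymFun.dydy {u : ℝ → ℝ → ℝ} (h : SymFun u) : SymFun (dy (dy u)) := by
  have h' : SymFun fun x y => u y x := fun x y => ⟨(h y x).2, (h y x).1⟩
  intro x y
  exact ⟨(h'.dxdx y x).2, (h'.dxdx y x).1⟩

lemma integ2_dy {u : ℝ → ℝ → ℝ} (h : Smooth2 u) (hp : DblPeriodic u) : integ2 (dy u) = 0 := by
  unfold integ2
  have h1 : ∀ x, ∫ y in (0 : ℝ)..(2 * π), dy u x y = 0 := by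
    intro x
    have hc : Continuous (dy u x) :=
      (show Continuous fun p : ℝ × ℝ => dy u p.1 p.2 from h.smooth_dy.cont).comp
        (Continuous.prodMk_right x)
    rw [intervalIntegral.integral_eq_sub_of_hasDerivAt (fun y _ => h.hasDerivAt_dy x y)
      (hc.intervalIntegrable _ _)]
    have := (hp x 0).2
    rw [zero_add] at this
    rw [this, sub_self]
  simp [h1]

lemma Smooth2.swap {u : ℝ → ℝ → ℝ} (h : Smooth2 u) : Smooth2 fun x y => u y x :=
  ContDiff.comp (g := fun p : ℝ × ℝ => u p.1 p.2) h (contDiff_snd.prodMk contDiff_fst)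

lemma integ2_dx {u : ℝ → ℝ → ℝ} (h : Smooth2 u) (hp : DblPeriodic u) : integ2 (dx u) = 0 := by
  rw [integ2_swap h.smooth_dx.cont]
  exact integ2_dy h.swap fun x y => ⟨(hp y x).2, (hp y x).1⟩

/-! ### Closure properties -/

section
variable {f g : ℝ → ℝ → ℝ}

lemma Cont2.add (hf : Cont2 f) (hg : Cont2 g) : Cont2 fun x y => f x y + g x y :=
  Continuous.add hf hg
lemma Cont2.sub (hf : Cont2 f) (hg : Cont2 g) : Cont2 fun x y => f x y - g x y :=
  Continuous.sub hf hg
lemma Cont2.mul (hf : Cont2 f) (hg : Cont2 g) : Cont2 fun x y => f x y * g x y :=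
  Continuous.mul hf hg
lemma Cont2.pow (hf : Cont2 f) (n : ℕ) : Cont2 fun x y => f x y ^ n := Continuous.pow hf n
lemma Cont2.abs (hf : Cont2 f) : Cont2 fun x y => |f x y| := Continuous.abs hf
lemma Cont2.div (hf : Cont2 f) (hg : Cont2 g) (h : ∀ x y, g x y ≠ 0) :
    Cont2 fun x y => f x y / g x y := Continuous.div hf hg fun p => h p.1 p.2
lemma Cont2.const (k : ℝ) : Cont2 fun _ _ => k := continuous_const

lemma integ2_sub (hf : Cont2 f) (hg : Cont2 g) :
    integ2 (fun x y => f x y - g x y) = integ2 f - integ2 g := by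
  have h := integ2_add hf ((Cont2.const (-1)).mul hg)
  rw [integ2_const_mul] at h
  calc integ2 (fun x y => f x y - g x y) = integ2 (fun x y => f x y + -1 * g x y) := by
        congr 1; funext x y; ring
    _ = _ := by rw [h]; ring

/-- The admissible class: smooth, doubly periodic and symmetric real functions. -/
structure Adm (u : ℝ → ℝ → ℝ) : Prop where
  smooth : Smooth2 u
  per : DblPeriodic u
  sym : SymFun u

lemma Adm.add (hf : Adm f) (hg : Adm g) : Adm fun x y => f x y + g x y where
  smooth := ContDiff.add hf.smooth hg.smooth
  per x y := by simp only [(hf.per x y).1, (hf.per x y).2, (hg.per x y).1, (hg.per x y).2, and_self]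
  sym x y := by simp only [(hf.sym x y).1, (hf.sym x y).2, (hg.sym x y).1, (hg.sym x y).2, and_self]

lemma Adm.mul (hf : Adm f) (hg : Adm g) : Adm fun x y => f x y * g x y where
  smooth := ContDiff.mul hf.smooth hg.smooth
  per x y := by simp only [(hf.per x y).1, (hf.per x y).2, (hg.per x y).1, (hg.per x y).2, and_self]
  sym x y := by simp only [(hf.sym x y).1, (hf.sym x y).2, (hg.sym x y).1, (hg.sym x y).2, and_self]

lemma Adm.const (k : ℝ) : Adm fun _ _ => k where
  smooth := contDiff_const
  per _ _ := ⟨rfl, rfl⟩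
  sym _ _ := ⟨rfl, rfl⟩

lemma Adm.sqrt (hf : Adm f) (h : ∀ x y, 0 < f x y) : Adm fun x y => √(f x y) where
  smooth := ContDiff.sqrt hf.smooth fun p => (h p.1 p.2).ne'
  per x y := by simp only [(hf.per x y).1, (hf.per x y).2, and_self]
  sym x y := by simp only [(hf.sym x y).1, (hf.sym x y).2, and_self]

lemma Adm.lap (hf : Adm f) : Adm (lap f) :=
  Adm.add (f := dx (dx f)) (g := dy (dy f))
    ⟨hf.smooth.smooth_dx.smooth_dx, hf.per.periodic_dx.periodic_dx, hf.sym.dxdx⟩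
    ⟨hf.smooth.smooth_dy.smooth_dy, hf.per.periodic_dy.periodic_dy, hf.sym.dydy⟩

lemma dx_add_mul (hf : Smooth2 f) (hg : Smooth2 g) (t x y : ℝ) :
    dx (fun x y => f x y + t * g x y) x y = dx f x y + t * dx g x y :=
  ((hf.hasDerivAt_dx x y).add ((hg.hasDerivAt_dx x y).const_mul t)).deriv

lemma dy_add_mul (hf : Smooth2 f) (hg : Smooth2 g) (t x y : ℝ) :
    dy (fun x y => f x y + t * g x y) x y = dy f x y + t * dy g x y :=
  ((hf.hasDerivAt_dy x y).add ((hg.hasDerivAt_dy x y).const_mul t)).deriv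

/-! ### The quadratic form and its Euler–Lagrange equation -/

/-- The quadratic form `∫ |∇u|² + W u²` of the Schrödinger operator `-Δ + W`. -/
def Qf (W u : ℝ → ℝ → ℝ) : ℝ :=
  integ2 fun x y => dx u x y ^ 2 + dy u x y ^ 2 + W x y * u x y ^ 2

variable {W a : ℝ → ℝ → ℝ}

/-- The first variation of a nonnegative quadratic form vanishes at each of its zeros. -/
lemma Qf_polar (hW : Cont2 W) (hQ : ∀ u, Adm u → 0 ≤ Qf W u) (ha : Adm a) (ha0 : Qf W a = 0)
    {v : ℝ → ℝ → ℝ} (hv : Adm v) :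
    integ2 (fun x y => dx a x y * dx v x y + dy a x y * dy v x y + W x y * (a x y * v x y)) = 0 := by
  set B := integ2 (fun x y => dx a x y * dx v x y + dy a x y * dy v x y + W x y * (a x y * v x y))
    with hB
  have cax := ha.smooth.smooth_dx.cont
  have cay := ha.smooth.smooth_dy.cont
  have cvx := hv.smooth.smooth_dx.cont
  have cvy := hv.smooth.smooth_dy.cont
  have ca := ha.smooth.cont
  have cv := hv.smooth.cont
  have key : ∀ t : ℝ, 0 ≤ 2 * t * B + t ^ 2 * Qf W v := by
    intro t
    have h1 := hQ _ (ha.add ((Adm.const t).mul hv))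
    have h2 : Qf W (fun x y => a x y + t * v x y) = Qf W a + (2 * t * B + t ^ 2 * Qf W v) := by
      rw [hB]
      unfold Qf
      rw [← integ2_const_mul, ← integ2_const_mul, ← integ2_add, ← integ2_add]
      · congr 1
        funext x y
        rw [dx_add_mul ha.smooth hv.smooth, dy_add_mul ha.smooth hv.smooth]
        ring
      · exact ((cax.pow 2).add (cay.pow 2)).add (hW.mul (ca.pow 2))
      · exact ((Cont2.const _).mul (((cax.mul cvx).add (cay.mul cvy)).add
          (hW.mul (ca.mul cv)))).add ((Cont2.const _).mul
          (((cvx.pow 2).add (cvy.pow 2)).add (hW.mul (cv.pow 2))))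
      · exact (Cont2.const _).mul (((cax.mul cvx).add (cay.mul cvy)).add (hW.mul (ca.mul cv)))
      · exact (Cont2.const _).mul (((cvx.pow 2).add (cvy.pow 2)).add (hW.mul (cv.pow 2)))
    rw [h2, ha0, zero_add] at h1
    exact h1
  have hq := hQ v hv
  by_contra hne
  -- `t = -B / (q + 1)` makes the quadratic polynomial in `t` negative
  have h3 := key (-B / (Qf W v + 1))
  have hq1 : 0 < Qf W v + 1 := by linarith
  have h4 : 2 * (-B / (Qf W v + 1)) * B + (-B / (Qf W v + 1)) ^ 2 * Qf W v
      = -(B ^ 2 * (Qf W v + 2) / (Qf W v + 1) ^ 2) := by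
    field_simp
    ring
  have h5 : 0 < B ^ 2 * (Qf W v + 2) / (Qf W v + 1) ^ 2 := by
    have : 0 < B ^ 2 := by positivity
    positivity
  linarith

lemma integ2_parts (ha : Adm a) {v : ℝ → ℝ → ℝ} (hv : Adm v) :
    integ2 (fun x y => dx a x y * dx v x y + dy a x y * dy v x y)
      = - integ2 (fun x y => lap a x y * v x y) := by
  have sx : Smooth2 fun x y => dx a x y * v x y := ContDiff.mul ha.smooth.smooth_dx hv.smooth
  have sy : Smooth2 fun x y => dy a x y * v x y := ContDiff.mul ha.smooth.smooth_dy hv.smooth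
  have px : DblPeriodic fun x y => dx a x y * v x y := fun x y => by
    simp only [(ha.per.periodic_dx x y).1, (ha.per.periodic_dx x y).2, (hv.per x y).1,
      (hv.per x y).2, and_self]
  have py : DblPeriodic fun x y => dy a x y * v x y := fun x y => by
    simp only [(ha.per.periodic_dy x y).1, (ha.per.periodic_dy x y).2, (hv.per x y).1,
      (hv.per x y).2, and_self]
  have h1 := integ2_dx sx px
  have h2 := integ2_dy sy py
  have h3 := integ2_sub (sx.smooth_dx.cont.add sy.smooth_dy.cont)
    (ha.lap.smooth.cont.mul hv.smooth.cont)
  rw [integ2_add sx.smooth_dx.cont sy.smooth_dy.cont, h1, h2] at h3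
  calc _ = _ := ?_
    _ = _ := h3
    _ = _ := by ring
  congr 1
  funext x y
  have e1 : dx (fun x y => dx a x y * v x y) x y = dx (dx a) x y * v x y + dx a x y * dx v x y :=
    ((ha.smooth.smooth_dx.hasDerivAt_dx x y).mul (hv.smooth.hasDerivAt_dx x y)).deriv
  have e2 : dy (fun x y => dy a x y * v x y) x y = dy (dy a) x y * v x y + dy a x y * dy v x y :=
    ((ha.smooth.smooth_dy.hasDerivAt_dy x y).mul (hv.smooth.hasDerivAt_dy x y)).deriv
  have e3 : lap a x y = dx (dx a) x y + dy (dy a) x y := rfl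
  rw [e1, e2, e3]
  ring

/-- A zero of the nonnegative quadratic form solves `-Δa + W a = 0` classically.  The residual
`f = -Δa + W a` is merely continuous, so the first variation is tested against
`-Δa + W' a` with `W'` smooth and uniformly close to `W`. -/
lemma euler_lagrange (hW : Cont2 W) (hWp : DblPeriodic W)
    (happ : ∀ ε > 0, ∃ W', Adm W' ∧ ∀ x y, |W' x y - W x y| ≤ ε)
    (hQ : ∀ u, Adm u → 0 ≤ Qf W u) (ha : Adm a) (ha0 : Qf W a = 0) (x y : ℝ) :
    lap a x y = W x y * a x y := by
  set r : ℝ → ℝ → ℝ := fun x y => -1 * lap a x y + W x y * a x y with hr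
  have ca := ha.smooth.cont
  have cl := ha.lap.smooth.cont
  have cr : Cont2 r := ((Cont2.const (-1)).mul cl).add (hW.mul ca)
  have pr : DblPeriodic r := fun x y => by
    simp only [hr, (ha.per x y).1, (ha.per x y).2, (ha.lap.per x y).1, (ha.lap.per x y).2,
      (hWp x y).1, (hWp x y).2, and_self]
  have test : ∀ v, Adm v → integ2 (fun x y => r x y * v x y) = 0 := by
    intro v hv
    have h1 := Qf_polar hW hQ ha ha0 hv
    have cv := hv.smooth.cont
    rw [integ2_add ((ha.smooth.smooth_dx.cont.mul hv.smooth.smooth_dx.cont).add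
      (ha.smooth.smooth_dy.cont.mul hv.smooth.smooth_dy.cont)) (hW.mul (ca.mul cv)),
      integ2_parts ha hv] at h1
    calc integ2 (fun x y => r x y * v x y)
        = integ2 (fun x y => W x y * (a x y * v x y) - lap a x y * v x y) := by
          congr 1; funext x y; simp only [hr]; ring
      _ = 0 := by rw [integ2_sub (hW.mul (ca.mul cv)) (cl.mul cv)]; linarith
  have hle : ∀ ε > 0, integ2 (fun x y => r x y ^ 2) ≤ ε * integ2 (fun x y => |r x y * a x y|) := by
    intro ε hε
    obtain ⟨W', hW', hd⟩ := happ ε hε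
    have hv := ((Adm.const (-1)).mul ha.lap).add (hW'.mul ha)
    have h1 := test _ hv
    rw [← integ2_const_mul, ← add_zero (integ2 fun x y => ε * |r x y * a x y|), ← h1,
      ← integ2_add ((Cont2.const ε).mul (cr.mul ca).abs) (cr.mul hv.smooth.cont)]
    refine integ2_mono (cr.pow 2)
      (((Cont2.const ε).mul (cr.mul ca).abs).add (cr.mul hv.smooth.cont)) fun x y => ?_
    have h2 : -1 * lap a x y + W' x y * a x y = r x y + (W' x y - W x y) * a x y := by
      simp only [hr]; ring
    have h3 : |(W' x y - W x y) * (r x y * a x y)| ≤ ε * |r x y * a x y| := by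
      rw [abs_mul]
      exact mul_le_mul_of_nonneg_right (hd x y) (abs_nonneg _)
    have h4 := (abs_le.1 h3).1
    simp only [h2]
    nlinarith
  have hz : integ2 (fun x y => r x y ^ 2) = 0 := by
    refine le_antisymm ?_ (integ2_nonneg fun x y => sq_nonneg _)
    set M := integ2 (fun x y => |r x y * a x y|)
    have hM : 0 ≤ M := integ2_nonneg fun x y => abs_nonneg _
    refine le_of_forall_pos_le_add fun δ hδ => ?_
    have h := hle (δ / (M + 1)) (by positivity)
    have : δ / (M + 1) * M ≤ δ := by
      rw [div_mul_eq_mul_div, div_le_iff₀ (by positivity)]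
      nlinarith
    linarith
  have h0 := eq_zero_of_integ2_eq_zero (cr.pow 2)
    (fun x y => by simp only [(pr x y).1, (pr x y).2, and_self]) (fun x y => sq_nonneg _) hz x y
  have h1 : r x y = 0 := by simpa using h0
  simp only [hr] at h1
  linarith

/-! ### A zero of the quadratic form has vanishing gradient on its zero set -/

/-- Comparison of `a` with the smooth approximation `√(a² + ε²)` of `|a|`. -/
lemma log_gradient_bound (hW : Cont2 W) (hQ : ∀ u, Adm u → 0 ≤ Qf W u) (ha : Adm a)
    (ha0 : Qf W a = 0) {ε : ℝ} (hε : 0 < ε) :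
    integ2 (fun x y => (dx a x y ^ 2 + dy a x y ^ 2) / (a x y ^ 2 + ε ^ 2)) ≤ integ2 W := by
  have hpos : ∀ x y, 0 < a x y * a x y + ε ^ 2 := fun x y => by nlinarith [mul_self_nonneg (a x y), pow_pos hε 2]
  have hu := ((ha.mul ha).add (Adm.const (ε ^ 2))).sqrt hpos
  have hq := hQ _ hu
  have cax := ha.smooth.smooth_dx.cont
  have cay := ha.smooth.smooth_dy.cont
  have ca := ha.smooth.cont
  have hden : Cont2 fun x y => a x y ^ 2 + ε ^ 2 := (ca.pow 2).add (Cont2.const _)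
  have hden0 : ∀ x y, a x y ^ 2 + ε ^ 2 ≠ 0 := fun x y => by positivity
  have cfrac := ((cax.pow 2).add (cay.pow 2)).div hden hden0
  have e : Qf W (fun x y => √(a x y * a x y + ε ^ 2))
      = Qf W a + ε ^ 2 * (integ2 W -
        integ2 (fun x y => (dx a x y ^ 2 + dy a x y ^ 2) / (a x y ^ 2 + ε ^ 2))) := by
    unfold Qf
    rw [← integ2_sub hW cfrac, ← integ2_const_mul, ← integ2_add
      (((cax.pow 2).add (cay.pow 2)).add (hW.mul (ca.pow 2)))
      ((Cont2.const _).mul (hW.sub cfrac))]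
    congr 1
    funext x y
    have hs := Real.sq_sqrt (hpos x y).le
    have hx : dx (fun x y => √(a x y * a x y + ε ^ 2)) x y
        = (dx a x y * a x y + a x y * dx a x y) / (2 * √(a x y * a x y + ε ^ 2)) :=
      ((((ha.smooth.hasDerivAt_dx x y).mul (ha.smooth.hasDerivAt_dx x y)).add_const
        (ε ^ 2)).sqrt (hpos x y).ne').deriv
    have hy : dy (fun x y => √(a x y * a x y + ε ^ 2)) x y
        = (dy a x y * a x y + a x y * dy a x y) / (2 * √(a x y * a x y + ε ^ 2)) :=
      ((((ha.smooth.hasDerivAt_dy x y).mul (ha.smooth.hasDerivAt_dy x y)).add_const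
        (ε ^ 2)).sqrt (hpos x y).ne').deriv
    have h0 := hden0 x y
    rw [hx, hy, div_pow, div_pow, mul_pow, hs, ← sq]
    field_simp
    ring
  rw [e, ha0, zero_add] at hq
  have := nonneg_of_mul_nonneg_right hq (by positivity)
  linarith
end

/-- If `∂F/∂y` were nonzero at a zero of `F`, then `∫ F_y² / (F² + ε²)` would be of order at
least `1/ε`, because `F_y / (F² + ε²)` has primitive `ε⁻¹ arctan (F/ε)`. -/
lemma dy_eq_zero_of_bound {F : ℝ → ℝ → ℝ} (hF : Smooth2 F) (hp : DblPeriodic F) {K : ℝ}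
    (hK : ∀ ε > 0, integ2 (fun x y => dy F x y ^ 2 / (F x y ^ 2 + ε ^ 2)) ≤ K)
    {x₀ y₀ : ℝ} (h0 : F x₀ y₀ = 0) : ¬ 0 < dy F x₀ y₀ := by
  intro hd
  have cFy : Continuous fun p : ℝ × ℝ => dy F p.1 p.2 := hF.smooth_dy.cont
  have cF : Continuous fun p : ℝ × ℝ => F p.1 p.2 := hF.cont
  obtain ⟨m, hm0, hm⟩ : ∃ m, 0 < m ∧ m < dy F x₀ y₀ := exists_between hd
  obtain ⟨r, hr0, hrπ, hr⟩ : ∃ r, 0 < r ∧ r ≤ π ∧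
      ∀ x y, |x - x₀| ≤ r → |y - y₀| ≤ r → m ≤ dy F x y := by
    have hev : ∀ᶠ p : ℝ × ℝ in nhds (x₀, y₀), m < dy F p.1 p.2 :=
      cFy.continuousAt.eventually (lt_mem_nhds hm)
    obtain ⟨δ, hδ, hball⟩ := Metric.eventually_nhds_iff.1 hev
    refine ⟨min (δ / 2) π, lt_min (by positivity) pi_pos, min_le_right _ _, fun x y hx hy => ?_⟩
    refine (hball (y := (x, y)) ?_).le
    have h1 := min_le_left (δ / 2) π
    rw [Prod.dist_eq, Real.dist_eq, Real.dist_eq, max_lt_iff]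
    exact ⟨by simp only; linarith, by simp only; linarith⟩
  have hmono : ∀ y ∈ Set.Icc (y₀ - r) (y₀ + r), m ≤ dy F x₀ y := fun y hy =>
    hr x₀ y (by simpa using hr0.le) (abs_le.2 ⟨by linarith [hy.1], by linarith [hy.2]⟩)
  have hdiff : Differentiable ℝ (F x₀) := fun y => (hF.hasDerivAt_dy x₀ y).differentiableAt
  have mvt := (convex_Icc (y₀ - r) (y₀ + r)).mul_sub_le_image_sub_of_le_deriv
    hdiff.continuous.continuousOn hdiff.differentiableOn (C := m)
    (fun y hy => hmono y (interior_subset hy))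
  have hup : m * r ≤ F x₀ (y₀ + r) := by
    have := mvt y₀ ⟨by linarith, by linarith⟩ (y₀ + r) ⟨by linarith, le_rfl⟩ (by linarith)
    rw [h0] at this
    linarith
  have hlo : F x₀ (y₀ - r) ≤ -(m * r) := by
    have := mvt (y₀ - r) ⟨le_rfl, by linarith⟩ y₀ ⟨by linarith, by linarith⟩ (by linarith)
    rw [h0] at this
    linarith
  have hmr : 0 < m * r := by positivity
  set η := m * r / 2 with hη
  have hη0 : 0 < η := by positivity
  obtain ⟨s, hs0, hsr, hs⟩ : ∃ s, 0 < s ∧ s ≤ r ∧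
      ∀ x, |x - x₀| ≤ s → η ≤ F x (y₀ + r) ∧ F x (y₀ - r) ≤ -η := by
    have c1 : Continuous fun x => F x (y₀ + r) := cF.comp (Continuous.prodMk_left _)
    have c2 : Continuous fun x => F x (y₀ - r) := cF.comp (Continuous.prodMk_left _)
    have hev : ∀ᶠ x in nhds x₀, η < F x (y₀ + r) ∧ F x (y₀ - r) < -η :=
      (c1.continuousAt.eventually (lt_mem_nhds (by linarith))).and
        (c2.continuousAt.eventually (gt_mem_nhds (by linarith)))
    obtain ⟨δ, hδ, hball⟩ := Metric.eventually_nhds_iff.1 hev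
    refine ⟨min (δ / 2) r, lt_min (by positivity) hr0, min_le_right _ _, fun x hx => ?_⟩
    have h1 := min_le_left (δ / 2) r
    have := hball (y := x) (by rw [Real.dist_eq]; linarith)
    exact ⟨this.1.le, this.2.le⟩
  -- the lower bound for the integral
  have lower : ∀ ε, 0 < ε → ε ≤ η → s * m * π / ε ≤ K := by
    intro ε hε hεη
    set f : ℝ → ℝ → ℝ := fun x y => dy F x y ^ 2 / (F x y ^ 2 + ε ^ 2) with hf
    have hf0 : ∀ x y, 0 ≤ f x y := fun x y => by positivity
    have cf : Continuous fun p : ℝ × ℝ => f p.1 p.2 :=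
      Continuous.div (cFy.pow 2) ((cF.pow 2).add continuous_const) fun p => by positivity
    have hfp : DblPeriodic f := fun x y => by
      simp only [hf, (hp x y).1, (hp x y).2, (hp.periodic_dy x y).1, (hp.periodic_dy x y).2,
        and_self]
    have cfx : ∀ x, Continuous (f x) := fun x => cf.comp (Continuous.prodMk_right x)
    have inner : ∀ x, |x - x₀| ≤ s →
        m * π / (2 * ε) ≤ ∫ y in (y₀ - r)..(y₀ - r + 2 * π), f x y := by
      intro x hx
      have cFx : Continuous (F x) := cF.comp (Continuous.prodMk_right x)
      have cFyx : Continuous (dy F x) := cFy.comp (Continuous.prodMk_right x)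
      set g : ℝ → ℝ := fun y => m * (dy F x y / (F x y ^ 2 + ε ^ 2)) with hg
      have cg : Continuous g := continuous_const.mul
        (cFyx.div ((cFx.pow 2).add continuous_const) fun y => by positivity)
      have ftc : ∫ y in (y₀ - r)..(y₀ + r), g y =
          m / ε * Real.arctan (F x (y₀ + r) / ε) - m / ε * Real.arctan (F x (y₀ - r) / ε) := by
        refine intervalIntegral.integral_eq_sub_of_hasDerivAt
          (f := fun y => m / ε * Real.arctan (F x y / ε)) (fun y _ => ?_)
          (cg.intervalIntegrable _ _)
        have h1 := (((hF.hasDerivAt_dy x y).div_const ε).arctan).const_mul (m / ε)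
        refine h1.congr_deriv ?_
        simp only [hg]
        field_simp
        ring
      have ha1 : π / 4 ≤ Real.arctan (F x (y₀ + r) / ε) := by
        rw [← Real.arctan_one]
        refine arctan_mono ?_
        rw [le_div_iff₀ hε]
        linarith [(hs x hx).1]
      have ha2 : Real.arctan (F x (y₀ - r) / ε) ≤ -(π / 4) := by
        rw [← Real.arctan_one, ← Real.arctan_neg]
        refine arctan_mono ?_
        rw [div_le_iff₀ hε]
        linarith [(hs x hx).2]
      calc m * π / (2 * ε) = m / ε * (π / 4 - -(π / 4)) := by field_simp; norm_num
        _ ≤ m / ε * (Real.arctan (F x (y₀ + r) / ε) - Real.arctan (F x (y₀ - r) / ε)) := by gcongr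
        _ = ∫ y in (y₀ - r)..(y₀ + r), g y := by rw [ftc]; ring
        _ ≤ ∫ y in (y₀ - r)..(y₀ + r), f x y := by
            refine intervalIntegral.integral_mono_on (by linarith) (cg.intervalIntegrable _ _)
              ((cfx x).intervalIntegrable _ _) fun y hy => ?_
            have h1 := hr x y (hx.trans hsr)
              (abs_le.2 ⟨by linarith [hy.1], by linarith [hy.2]⟩)
            simp only [hg, hf]
            rw [← mul_div_assoc]
            refine div_le_div_of_nonneg_right ?_ (by positivity)
            nlinarith
        _ ≤ _ := by
            refine intervalIntegral.integral_mono_interval le_rfl (by linarith) (by linarith)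
              (Eventually.of_forall fun y => hf0 x y) ((cfx x).intervalIntegrable _ _)
    have cint : Continuous fun x => ∫ y in (y₀ - r)..(y₀ - r + 2 * π), f x y :=
      intervalIntegral.continuous_parametric_intervalIntegral_of_continuous' cf _ _
    calc s * m * π / ε = ∫ x in (x₀ - s)..(x₀ + s), m * π / (2 * ε) := by
          rw [intervalIntegral.integral_const, smul_eq_mul]; field_simp; ring
      _ ≤ ∫ x in (x₀ - s)..(x₀ + s), ∫ y in (y₀ - r)..(y₀ - r + 2 * π), f x y := by
          refine intervalIntegral.integral_mono_on (by linarith) (by simp)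
            (cint.intervalIntegrable _ _) fun x hx => inner x ?_
          exact abs_le.2 ⟨by linarith [hx.1], by linarith [hx.2]⟩
      _ ≤ ∫ x in (x₀ - s)..(x₀ - s + 2 * π), ∫ y in (y₀ - r)..(y₀ - r + 2 * π), f x y := by
          refine intervalIntegral.integral_mono_interval le_rfl (by linarith) (by linarith)
            (Eventually.of_forall fun x => ?_) (cint.intervalIntegrable _ _)
          exact intervalIntegral.integral_nonneg (by linarith [pi_pos]) fun y _ => hf0 x y
      _ = integ2 f := (integ2_shift hfp _ _).symm
      _ ≤ K := hK ε hε
  have hsm : 0 < s * m * π := by positivity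
  have hK1 : 0 < |K| + 1 := by positivity
  have h1 := lower (min η (s * m * π / (|K| + 1))) (lt_min hη0 (by positivity)) (min_le_left _ _)
  have h2 : |K| + 1 ≤ s * m * π / min η (s * m * π / (|K| + 1)) := by
    rw [le_div_iff₀ (lt_min hη0 (by positivity))]
    calc (|K| + 1) * min η (s * m * π / (|K| + 1)) ≤ (|K| + 1) * (s * m * π / (|K| + 1)) := by
          gcongr; exact min_le_right _ _
      _ = s * m * π := by field_simp
  linarith [le_abs_self K]

lemma gradient_eq_zero {W a : ℝ → ℝ → ℝ} (hW : Cont2 W) (hQ : ∀ u, Adm u → 0 ≤ Qf W u)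
    (ha : Adm a) (ha0 : Qf W a = 0) {x y : ℝ} (h0 : a x y = 0) :
    dx a x y = 0 ∧ dy a x y = 0 := by
  have cax := ha.smooth.smooth_dx.cont
  have cay := ha.smooth.smooth_dy.cont
  have cden : ∀ ε : ℝ, Cont2 fun x y => a x y ^ 2 + ε ^ 2 := fun ε =>
    (ha.smooth.cont.pow 2).add (Cont2.const _)
  have bx : ∀ ε > 0, integ2 (fun x y => dx a x y ^ 2 / (a x y ^ 2 + ε ^ 2)) ≤ integ2 W := by
    intro ε hε
    have hd : ∀ x y, a x y ^ 2 + ε ^ 2 ≠ 0 := fun x y => by positivity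
    refine (integ2_mono ((cax.pow 2).div (cden ε) hd)
      (((cax.pow 2).add (cay.pow 2)).div (cden ε) hd) fun x y => ?_).trans
      (log_gradient_bound hW hQ ha ha0 hε)
    gcongr
    nlinarith [sq_nonneg (dy a x y)]
  have bdy : ∀ ε > 0, integ2 (fun x y => dy a x y ^ 2 / (a x y ^ 2 + ε ^ 2)) ≤ integ2 W := by
    intro ε hε
    have hd : ∀ x y, a x y ^ 2 + ε ^ 2 ≠ 0 := fun x y => by positivity
    refine (integ2_mono ((cay.pow 2).div (cden ε) hd)
      (((cax.pow 2).add (cay.pow 2)).div (cden ε) hd) fun x y => ?_).trans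
      (log_gradient_bound hW hQ ha ha0 hε)
    gcongr
    nlinarith [sq_nonneg (dx a x y)]
  have neg_dy : ∀ F : ℝ → ℝ → ℝ, Smooth2 F → DblPeriodic F →
      (∀ ε > 0, integ2 (fun x y => dy F x y ^ 2 / (F x y ^ 2 + ε ^ 2)) ≤ integ2 W) →
      ∀ x y, F x y = 0 → dy F x y = 0 := by
    intro F hF hp hK x y h
    have e : ∀ x y, dy (fun x y => -F x y) x y = -dy F x y := fun x y =>
      (hF.hasDerivAt_dy x y).neg.deriv
    have h1 := dy_eq_zero_of_bound hF hp hK h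
    have h2 := dy_eq_zero_of_bound (F := fun x y => -F x y) (K := integ2 W) (ContDiff.neg hF)
      (fun x y => by simp only [(hp x y).1, (hp x y).2, and_self])
      (by simpa only [e, neg_sq] using hK) (x₀ := x) (y₀ := y) (by simpa using h)
    rw [e] at h2
    linarith
  refine ⟨?_, neg_dy a ha.smooth ha.per bdy x y h0⟩
  refine neg_dy (fun x y => a y x) ha.smooth.swap (fun x y => ⟨(ha.per y x).2, (ha.per y x).1⟩)
    (fun ε hε => ?_) y x h0
  have h1 := bx ε hε
  rw [integ2_swap ((cax.pow 2).div (cden ε) fun x y => by positivity)] at h1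
  exact h1

/-! ### Hopf's boundary point argument -/

lemma deriv_deriv_nonneg_of_isLocalMin {f : ℝ → ℝ} {x : ℝ} (hf : IsLocalMin f x)
    (hc : ContinuousAt f x) : 0 ≤ deriv (deriv f) x := by
  by_contra! hneg
  have hmax := isLocalMax_of_deriv_deriv_neg hneg hf.deriv_eq_zero hc
  have hconst : f =ᶠ[nhds x] fun _ => f x := by
    filter_upwards [hf, hmax] with z h1 h2
    exact le_antisymm h2 h1
  have h1 := hconst.deriv.deriv_eq
  simp at h1
  linarith

/-- One-variable second-order condition for `f` minus a multiple of a Gaussian barrier. -/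
lemma barrier_second_order {f f₁ : ℝ → ℝ} {f₂ x x₀ m k d C : ℝ}
    (h1 : ∀ s, HasDerivAt f (f₁ s) s) (h2 : HasDerivAt f₁ f₂ x)
    (hmin : IsLocalMin (fun s => f s - m * (Real.exp (-k * ((s - x₀) ^ 2 + d)) - C)) x) :
    0 ≤ f₂ - m * ((4 * k ^ 2 * (x - x₀) ^ 2 - 2 * k) * Real.exp (-k * ((x - x₀) ^ 2 + d))) := by
  have hE : ∀ s, HasDerivAt (fun s => Real.exp (-k * ((s - x₀) ^ 2 + d)))
      (Real.exp (-k * ((s - x₀) ^ 2 + d)) * (-k * (2 * (s - x₀)))) s := by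
    intro s
    have := (((((hasDerivAt_id s).sub_const x₀).pow 2).add_const d).const_mul (-k)).exp
    simpa using this
  have hd1 : ∀ s, HasDerivAt (fun s => f s - m * (Real.exp (-k * ((s - x₀) ^ 2 + d)) - C))
      (f₁ s - m * (Real.exp (-k * ((s - x₀) ^ 2 + d)) * (-k * (2 * (s - x₀))))) s := fun s =>
    (h1 s).sub (((hE s).sub_const C).const_mul m)
  have hd2 := h2.sub (((hE x).mul ((((hasDerivAt_id x).sub_const x₀).const_mul 2).const_mul
    (-k))).const_mul m)
  have key := deriv_deriv_nonneg_of_isLocalMin hmin (hd1 x).continuousAt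
  have e1 := funext fun s => (hd1 s).deriv
  rw [e1] at key
  have e2 := hd2.deriv
  refine key.trans_eq ?_
  refine Eq.trans ?_ (e2.trans ?_)
  · rfl
  · simp only [id]
    ring

set_option maxHeartbeats 800000 in
/-- Strong maximum principle in the form needed: a solution of `Δa ≤ c a` on `{a ≥ 0}` whose
gradient vanishes on its zero set and which is positive somewhere has no zeros.  At a zero
closest to a point of positivity, comparison with the barrier `exp (-k r²) - exp (-k R²)` forces
a nonzero normal derivative. -/
lemma hopf {a : ℝ → ℝ → ℝ} {c : ℝ} (hc : 0 < c) (ha : Smooth2 a)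
    (hL : ∀ x y, 0 ≤ a x y → lap a x y ≤ c * a x y)
    (hgrad : ∀ x y, a x y = 0 → dx a x y = 0 ∧ dy a x y = 0)
    {x₀ y₀ : ℝ} (hpos : 0 < a x₀ y₀) (x y : ℝ) : a x y ≠ 0 := by
  intro hzero
  have ca : Continuous fun p : ℝ × ℝ => a p.1 p.2 := ha.cont
  set D : ℝ × ℝ → ℝ := fun p => (p.1 - x₀) ^ 2 + (p.2 - y₀) ^ 2 with hD
  have cD : Continuous D := by fun_prop
  have hDc : D (x₀, y₀) = 0 := by simp [hD]
  have hcomp : ∀ ρ : ℝ, IsCompact {p : ℝ × ℝ | D p ≤ ρ ^ 2} := by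
    intro ρ
    refine Metric.isCompact_of_isClosed_isBounded (isClosed_le cD continuous_const) ?_
    refine (Metric.isBounded_closedBall (x := (x₀, y₀)) (r := |ρ|)).subset fun p hp => ?_
    have hp' : (p.1 - x₀) ^ 2 + (p.2 - y₀) ^ 2 ≤ ρ ^ 2 := hp
    rw [Metric.mem_closedBall, Prod.dist_eq, Real.dist_eq, Real.dist_eq, max_le_iff]
    exact ⟨sq_le_sq.1 (by nlinarith [sq_nonneg (p.2 - y₀)]),
      sq_le_sq.1 (by nlinarith [sq_nonneg (p.1 - x₀)])⟩
  -- a zero `p` of `a` closest to `(x₀, y₀)`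
  obtain ⟨p, hp0, hpmin⟩ : ∃ p : ℝ × ℝ, a p.1 p.2 = 0 ∧
      ∀ q : ℝ × ℝ, a q.1 q.2 = 0 → D p ≤ D q := by
    have hDn : 0 ≤ D (x, y) := by positivity
    have hK : IsCompact ({q : ℝ × ℝ | D q ≤ √(D (x, y)) ^ 2} ∩ {q | a q.1 q.2 = 0}) :=
      (hcomp _).inter_right (isClosed_eq ca continuous_const)
    obtain ⟨p, hp, hmin⟩ := hK.exists_isMinOn
      ⟨(x, y), by simp [Real.sq_sqrt hDn], hzero⟩ cD.continuousOn
    refine ⟨p, hp.2, fun q hq => ?_⟩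
    by_cases h : D q ≤ √(D (x, y)) ^ 2
    · exact hmin ⟨h, hq⟩
    · exact le_trans hp.1 (not_le.1 h).le
  set R := √(D p) with hR
  have hDp : R ^ 2 = D p := Real.sq_sqrt (by positivity)
  have hR0 : 0 < R := by
    refine Real.sqrt_pos.2 (lt_of_le_of_ne (by positivity) fun h => ?_)
    have h' : (p.1 - x₀) ^ 2 + (p.2 - y₀) ^ 2 = 0 := h.symm
    have e1 : p.1 = x₀ := by nlinarith [sq_nonneg (p.1 - x₀), sq_nonneg (p.2 - y₀)]
    have e2 : p.2 = y₀ := by nlinarith [sq_nonneg (p.1 - x₀), sq_nonneg (p.2 - y₀)]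
    rw [e1, e2] at hp0
    linarith
  have hnonneg : ∀ q : ℝ × ℝ, D q ≤ R ^ 2 → 0 ≤ a q.1 q.2 := by
    intro q hq
    by_contra! hneg
    set γ : ℝ → ℝ × ℝ := fun t => (x₀ + t * (q.1 - x₀), y₀ + t * (q.2 - y₀)) with hγ
    have cγ : Continuous fun t => a (γ t).1 (γ t).2 := ca.comp (by fun_prop)
    obtain ⟨t, ht, hat⟩ := intermediate_value_Icc' (zero_le_one' ℝ) cγ.continuousOn
      (show (0 : ℝ) ∈ Set.Icc _ _ from ⟨by simpa [hγ] using hneg.le, by simpa [hγ] using hpos.le⟩)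
    have ht1 : t < 1 := by
      refine lt_of_le_of_ne ht.2 fun h => ?_
      rw [h] at hat
      simp [hγ] at hat
      linarith
    have h1 := hpmin (γ t) hat
    have h2 : D (γ t) = t ^ 2 * D q := by simp only [hD, hγ]; ring
    rw [h2, ← hDp] at h1
    have h3 : t ^ 2 < 1 := by nlinarith [ht.1]
    nlinarith [pow_pos hR0 2, sq_nonneg t]
  have hposi : ∀ q : ℝ × ℝ, D q < R ^ 2 → 0 < a q.1 q.2 := by
    intro q hq
    refine lt_of_le_of_ne (hnonneg q hq.le) fun h => ?_
    have := hpmin q h.symm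
    linarith
  obtain ⟨m, hm0, hm⟩ : ∃ m, 0 < m ∧ ∀ q : ℝ × ℝ, D q ≤ (R / 2) ^ 2 → m ≤ a q.1 q.2 := by
    obtain ⟨q, hq, hmin⟩ := (hcomp (R / 2)).exists_isMinOn
      ⟨(x₀, y₀), by show D (x₀, y₀) ≤ _; rw [hDc]; positivity⟩ ca.continuousOn
    refine ⟨a q.1 q.2, hposi q ?_, fun q' hq' => hmin hq'⟩
    have : D q ≤ (R / 2) ^ 2 := hq
    nlinarith [pow_pos hR0 2]
  -- with this `k`, the barrier `h` satisfies `Δh > c h` wherever `D ≥ R² / 4`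
  set k := 5 / R ^ 2 + c with hk
  have hk0 : 0 < k := by positivity
  have hkR : c < k ^ 2 * R ^ 2 - 4 * k := by
    have e : k * R ^ 2 = 5 + c * R ^ 2 := by rw [hk]; field_simp
    have e2 : k ^ 2 * R ^ 2 - 4 * k = k * (1 + c * R ^ 2) := by
      calc k ^ 2 * R ^ 2 - 4 * k = k * (k * R ^ 2) - 4 * k := by ring
        _ = _ := by rw [e]; ring
    have h5 : 0 < 5 / R ^ 2 := by positivity
    have h6 : 0 < c * R ^ 2 := by positivity
    have h7 : 0 < k * (c * R ^ 2) := by positivity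
    rw [e2]
    linarith
  set C := Real.exp (-k * R ^ 2) with hC
  set w : ℝ × ℝ → ℝ := fun q => a q.1 q.2 - m * (Real.exp (-k * D q) - C) with hw
  have cw : Continuous w := by fun_prop
  have hwnonneg : ∀ q : ℝ × ℝ, D q ≤ R ^ 2 → 0 ≤ w q := by
    obtain ⟨q, hq, hmin⟩ := (hcomp R).exists_isMinOn
      ⟨(x₀, y₀), by show D (x₀, y₀) ≤ _; rw [hDc]; positivity⟩ cw.continuousOn
    suffices h : 0 ≤ w q from fun q' hq' => h.trans (hmin hq')
    by_contra! hneg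
    have hq : D q ≤ R ^ 2 := hq
    have hqR : D q < R ^ 2 := by
      refine lt_of_le_of_ne hq fun h => ?_
      have h1 : w q = a q.1 q.2 := by simp only [hw, h, hC]; ring
      linarith [hnonneg q hq]
    have hDq : 0 ≤ D q := by positivity
    have hC0 : 0 < C := Real.exp_pos _
    have hqr : (R / 2) ^ 2 < D q := by
      by_contra! h
      have h1 := hm q h
      have h2 : Real.exp (-k * D q) ≤ 1 := Real.exp_le_one_iff.2 (by nlinarith)
      simp only [hw] at hneg
      nlinarith
    have hloc : IsLocalMin w q := by
      refine hmin.isLocalMin (Filter.mem_of_superset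
        ((isOpen_lt cD continuous_const).mem_nhds hqR) fun z hz => show D z ≤ R ^ 2 from le_of_lt hz)
    have hlx : IsLocalMin (fun s => w (s, q.2)) q.1 :=
      hloc.comp_continuous (g := fun s => (s, q.2)) (by fun_prop)
    have hly : IsLocalMin (fun s => w (q.1, s)) q.2 :=
      hloc.comp_continuous (g := fun s => (q.1, s)) (by fun_prop)
    have kx := barrier_second_order (fun s => ha.hasDerivAt_dx s q.2)
      (ha.smooth_dx.hasDerivAt_dx q.1 q.2) (x₀ := x₀) (m := m) (k := k)
      (d := (q.2 - y₀) ^ 2) (C := C) hlx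
    have ky := barrier_second_order (fun s => ha.hasDerivAt_dy q.1 s)
      (ha.smooth_dy.hasDerivAt_dy q.1 q.2) (x₀ := y₀) (m := m) (k := k)
      (d := (q.1 - x₀) ^ 2) (C := C) (by simpa only [hw, hD, add_comm] using hly)
    have eE : (q.2 - y₀) ^ 2 + (q.1 - x₀) ^ 2 = D q := by simp only [hD]; ring
    have eE' : (q.1 - x₀) ^ 2 + (q.2 - y₀) ^ 2 = D q := rfl
    rw [eE'] at kx
    rw [eE] at ky
    have el : lap a q.1 q.2 = dx (dx a) q.1 q.2 + dy (dy a) q.1 q.2 := rfl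
    have hlap := hL q.1 q.2 (hnonneg q hq)
    set E := Real.exp (-k * D q) with hE
    have hE0 : 0 < E := Real.exp_pos _
    have h1 : m * ((4 * k ^ 2 * D q - 4 * k) * E) ≤ c * a q.1 q.2 := by
      have : m * ((4 * k ^ 2 * D q - 4 * k) * E) =
          m * ((4 * k ^ 2 * (q.1 - x₀) ^ 2 - 2 * k) * E) +
          m * ((4 * k ^ 2 * (q.2 - y₀) ^ 2 - 2 * k) * E) := by rw [← eE]; ring
      linarith
    have h2 : a q.1 q.2 < m * (E - C) := by
      simp only [hw] at hneg
      linarith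
    have h3 : c < 4 * k ^ 2 * D q - 4 * k := by nlinarith [pow_pos hk0 2]
    have h4 : m * (c * E) < m * ((4 * k ^ 2 * D q - 4 * k) * E) := by gcongr
    have h5 : c * a q.1 q.2 < c * (m * (E - C)) := by gcongr
    have h6 : 0 < c * (m * C) := by positivity
    have h7 : c * (m * (E - C)) = m * (c * E) - c * (m * C) := by ring
    linarith
  -- along the inner normal at `p`, `w` is nonnegative but has negative derivative at `p`
  set v := x₀ - p.1 with hv
  set u := y₀ - p.2 with hu
  have hvu : v ^ 2 + u ^ 2 = R ^ 2 := by rw [hDp]; simp only [hD, hv, hu]; ring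
  have hDt : ∀ t : ℝ, D (p.1 + t * v, p.2 + t * u) = (1 - t) ^ 2 * R ^ 2 := by
    intro t
    rw [← hvu]
    simp only [hD, hv, hu]
    ring
  have hder : HasDerivAt (fun t : ℝ => w (p.1 + t * v, p.2 + t * u)) (-(2 * m * k * R ^ 2 * C)) 0 := by
    have h1 := ha.hasDerivAt_line p.1 p.2 v u 0
    obtain ⟨g1, g2⟩ := hgrad _ _ hp0
    simp only [zero_mul, add_zero, g1, g2, mul_zero] at h1
    have h2 : HasDerivAt (fun t : ℝ => m * (Real.exp (-k * ((1 - t) ^ 2 * R ^ 2)) - C))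
        (m * (Real.exp (-k * ((1 - 0) ^ 2 * R ^ 2)) * (-k * (2 * (1 - 0) * -1 * R ^ 2)))) 0 := by
      have h3 := ((((((hasDerivAt_id (0 : ℝ)).const_sub 1).pow 2).mul_const (R ^ 2)).const_mul
        (-k)).exp.sub_const C).const_mul m
      simpa using h3
    have h4 := h1.sub h2
    have h5 : (fun t : ℝ => w (p.1 + t * v, p.2 + t * u)) = (fun t => a (p.1 + t * v) (p.2 + t * u))
        - fun t : ℝ => m * (Real.exp (-k * ((1 - t) ^ 2 * R ^ 2)) - C) := by
      funext t
      simp only [hw, hDt, Pi.sub_apply]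
    rw [h5]
    refine h4.congr_deriv ?_
    simp only [hC, sub_zero, one_pow, one_mul]
    ring
  have hw0 : w (p.1 + 0 * v, p.2 + 0 * u) = 0 := by
    show a (p.1 + 0 * v) (p.2 + 0 * u)
      - m * (Real.exp (-k * D (p.1 + 0 * v, p.2 + 0 * u)) - C) = 0
    rw [hDt]
    simp [hp0, hC]
  have hC0 : 0 < C := Real.exp_pos _
  have hlim := hder.tendsto_slope.mono_left
    (nhdsWithin_mono (0 : ℝ) (s := Set.Ioi 0) fun t ht => (ne_of_gt ht : t ≠ 0))
  have hge : 0 ≤ -(2 * m * k * R ^ 2 * C) := by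
    refine ge_of_tendsto hlim ?_
    have : Set.Ioo (0 : ℝ) 1 ∈ nhdsWithin (0 : ℝ) (Set.Ioi 0) := Ioo_mem_nhdsGT one_pos
    filter_upwards [this] with t ht
    rw [slope_def_field, hw0, sub_zero, sub_zero]
    refine div_nonneg (hwnonneg _ ?_) ht.1.le
    rw [hDt]
    exact mul_le_of_le_one_left (by positivity)
      (pow_le_one₀ (by linarith [ht.2]) (by linarith [ht.1]))
  have : 0 < 2 * m * k * R ^ 2 * C := by positivity
  linarith

lemma eq_zero_of_exists_zero {W a : ℝ → ℝ → ℝ} {c : ℝ} (hc : 0 < c) (hWc : ∀ x y, W x y ≤ c)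
    (ha : Smooth2 a) (hL : ∀ x y, lap a x y = W x y * a x y)
    (hgrad : ∀ x y, a x y = 0 → dx a x y = 0 ∧ dy a x y = 0)
    {x₁ y₁ : ℝ} (h1 : a x₁ y₁ = 0) (x y : ℝ) : a x y = 0 := by
  by_contra hne
  rcases lt_or_gt_of_ne hne with hneg | hpos
  · have ex : ∀ x y, dx (fun x y => -a x y) x y = -dx a x y := fun x y =>
      (ha.hasDerivAt_dx x y).neg.deriv
    have ey : ∀ x y, dy (fun x y => -a x y) x y = -dy a x y := fun x y =>
      (ha.hasDerivAt_dy x y).neg.deriv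
    have el : ∀ x y, lap (fun x y => -a x y) x y = -lap a x y := by
      intro x y
      have e1 : dx (dx fun x y => -a x y) x y = -dx (dx a) x y := by
        rw [show dx (fun x y => -a x y) = fun x y => -dx a x y from
          funext fun x => funext fun y => ex x y]
        exact (ha.smooth_dx.hasDerivAt_dx x y).neg.deriv
      have e2 : dy (dy fun x y => -a x y) x y = -dy (dy a) x y := by
        rw [show dy (fun x y => -a x y) = fun x y => -dy a x y from
          funext fun x => funext fun y => ey x y]
        exact (ha.smooth_dy.hasDerivAt_dy x y).neg.deriv
      show dx (dx fun x y => -a x y) x y + dy (dy fun x y => -a x y) x y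
        = -(dx (dx a) x y + dy (dy a) x y)
      rw [e1, e2]
      ring
    refine hopf (a := fun x y => -a x y) hc (ContDiff.neg ha) (fun x y h => ?_) (fun x y h => ?_)
      (x₀ := x) (y₀ := y) (by simpa using hneg) x₁ y₁ (by simpa using h1)
    · rw [el, hL]
      nlinarith [hWc x y]
    · rw [ex, ey]
      simpa using hgrad x y (by simpa using h)
  · refine hopf hc ha (fun x y h => ?_) hgrad hpos x₁ y₁ h1
    rw [hL]
    nlinarith [hWc x y]

/-! ### Real and imaginary parts -/

lemma Smooth2C.hasDerivAt_fst {Ψ : ℝ → ℝ → ℂ} (h : Smooth2C Ψ) (x y : ℝ) :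
    HasDerivAt (fun s => Ψ s y) (deriv (fun s => Ψ s y) x) x := by
  have h1 : ContDiff ℝ (⊤ : ℕ∞) fun s => Ψ s y :=
    ContDiff.comp (g := fun p : ℝ × ℝ => Ψ p.1 p.2) h (contDiff_id.prodMk contDiff_const)
  exact (h1.differentiable (by simp) x).hasDerivAt

lemma Smooth2C.hasDerivAt_snd {Ψ : ℝ → ℝ → ℂ} (h : Smooth2C Ψ) (x y : ℝ) :
    HasDerivAt (fun s => Ψ x s) (deriv (fun s => Ψ x s) y) y := by
  have h1 : ContDiff ℝ (⊤ : ℕ∞) fun s => Ψ x s :=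
    ContDiff.comp (g := fun p : ℝ × ℝ => Ψ p.1 p.2) h (contDiff_const.prodMk contDiff_id)
  exact (h1.differentiable (by simp) y).hasDerivAt

lemma norm_sq_eq_of_rot {z w : ℂ} (hz : ‖z‖ = 1) : ‖w‖ ^ 2 = (z * w).re ^ 2 + (z * w).im ^ 2 := by
  have h : ‖w‖ = ‖z * w‖ := by rw [norm_mul, hz, one_mul]
  rw [h, Complex.sq_norm, Complex.normSq_apply]
  ring

lemma norm_sq_deriv_rot {z : ℂ} (hz : ‖z‖ = 1) {f : ℝ → ℂ} {d : ℂ} {x : ℝ}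
    (h : HasDerivAt f d x) :
    ‖d‖ ^ 2 = deriv (fun s => (z * f s).re) x ^ 2 + deriv (fun s => (z * f s).im) x ^ 2 := by
  have h1 := h.const_mul z
  have hre : HasDerivAt (fun s => (z * f s).re) (z * d).re x :=
    (Complex.reCLM.hasFDerivAt.comp_hasDerivAt x h1)
  have him : HasDerivAt (fun s => (z * f s).im) (z * d).im x :=
    (Complex.imCLM.hasFDerivAt.comp_hasDerivAt x h1)
  rw [hre.deriv, him.deriv, ← norm_sq_eq_of_rot hz]

lemma adm_re {Ψ : ℝ → ℝ → ℂ} (hs : Smooth2C Ψ) (hper : DblPeriodicC Ψ) (hsym : SymFunC Ψ)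
    (z : ℂ) : Adm fun x y => (z * Ψ x y).re where
  smooth := Complex.reCLM.contDiff.comp (contDiff_const.mul hs)
  per x y := by simp only [(hper x y).1, (hper x y).2, and_self]
  sym x y := by simp only [(hsym x y).1, (hsym x y).2, and_self]

lemma adm_im {Ψ : ℝ → ℝ → ℂ} (hs : Smooth2C Ψ) (hper : DblPeriodicC Ψ) (hsym : SymFunC Ψ)
    (z : ℂ) : Adm fun x y => (z * Ψ x y).im where
  smooth := Complex.imCLM.contDiff.comp (contDiff_const.mul hs)
  per x y := by simp only [(hper x y).1, (hper x y).2, and_self]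
  sym x y := by simp only [(hsym x y).1, (hsym x y).2, and_self]

/-- The energy of a complex function in terms of its (rotated) real and imaginary parts. -/
lemma BcC_rot (c : ℝ) {Ψ : ℝ → ℝ → ℂ} (hs : Smooth2C Ψ) {z : ℂ} (hz : ‖z‖ = 1)
    {a b : ℝ → ℝ → ℝ} (ha : a = fun x y => (z * Ψ x y).re) (hb : b = fun x y => (z * Ψ x y).im) :
    2 * BcC c Ψ = integ2 fun x y => dx a x y ^ 2 + dx b x y ^ 2 + (dy a x y ^ 2 + dy b x y ^ 2)
      + c * (a x y ^ 2 + b x y ^ 2) := by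
  unfold BcC
  rw [← mul_assoc]
  norm_num
  congr 1
  funext x y
  rw [norm_sq_deriv_rot hz (hs.hasDerivAt_fst x y), norm_sq_deriv_rot hz (hs.hasDerivAt_snd x y),
    norm_sq_eq_of_rot hz, ha, hb]
  rfl

lemma BcC_ofReal (c : ℝ) {u : ℝ → ℝ → ℝ} (hu : Smooth2 u) :
    2 * BcC c (fun x y => (u x y : ℂ))
      = integ2 fun x y => dx u x y ^ 2 + dy u x y ^ 2 + c * u x y ^ 2 := by
  unfold BcC
  rw [← mul_assoc]
  norm_num
  congr 1
  funext x y
  rw [(hu.hasDerivAt_dx x y).ofReal_comp.deriv, (hu.hasDerivAt_dy x y).ofReal_comp.deriv]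
  simp

/-- The minimality of `Ψ` makes the Schrödinger form with potential `c - C‖Ψ‖` nonnegative. The
competitor is rescaled to satisfy the constraint, and Hölder's inequality takes the pointwise
form `V w² ≤ (V³ + 2 |w|³) / 3`. -/
lemma Qf_nonneg_of_minimizer {c lam E C : ℝ} (hlam : 0 < lam) (hC : 0 ≤ C)
    (hCE : C * lam = 2 * E) {V : ℝ → ℝ → ℝ} (hV : Cont2 V) (hV0 : ∀ x y, 0 ≤ V x y)
    (hV3 : integ2 (fun x y => V x y ^ 3) = lam)
    (hmin : ∀ u : ℝ → ℝ → ℂ, Smooth2C u → DblPeriodicC u → SymFunC u →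
      integ2 (fun x y => ‖u x y‖ ^ 3) = lam → E ≤ BcC c u)
    {u : ℝ → ℝ → ℝ} (hu : Adm u) : 0 ≤ Qf (fun x y => c - C * V x y) u := by
  have cu := hu.smooth.cont
  have cux := hu.smooth.smooth_dx.cont
  have cuy := hu.smooth.smooth_dy.cont
  set μ := integ2 (fun x y => |u x y| ^ 3) with hμ
  have hμ0 : 0 ≤ μ := integ2_nonneg fun x y => by positivity
  rcases hμ0.eq_or_lt with h | hμpos
  · have h0 : ∀ x y, u x y = 0 := fun x y => by
      have := eq_zero_of_integ2_eq_zero (cu.abs.pow 3)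
        (fun x y => by simp only [(hu.per x y).1, (hu.per x y).2, and_self])
        (fun x y => by positivity) h.symm x y
      simpa using this
    have hu0 : u = fun _ _ => 0 := funext fun x => funext fun y => h0 x y
    rw [hu0]
    simp [Qf, integ2, dx, dy]
  · obtain ⟨t, ht0, ht⟩ : ∃ t : ℝ, 0 < t ∧ t ^ 3 = lam / μ := by
      refine ⟨(lam / μ) ^ ((3 : ℕ)⁻¹ : ℝ), by positivity, ?_⟩
      exact Real.rpow_inv_natCast_pow (by positivity) (by norm_num)
    have htu := (Adm.const t).mul hu
    have hcon : integ2 (fun x y => |t * u x y| ^ 3) = lam := by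
      have : (fun x y => |t * u x y| ^ 3) = fun x y => t ^ 3 * |u x y| ^ 3 := by
        funext x y
        rw [abs_mul, abs_of_pos ht0, mul_pow]
      rw [this, integ2_const_mul, ht, ← hμ]
      field_simp
    have hE := hmin (fun x y => ((t * u x y : ℝ) : ℂ))
      (Complex.ofRealCLM.contDiff.comp htu.smooth)
      (fun x y => by simp only [(hu.per x y).1, (hu.per x y).2, and_self])
      (fun x y => by simp only [(hu.sym x y).1, (hu.sym x y).2, and_self])
      (by simpa only [Complex.norm_real, Real.norm_eq_abs] using hcon)
    have hB := BcC_ofReal c htu.smooth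
    have hx : ∀ x y, dx (fun x y => t * u x y) x y = t * dx u x y := fun x y =>
      ((hu.smooth.hasDerivAt_dx x y).const_mul t).deriv
    have hy : ∀ x y, dy (fun x y => t * u x y) x y = t * dy u x y := fun x y =>
      ((hu.smooth.hasDerivAt_dy x y).const_mul t).deriv
    have hB' : 2 * BcC c (fun x y => ((t * u x y : ℝ) : ℂ))
        = t ^ 2 * integ2 (fun x y => dx u x y ^ 2 + dy u x y ^ 2 + c * u x y ^ 2) := by
      rw [hB, ← integ2_const_mul]
      congr 1
      funext x y
      rw [hx, hy]
      ring
    have cw := htu.smooth.cont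
    have young : t ^ 2 * integ2 (fun x y => V x y * u x y ^ 2) ≤ lam := by
      calc t ^ 2 * integ2 (fun x y => V x y * u x y ^ 2)
          = integ2 (fun x y => V x y * (t * u x y) ^ 2) := by
            rw [← integ2_const_mul]; congr 1; funext x y; ring
        _ ≤ integ2 (fun x y => 1 / 3 * V x y ^ 3 + 2 / 3 * |t * u x y| ^ 3) := by
            refine integ2_mono (hV.mul (cw.pow 2)) (((Cont2.const _).mul (hV.pow 3)).add
              ((Cont2.const _).mul (cw.abs.pow 3))) fun x y => ?_
            have h1 := hV0 x y
            have h2 := abs_nonneg (t * u x y)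
            rw [← sq_abs (t * u x y)]
            nlinarith [mul_nonneg (sq_nonneg (V x y - |t * u x y|))
              (add_nonneg h1 (mul_nonneg zero_le_two h2))]
        _ = lam := by
            rw [integ2_add ((Cont2.const _).mul (hV.pow 3)) ((Cont2.const _).mul (cw.abs.pow 3)),
              integ2_const_mul, integ2_const_mul, hV3, hcon]
            ring
    have hsplit : Qf (fun x y => c - C * V x y) u
        = integ2 (fun x y => dx u x y ^ 2 + dy u x y ^ 2 + c * u x y ^ 2)
          - C * integ2 (fun x y => V x y * u x y ^ 2) := by
      rw [← integ2_const_mul, ← integ2_sub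
        (((cux.pow 2).add (cuy.pow 2)).add ((Cont2.const _).mul (cu.pow 2)))
        ((Cont2.const _).mul (hV.mul (cu.pow 2)))]
      unfold Qf
      congr 1
      funext x y
      ring
    have h1 := mul_le_mul_of_nonneg_left young hC
    have h2 : 0 ≤ t ^ 2 * Qf (fun x y => c - C * V x y) u := by
      rw [hsplit, mul_sub, ← hB']
      nlinarith
    exact nonneg_of_mul_nonneg_right h2 (by positivity)

/-- A constrained minimizer Ψ of B_c with ∫|Ψ|³ = λ is, up to a constant phase, a positive
real-valued smooth doubly 2π-periodic symmetric solution of −Δφ + cφ = C₁φ². -/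
theorem minimizer_is_positive_phase (c : ℝ) (hc : 0 < c) (lam : ℝ) (hlam : 0 < lam)
    (Ψ : ℝ → ℝ → ℂ) (hs : Smooth2C Ψ) (hper : DblPeriodicC Ψ) (hsym : SymFunC Ψ)
    (hcon : integ2 (fun x y => ‖Ψ x y‖^3) = lam)
    (hmin : ∀ u : ℝ → ℝ → ℂ,
      Smooth2C u → DblPeriodicC u → SymFunC u →
      integ2 (fun x y => ‖u x y‖^3) = lam → BcC c Ψ ≤ BcC c u) :
    ∃ (C₁ : ℝ) (θ : ℝ) (φ : ℝ → ℝ → ℝ),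
      0 < C₁ ∧
      Smooth2 φ ∧ DblPeriodic φ ∧ SymFun φ ∧ (∀ x y : ℝ, 0 < φ x y) ∧
      (∀ x y : ℝ, Ψ x y = Complex.exp (θ * Complex.I) * (φ x y : ℂ)) ∧
      (∀ x y : ℝ, -(lap φ x y) + c * φ x y = C₁ * (φ x y)^2) := by
  set θ := (Ψ 0 0).arg with hθ
  set z : ℂ := Complex.exp (-(θ * Complex.I)) with hzdef
  have hz : ‖z‖ = 1 := by
    have : z = Complex.exp ((-θ : ℝ) * Complex.I) := by rw [hzdef]; push_cast; ring_nf
    rw [this, Complex.norm_exp_ofReal_mul_I]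
  have hzinv : Complex.exp (θ * Complex.I) * z = 1 := by
    rw [hzdef, ← Complex.exp_add, add_neg_cancel, Complex.exp_zero]
  set a : ℝ → ℝ → ℝ := fun x y => (z * Ψ x y).re with hadef
  set b : ℝ → ℝ → ℝ := fun x y => (z * Ψ x y).im with hbdef
  have ha : Adm a := adm_re hs hper hsym z
  have hb : Adm b := adm_im hs hper hsym z
  set V : ℝ → ℝ → ℝ := fun x y => ‖Ψ x y‖ with hVdef
  have hV : Cont2 V := (ContDiff.continuous hs).norm
  have hV0 : ∀ x y, 0 ≤ V x y := fun x y => norm_nonneg _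
  have hVab : ∀ x y, V x y ^ 2 = a x y ^ 2 + b x y ^ 2 := fun x y => norm_sq_eq_of_rot hz
  have hVp : DblPeriodic V := fun x y => by
    simp only [hVdef, (hper x y).1, (hper x y).2, and_self]
  have hVne : ¬ ∀ x y, V x y = 0 := by
    intro h
    have h0 : integ2 (fun x y => V x y ^ 3) = 0 := by simp [h, integ2]
    have h1 : integ2 (fun x y => V x y ^ 3) = lam := hcon
    linarith
  have ca := ha.smooth.cont
  have cb := hb.smooth.cont
  have cax := ha.smooth.smooth_dx.cont
  have cay := ha.smooth.smooth_dy.cont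
  have cbx := hb.smooth.smooth_dx.cont
  have cby := hb.smooth.smooth_dy.cont
  have hE := BcC_rot c hs hz hadef hbdef
  have cE : Cont2 fun x y => dx a x y ^ 2 + dx b x y ^ 2 + (dy a x y ^ 2 + dy b x y ^ 2)
      + c * (a x y ^ 2 + b x y ^ 2) :=
    (((cax.pow 2).add (cbx.pow 2)).add ((cay.pow 2).add (cby.pow 2))).add
      ((Cont2.const c).mul ((ca.pow 2).add (cb.pow 2)))
  have hEpos : 0 < BcC c Ψ := by
    have hc2 : 0 ≤ c * integ2 (fun x y => V x y ^ 2) :=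
      mul_nonneg hc.le (integ2_nonneg fun x y => by positivity)
    have hle : c * integ2 (fun x y => V x y ^ 2) ≤ 2 * BcC c Ψ := by
      rw [hE, ← integ2_const_mul]
      refine integ2_mono ((Cont2.const c).mul (hV.pow 2)) cE fun x y => ?_
      rw [hVab]
      have : 0 ≤ dx a x y ^ 2 + dx b x y ^ 2 + (dy a x y ^ 2 + dy b x y ^ 2) := by positivity
      linarith
    by_contra! hneg
    refine hVne fun x y => ?_
    have h0 : integ2 (fun x y => V x y ^ 2) = 0 := by
      have : c * integ2 (fun x y => V x y ^ 2) = 0 := by linarith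
      exact (mul_eq_zero.1 this).resolve_left hc.ne'
    have := eq_zero_of_integ2_eq_zero (hV.pow 2)
      (fun x y => by simp only [(hVp x y).1, (hVp x y).2, and_self])
      (fun x y => by positivity) h0 x y
    simpa using this
  -- the Lagrange multiplier
  set C := 2 * BcC c Ψ / lam with hCdef
  have hC : 0 < C := by positivity
  have hCE : C * lam = 2 * BcC c Ψ := by rw [hCdef]; field_simp
  set W : ℝ → ℝ → ℝ := fun x y => c - C * V x y with hWdef
  have hW : Cont2 W := (Cont2.const c).sub ((Cont2.const C).mul hV)
  have hWp : DblPeriodic W := fun x y => by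
    simp only [hWdef, (hVp x y).1, (hVp x y).2, and_self]
  have hWc : ∀ x y, W x y ≤ c := fun x y => by
    have := mul_nonneg hC.le (hV0 x y)
    simp only [hWdef]
    linarith
  have hQ : ∀ u, Adm u → 0 ≤ Qf W u := fun u hu =>
    Qf_nonneg_of_minimizer hlam hC.le hCE hV hV0 hcon hmin hu
  have hsum : Qf W a + Qf W b = 0 := by
    have h1 : C * integ2 (fun x y => V x y ^ 3) = 2 * BcC c Ψ := by rw [← hCE, ← hcon]
    unfold Qf
    rw [← integ2_add (((cax.pow 2).add (cay.pow 2)).add (hW.mul (ca.pow 2)))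
      (((cbx.pow 2).add (cby.pow 2)).add (hW.mul (cb.pow 2))), ← sub_eq_zero.2 h1.symm, hE,
      ← integ2_const_mul, ← integ2_sub cE ((Cont2.const C).mul (hV.pow 3))]
    congr 1
    funext x y
    have e : V x y ^ 3 = V x y * (a x y ^ 2 + b x y ^ 2) := by rw [← hVab]; ring
    rw [e]
    simp only [hWdef]
    ring
  have ha0 : Qf W a = 0 := by linarith [hQ a ha, hQ b hb]
  have hb0 : Qf W b = 0 := by linarith [hQ a ha, hQ b hb]
  -- `√(‖Ψ‖² + δ²)` is smooth and within `δ` of `‖Ψ‖`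
  have happ : ∀ ε > 0, ∃ W', Adm W' ∧ ∀ x y, |W' x y - W x y| ≤ ε := by
    intro ε hε
    have hδ : 0 < ε / C := by positivity
    have hpos : ∀ x y, 0 < a x y * a x y + b x y * b x y + (ε / C) ^ 2 := fun x y => by
      nlinarith [mul_self_nonneg (a x y), mul_self_nonneg (b x y), pow_pos hδ 2]
    refine ⟨fun x y => c + -C * √(a x y * a x y + b x y * b x y + (ε / C) ^ 2),
      (Adm.const c).add ((Adm.const (-C)).mul
        ((((ha.mul ha).add (hb.mul hb)).add (Adm.const ((ε / C) ^ 2))).sqrt hpos)),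
      fun x y => ?_⟩
    have e : a x y * a x y + b x y * b x y = V x y ^ 2 := by rw [hVab]; ring
    have hv := hV0 x y
    beta_reduce
    rw [e]
    have h1 : V x y ≤ √(V x y ^ 2 + (ε / C) ^ 2) := Real.le_sqrt_of_sq_le (by nlinarith)
    have h2 : √(V x y ^ 2 + (ε / C) ^ 2) ≤ V x y + ε / C :=
      Real.sqrt_le_iff.2 ⟨by positivity, by nlinarith [mul_nonneg hv hδ.le]⟩
    have e2 : c + -C * √(V x y ^ 2 + (ε / C) ^ 2) - W x y
        = -(C * (√(V x y ^ 2 + (ε / C) ^ 2) - V x y)) := by simp only [hWdef]; ring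
    rw [e2, abs_neg, abs_of_nonneg (mul_nonneg hC.le (by linarith))]
    calc C * (√(V x y ^ 2 + (ε / C) ^ 2) - V x y) ≤ C * (ε / C) := by gcongr; linarith
      _ = ε := by field_simp
  have hLa := euler_lagrange hW hWp happ hQ ha ha0
  have hLb := euler_lagrange hW hWp happ hQ hb hb0
  have hrot0 : z * Ψ 0 0 = (‖Ψ 0 0‖ : ℂ) := by
    conv_lhs => rw [← Complex.norm_mul_exp_arg_mul_I (Ψ 0 0)]
    rw [← hθ, mul_left_comm, mul_comm z, hzinv, mul_one]
  -- the phase was chosen so that `b` vanishes at the origin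
  have hbz : ∀ x y, b x y = 0 := eq_zero_of_exists_zero hc hWc hb.smooth hLb
    (fun x y h => gradient_eq_zero hW hQ hb hb0 h) (x₁ := 0) (y₁ := 0) (by
      simp only [hbdef, hrot0, Complex.ofReal_im])
  have hane : ∀ x y, a x y ≠ 0 := by
    intro x₁ y₁ h
    refine hVne fun x y => ?_
    have h1 := eq_zero_of_exists_zero hc hWc ha.smooth hLa
      (fun x y h => gradient_eq_zero hW hQ ha ha0 h) h x y
    have h2 := hVab x y
    rw [h1, hbz] at h2
    simpa using h2
  have hapos : ∀ x y, 0 < a x y := by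
    intro x y
    by_contra! hneg
    have h00 : 0 ≤ a 0 0 := by simp only [hadef, hrot0, Complex.ofReal_re]; positivity
    have caC : Continuous fun p : ℝ × ℝ => a p.1 p.2 := ca
    obtain ⟨p, hp⟩ := mem_range_of_exists_le_of_exists_ge caC ⟨(x, y), hneg⟩ ⟨(0, 0), h00⟩
    exact hane _ _ hp
  refine ⟨C, θ, a, hC, ha.smooth, ha.per, ha.sym, hapos, fun x y => ?_, fun x y => ?_⟩
  · have h1 : z * Ψ x y = (a x y : ℂ) := Complex.ext rfl (by simpa [hbdef] using hbz x y)
    rw [← h1, ← mul_assoc, hzinv, one_mul]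
  · have hVa : V x y = a x y := by
      have h1 := hVab x y
      rw [hbz] at h1
      refine (sq_eq_sq₀ (hV0 x y) (hapos x y).le).1 ?_
      linarith
    rw [hLa]
    simp only [hWdef]
    rw [hVa]
    ring
end
end
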